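/- For every positive integer n with n ≡ 2 or 4 (mod 5), one has N̄(0,5,n) < N̄(1,5,n). -/

import Mathlib

/-- An overpartition of `n`: a partition of `n` together with a chosen subset of its
distinct part sizes (the overlined parts). -/
def Overpartition (n : ℕ) : Type :=
  {P : n.Partition × Finset ℕ // P.2 ⊆ P.1.parts.toFinset}

/-- The Dyson rank of an overpartition: largest part minus number of parts. -/
def Overpartition.rank {n : ℕ} (P : Overpartition n) : ℤ :=
  (P.1.1.parts.sup : ℤ) - (P.1.1.parts.card : ℤ)

/-- `nbarRank m n` is the number of overpartitions of `n` with rank `m`. -/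
noncomputable def nbarRank (m : ℤ) (n : ℕ) : ℕ :=
  Nat.card {P : Overpartition n // P.rank = m}

/-- `nbar a c n` is the number of overpartitions of `n` with rank congruent to `a` mod `c`. -/
noncomputable def nbar (a : ℤ) (c : ℕ) (n : ℕ) : ℕ :=
  Nat.card {P : Overpartition n // P.rank ≡ a [ZMOD (c : ℤ)]}

/-- `pbar n` is the number of overpartitions of `n`. -/
noncomputable def pbar (n : ℕ) : ℕ := Nat.card (Overpartition n)

/-! Removing one copy of the largest part gives a recursion for the generating function of the
overpartitions with prescribed largest part and number of parts. It implies that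
`∑ (N̄(0,5,n) - N̄(1,5,n)) qⁿ` times the theta function `∑ (-1)ⁿ q ^ n²` equals
`1 + 6 * rankSeries 5 1 - 8 * rankSeries 5 2`, a combination of Lerch series. Splitting all
summation indices modulo `5` expresses the 5-dissection of both sides through theta functions and
Appell–Lerch series of modulus `q ^ 10`. The identities between these solve the resulting
`5 × 5` linear system, and since the theta function is nonzero there is no other solution. The
components of the solution for `n ≡ 2` and `n ≡ 4` are negatives of sums of quotients whose
numerators are Appell–Lerch series and whose denominators are theta functions. Euler's series, the
`q`-binomial theorem and the triple product identity show that these quotients have nonnegative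
coefficients, with a positive contribution in every degree that is needed.
-/

namespace QSeries

open Filter Topology WithZero
open scoped LaurentSeries

/-! ### Summation of Laurent series -/

section Topology

variable {K : Type*} [Field K] {ι : Type*} {N M : ℤ} {x y : K⸨X⸩}

/-- `OrderGE N x` says that the Laurent series `x` is divisible by `X ^ N`. The sets
`{x | OrderGE N x}` form the basis of neighbourhoods of `0` in which all sums are computed. -/
def OrderGE (N : ℤ) (x : K⸨X⸩) : Prop := ∀ n < N, x.coeff n = 0

theorem OrderGE.zero (N : ℤ) : OrderGE N (0 : K⸨X⸩) := fun _ _ => rfl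

theorem OrderGE.mono (hx : OrderGE N x) (h : M ≤ N) : OrderGE M x :=
  fun n hn => hx n (hn.trans_le h)

theorem OrderGE.add (hx : OrderGE N x) (hy : OrderGE N y) : OrderGE N (x + y) :=
  fun n hn => by rw [HahnSeries.coeff_add, hx n hn, hy n hn, add_zero]

theorem OrderGE.neg (hx : OrderGE N x) : OrderGE N (-x) :=
  fun n hn => by rw [HahnSeries.coeff_neg, hx n hn, neg_zero]

theorem OrderGE.sub (hx : OrderGE N x) (hy : OrderGE N y) : OrderGE N (x - y) :=
  sub_eq_add_neg x y ▸ hx.add hy.neg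

theorem OrderGE.mul (hx : OrderGE N x) (hy : OrderGE M y) : OrderGE (N + M) (x * y) := by
  intro n hn
  rw [HahnSeries.coeff_mul]
  refine Finset.sum_eq_zero fun ij hij => ?_
  rw [Finset.mem_antidiagonal] at hij
  by_cases h : ij.1 < N
  · rw [hx _ h, zero_mul]
  · rw [hy _ (by omega), mul_zero]

theorem OrderGE.single (k : ℤ) (c : K) : OrderGE k (HahnSeries.single k c : K⸨X⸩) :=
  fun _ hn => HahnSeries.coeff_single_of_ne hn.ne

theorem OrderGE.one : OrderGE 0 (1 : K⸨X⸩) := OrderGE.single 0 1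

theorem OrderGE.pow (hx : OrderGE 1 x) (n : ℕ) : OrderGE n (x ^ n) := by
  induction n with
  | zero => exact pow_zero x ▸ OrderGE.one
  | succ n ih => exact pow_succ x n ▸ Nat.cast_succ (R := ℤ) n ▸ ih.mul hx

theorem OrderGE.mul_left (hx : OrderGE 0 x) (hy : OrderGE N y) : OrderGE N (x * y) :=
  zero_add N ▸ hx.mul hy

theorem OrderGE.mul_right (hx : OrderGE N x) (hy : OrderGE 0 y) : OrderGE N (x * y) :=
  add_zero N ▸ hx.mul hy

theorem OrderGE.sum {s : Finset ι} {f : ι → K⸨X⸩} (hf : ∀ i ∈ s, OrderGE N (f i)) :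
    OrderGE N (∑ i ∈ s, f i) :=
  fun n hn => by rw [HahnSeries.coeff_sum, Finset.sum_eq_zero fun i hi => hf i hi n hn]

theorem OrderGE.intCast (m : ℤ) : OrderGE 0 (m : K⸨X⸩) := by
  rw [← map_intCast (HahnSeries.C : K →+* K⸨X⸩) m]
  exact OrderGE.single 0 _

theorem OrderGE.of_sub_one (hN : 0 ≤ N) (hx : OrderGE N (x - 1)) : OrderGE 0 x :=
  sub_add_cancel x 1 ▸ (hx.mono hN).add .one

theorem OrderGE.mul_sub_one (hN : 0 ≤ N) (hx : OrderGE N (x - 1)) (hy : OrderGE N (y - 1)) :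
    OrderGE N (x * y - 1) := by
  rw [show x * y - 1 = x * (y - 1) + (x - 1) by ring]
  exact ((hx.of_sub_one hN).mul_left hy).add hx

theorem eq_zero_of_forall_orderGE (h : ∀ N, OrderGE N x) : x = 0 :=
  HahnSeries.ext (funext fun n => h (n + 1) n (lt_add_one n))

theorem setOf_orderGE_mem_nhds_zero (N : ℤ) : {x : K⸨X⸩ | OrderGE N x} ∈ 𝓝 0 := by
  obtain ⟨x, hx⟩ := LaurentSeries.valuation_surjective K (exp (-N) * exp 1)
  have hne : Valued.v.restrict x ≠ 0 := fun h => by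
    have hvx : (Valued.v x : ℤᵐ⁰) = 0 := MonoidWithZeroHom.ValueGroup₀.restrict₀_eq_zero_iff.1 h
    simp [hx] at hvx
  refine (Valued.mem_nhds_zero).2 ⟨Units.mk0 _ hne, fun y hy => ?_⟩
  have hlt : (Valued.v y : ℤᵐ⁰) < Valued.v x := (Valuation.restrict_lt_iff _).1 hy
  rw [hx, ← exp_add] at hlt
  refine (LaurentSeries.valuation_le_iff_coeff_lt_eq_zero K (D := N)).1 ?_
  by_cases hv : (Valued.v y : ℤᵐ⁰) = 0
  · exact hv ▸ zero_le
  · rw [← exp_log hv, exp_lt_exp] at hlt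
    rw [← exp_log hv, exp_le_exp]
    omega

theorem exists_setOf_orderGE_subset {s : Set K⸨X⸩} (hs : s ∈ 𝓝 0) :
    ∃ N : ℤ, {x | OrderGE N x} ⊆ s := by
  obtain ⟨γ, hγ⟩ := (Valued.mem_nhds_zero).1 hs
  set m := log (MonoidWithZeroHom.ValueGroup₀.embedding γ.1)
  have hm : MonoidWithZeroHom.ValueGroup₀.embedding γ.1 = exp m := (exp_log (by simp)).symm
  refine ⟨-m + 1, fun x hx => hγ ((Valuation.restrict_lt_iff_lt_embedding _).2 ?_)⟩
  rw [hm]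
  refine ((LaurentSeries.valuation_le_iff_coeff_lt_eq_zero K (D := -m + 1)).2 hx).trans_lt ?_
  rw [exp_lt_exp]
  omega

theorem hasBasis_nhds_zero :
    (𝓝 (0 : K⸨X⸩)).HasBasis (fun _ : ℤ => True) (fun N => {x | OrderGE N x}) where
  mem_iff' s := by
    simp only [true_and]
    exact ⟨exists_setOf_orderGE_subset,
      fun ⟨N, hN⟩ => mem_of_superset (setOf_orderGE_mem_nhds_zero N) hN⟩

/-- The additive subgroup `X ^ N • K⟦X⟧` of `K⸨X⸩`, packaged to show that `K⸨X⸩` is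
nonarchimedean. -/
def orderGESubgroup (K : Type*) [Field K] (N : ℤ) : AddSubgroup K⸨X⸩ where
  carrier := {x | OrderGE N x}
  add_mem' := OrderGE.add
  zero_mem' := OrderGE.zero N
  neg_mem' := OrderGE.neg

instance : NonarchimedeanRing K⸨X⸩ where
  is_nonarchimedean U hU := by
    obtain ⟨N, hN⟩ := exists_setOf_orderGE_subset hU
    exact ⟨⟨orderGESubgroup K N,
      AddSubgroup.isOpen_of_mem_nhds _ (setOf_orderGE_mem_nhds_zero N)⟩, hN⟩

instance [CharZero K] : CharZero K⸨X⸩ :=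
  charZero_of_injective_ringHom (HahnSeries.C_injective (Γ := ℤ))

theorem summable_of_orderGE {f : ι → K⸨X⸩} (w : ι → ℤ) (hw : ∀ i, OrderGE (w i) (f i))
    (hfin : ∀ N, {i | w i < N}.Finite) : Summable f := by
  apply NonarchimedeanAddGroup.summable_of_tendsto_cofinite_zero
  rw [hasBasis_nhds_zero.tendsto_right_iff]
  intro N _
  rw [eventually_cofinite]
  exact (hfin N).subset fun i hi => not_le.1 fun h => hi ((hw i).mono h)

theorem summable_nat_of_orderGE {f : ℕ → K⸨X⸩} (hf : ∀ n : ℕ, OrderGE n (f n)) : Summable f :=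
  summable_of_orderGE (fun n => (n : ℤ)) hf fun N =>
    (Set.finite_Iio N.toNat).subset fun n (hn : (n : ℤ) < N) => Int.lt_toNat.2 hn

theorem exists_coeff_eq_sum_of_hasSum {f : ι → K⸨X⸩} (h : HasSum f x) (n : ℤ) :
    ∃ s : Finset ι, ∀ t, s ⊆ t → x.coeff n = ∑ i ∈ t, (f i).coeff n := by
  have hlim : Tendsto (fun t : Finset ι => ∑ i ∈ t, f i - x) atTop (𝓝 0) := by
    simpa [HasSum] using Tendsto.sub_const (show Tendsto _ _ _ from h) x
  obtain ⟨s, hs⟩ := eventually_atTop.1 (hlim (setOf_orderGE_mem_nhds_zero (n + 1)))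
  refine ⟨s, fun t ht => ?_⟩
  have hn := hs t ht n (lt_add_one n)
  rw [HahnSeries.coeff_sub, HahnSeries.coeff_sum, sub_eq_zero] at hn
  exact hn.symm

theorem OrderGE.tsum {f : ι → K⸨X⸩} (hf : ∀ i, OrderGE N (f i)) : OrderGE N (∑' i, f i) := by
  by_cases h : Summable f
  · intro n hn
    obtain ⟨s, hs⟩ := exists_coeff_eq_sum_of_hasSum h.hasSum n
    rw [hs s subset_rfl, Finset.sum_eq_zero fun i _ => hf i n hn]
  · exact tsum_eq_zero_of_not_summable h ▸ OrderGE.zero N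

theorem OrderGE.tsum_nat_sub_one {f : ℕ → K⸨X⸩} (hs : Summable f) (h₀ : f 0 = 1)
    (hf : ∀ n, OrderGE N (f (n + 1))) : OrderGE N (∑' n, f n - 1) := by
  rw [hs.tsum_eq_zero_add, h₀, add_sub_cancel_left]
  exact .tsum hf

theorem eq_one_of_forall_add_eq {f : ℤ → K⸨X⸩} {d : ℤ} (hd : 0 < d)
    (hf : ∀ a, 0 < a → f a = f (a + d)) (hord : ∀ a, 0 < a → OrderGE a (f a - 1)) {a : ℤ}
    (ha : 0 < a) : f a = 1 := by
  have hiter : ∀ n : ℕ, f a = f (a + d * n) := fun n => by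
    induction n with
    | zero => simp
    | succ n ih => rw [ih, hf _ (by positivity), Nat.cast_succ, mul_add_one, add_assoc]
  refine sub_eq_zero.1 (eq_zero_of_forall_orderGE fun N => ?_)
  rw [hiter N.toNat]
  refine (hord _ (by positivity)).mono ?_
  nlinarith [Int.self_le_toNat N, le_mul_of_one_le_left (Int.natCast_nonneg N.toNat) hd]

theorem coeff_single_one_mul (k n : ℤ) (x : K⸨X⸩) :
    (HahnSeries.single k 1 * x).coeff n = x.coeff (n - k) := by
  obtain ⟨m, rfl⟩ : ∃ m, n = m + k := ⟨n - k, by ring⟩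
  rw [HahnSeries.coeff_single_mul_add, one_mul, add_sub_cancel_right]

theorem coeff_intCast_mul (c n : ℤ) (x : K⸨X⸩) : ((c : K⸨X⸩) * x).coeff n = c * x.coeff n := by
  rw [← zsmul_eq_mul, HahnSeries.coeff_smul, zsmul_eq_mul]

theorem coeff_ofNat_mul (m : ℕ) [m.AtLeastTwo] (n : ℤ) (x : K⸨X⸩) :
    (ofNat(m) * x).coeff n = ofNat(m) * x.coeff n := by
  simpa only [Int.cast_ofNat] using coeff_intCast_mul ofNat(m) n x

theorem coeff_one_of_ne_zero {n : ℤ} (hn : n ≠ 0) : (1 : K⸨X⸩).coeff n = 0 :=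
  HahnSeries.coeff_single_of_ne hn

end Topology

section Positivity

variable {K : Type*} [Field K] [LinearOrder K] {ι : Type*} {w x y z : K⸨X⸩}

/-- Coefficientwise comparison of Laurent series. It is not an instance of `LE` because Hahn
series carry a lexicographic order in Mathlib. -/
def CoeffLE (x y : K⸨X⸩) : Prop := ∀ n, x.coeff n ≤ y.coeff n

theorem CoeffLE.refl (x : K⸨X⸩) : CoeffLE x x := fun _ => le_rfl

theorem CoeffLE.trans (h : CoeffLE x y) (h' : CoeffLE y z) : CoeffLE x z :=
  fun n => (h n).trans (h' n)

variable [IsStrictOrderedRing K]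

theorem CoeffLE.add (h : CoeffLE x y) (h' : CoeffLE w z) : CoeffLE (x + w) (y + z) :=
  fun n => add_le_add (h n) (h' n)

theorem CoeffLE.add_nonneg_right (h : CoeffLE x y) (hz : CoeffLE 0 z) : CoeffLE x (y + z) := by
  simpa only [add_zero] using h.add hz

theorem CoeffLE.mul_nonneg (hx : CoeffLE 0 x) (hy : CoeffLE 0 y) : CoeffLE 0 (x * y) :=
  fun n => by
    rw [HahnSeries.coeff_mul]
    exact Finset.sum_nonneg fun i _ => _root_.mul_nonneg (hx _) (hy _)

theorem CoeffLE.sub_nonneg : CoeffLE 0 (y - x) ↔ CoeffLE x y :=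
  forall_congr' fun n => by rw [HahnSeries.coeff_sub]; exact _root_.sub_nonneg

theorem CoeffLE.mul (h : CoeffLE x y) (h' : CoeffLE w z) (hx : CoeffLE 0 x) (hw : CoeffLE 0 w) :
    CoeffLE (x * w) (y * z) := by
  have key := ((sub_nonneg.2 h).mul_nonneg (hw.trans h')).add (hx.mul_nonneg (sub_nonneg.2 h'))
  rwa [show (y - x) * z + x * (z - w) = y * z - x * w by ring, add_zero, sub_nonneg] at key

theorem CoeffLE.tsum_nonneg {f : ι → K⸨X⸩} (hf : ∀ i, CoeffLE 0 (f i)) :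
    CoeffLE 0 (∑' i, f i) := by
  by_cases h : Summable f
  · intro n
    obtain ⟨s, hs⟩ := exists_coeff_eq_sum_of_hasSum h.hasSum n
    rw [hs s subset_rfl]
    exact Finset.sum_nonneg fun i _ => hf i n
  · rw [tsum_eq_zero_of_not_summable h]
    exact .refl 0

theorem CoeffLE.le_tsum {f : ι → K⸨X⸩} (hs : Summable f) (hf : ∀ i, CoeffLE 0 (f i)) (i : ι)
    (hi : CoeffLE x (f i)) : CoeffLE x (∑' i, f i) := by
  classical
  rw [hs.tsum_eq_add_tsum_ite i]
  refine hi.add_nonneg_right (tsum_nonneg fun j => ?_)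
  split_ifs
  exacts [.refl 0, hf j]

theorem CoeffLE.single_nonneg (k : ℤ) : CoeffLE 0 (HahnSeries.single k (1 : K)) := fun n => by
  rw [HahnSeries.coeff_single]
  split_ifs
  exacts [zero_le_one, le_rfl]

end Positivity

/-- The monomial `q ^ k` of the field `ℚ⸨X⸩` in which all `q`-series below live. -/
noncomputable def q (k : ℤ) : ℚ⸨X⸩ := HahnSeries.single k 1

theorem q_zero : q 0 = 1 := rfl

theorem q_add (a b : ℤ) : q (a + b) = q a * q b := by simp [q]

theorem q_ne_zero (a : ℤ) : q a ≠ 0 := by simp [q]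

theorem q_neg (a : ℤ) : q (-a) = (q a)⁻¹ :=
  eq_inv_of_mul_eq_one_left (by rw [← q_add, neg_add_cancel, q_zero])

theorem q_sub (a b : ℤ) : q (a - b) = q a / q b := by
  rw [sub_eq_add_neg, q_add, q_neg, div_eq_mul_inv]

theorem q_pow (a : ℤ) (n : ℕ) : q a ^ n = q (n * a) := by
  simp [q, HahnSeries.single_pow]

theorem coeff_q (a n : ℤ) : (q a).coeff n = if n = a then 1 else 0 := by
  rw [q, HahnSeries.coeff_single]
  split_ifs <;> rfl

theorem coeff_q_mul (k n : ℤ) (x : ℚ⸨X⸩) : (q k * x).coeff n = x.coeff (n - k) :=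
  coeff_single_one_mul k n x

theorem orderGE_q (a : ℤ) : OrderGE a (q a) := .single a 1

theorem q_nonneg (a : ℤ) : CoeffLE 0 (q a) := .single_nonneg a

theorem one_nonneg : CoeffLE 0 (1 : ℚ⸨X⸩) := q_nonneg 0

theorem q_injective : Function.Injective q := fun a b h => by
  by_contra hne
  have := congrArg (fun x : ℚ⸨X⸩ => x.coeff a) h
  simp [coeff_q, hne] at this

theorem one_sub_q_ne_zero {a : ℤ} (h : a ≠ 0) : 1 - q a ≠ 0 :=
  sub_ne_zero.2 fun h' => h (q_injective (q_zero.trans h')).symm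

theorem one_add_q_ne_zero (a : ℤ) : 1 + q a ≠ 0 := fun h => by
  have h0 := congrArg (fun x : ℚ⸨X⸩ => x.coeff 0) h
  simp only [← q_zero, HahnSeries.coeff_add, coeff_q, HahnSeries.coeff_zero] at h0
  split_ifs at h0 <;> norm_num at h0

theorem CoeffLE.nonneg {s : ℤ} {x : ℚ⸨X⸩} (h : CoeffLE (q s) x) : CoeffLE 0 x :=
  (q_nonneg s).trans h

theorem CoeffLE.one_le_coeff {s : ℤ} {x : ℚ⸨X⸩} (h : CoeffLE (q s) x) : 1 ≤ x.coeff s := by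
  simpa [coeff_q] using h s

theorem CoeffLE.ne_zero {s : ℤ} {x : ℚ⸨X⸩} (h : CoeffLE (q s) x) : x ≠ 0 := by
  rintro rfl
  exact absurd h.one_le_coeff (by simp)

theorem CoeffLE.q_add_le_mul {s t : ℤ} {x y : ℚ⸨X⸩} (hx : CoeffLE (q s) x) (hy : CoeffLE (q t) y) :
    CoeffLE (q (s + t)) (x * y) :=
  q_add s t ▸ hx.mul hy (q_nonneg s) (q_nonneg t)

theorem CoeffLE.q_le_mul {s : ℤ} {x y : ℚ⸨X⸩} (hx : CoeffLE (q s) x) (hy : CoeffLE (q 0) y) :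
    CoeffLE (q s) (x * y) :=
  add_zero s ▸ hx.q_add_le_mul hy

theorem summable_q_mul {a : ℤ} (ha : 0 < a) : Summable (fun n : ℕ => q (a * n)) :=
  summable_nat_of_orderGE fun n => (orderGE_q _).mono (by nlinarith)

theorem tsum_q_mul {a : ℤ} (ha : 0 < a) : ∑' n : ℕ, q (a * n) = (1 - q a)⁻¹ := by
  have h : ∑' n : ℕ, q (a * n) = 1 + q a * ∑' n : ℕ, q (a * n) := by
    conv_lhs => rw [(summable_q_mul ha).tsum_eq_zero_add]
    rw [← tsum_mul_left, Nat.cast_zero, mul_zero, q_zero]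
    simp only [Nat.cast_add_one, mul_add_one, q_add, mul_comm (q a)]
  exact eq_inv_of_mul_eq_one_left (by linear_combination h)

theorem orderGE_inv_one_sub_q {a : ℤ} (ha : 0 < a) : OrderGE 0 (1 - q a)⁻¹ :=
  tsum_q_mul ha ▸ .tsum fun _ => (orderGE_q _).mono (by positivity)

theorem inv_one_sub_q_nonneg {a : ℤ} (ha : 0 < a) : CoeffLE 0 (1 - q a)⁻¹ :=
  tsum_q_mul ha ▸ .tsum_nonneg fun _ => q_nonneg _

theorem one_le_inv_one_sub_q {a : ℤ} (ha : 0 < a) : CoeffLE (q 0) (1 - q a)⁻¹ :=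
  tsum_q_mul ha ▸ .le_tsum (summable_q_mul ha) (fun _ => q_nonneg _) 0 (by simpa using .refl _)

/-! ### Theta functions and Appell–Lerch series -/

theorem summable_of_abs_add_abs_le {K ι : Type*} [Field K] {f : ι → K⸨X⸩} {g : ι → ℤ × ℤ}
    (hg : Function.Injective g) (B : ℤ) (hf : ∀ i, OrderGE (|(g i).1| + |(g i).2| - B) (f i)) :
    Summable f := by
  refine summable_of_orderGE _ hf fun N => ?_
  have hfin : (Set.Icc (-(N + B)) (N + B) ×ˢ Set.Icc (-(N + B)) (N + B)).Finite :=
    (Set.finite_Icc _ _).prod (Set.finite_Icc _ _)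
  refine (hfin.preimage hg.injOn).subset fun i (hi : _ < N) => ?_
  have h₁ := abs_nonneg (g i).1
  have h₂ := abs_nonneg (g i).2
  exact ⟨abs_le.1 (by linarith), abs_le.1 (by linarith)⟩

/-- The signed monomial `(-1) ^ n * q ^ e`. -/
noncomputable def altQ (n e : ℤ) : ℚ⸨X⸩ := (-1) ^ n * q e

theorem altQ_zero (e : ℤ) : altQ 0 e = q e := by simp [altQ]

theorem altQ_mul (m n d e : ℤ) : altQ m d * altQ n e = altQ (m + n) (d + e) := by
  rw [altQ, altQ, altQ, q_add, zpow_add₀ (neg_ne_zero.2 one_ne_zero)]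
  ring

theorem q_mul_altQ (n d e : ℤ) : q d * altQ n e = altQ n (d + e) := by
  rw [← altQ_zero, altQ_mul, zero_add]

theorem altQ_congr {m n d e : ℤ} (h : Even (m - n)) (he : d = e) : altQ m d = altQ n e := by
  rw [he, ← sub_add_cancel m n, altQ, altQ, zpow_add₀ (neg_ne_zero.2 one_ne_zero),
    h.neg_one_zpow, one_mul]

theorem altQ_eq_neg {m n d e : ℤ} (h : Odd (m - n)) (he : d = e) : altQ m d = -altQ n e := by
  rw [he, ← sub_add_cancel m n, altQ, altQ, zpow_add₀ (neg_ne_zero.2 one_ne_zero),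
    h.neg_one_zpow, neg_one_mul, neg_mul]

theorem orderGE_altQ (n e : ℤ) : OrderGE e (altQ n e) := by
  rcases Int.even_or_odd n with h | h
  · rw [altQ, h.neg_one_zpow, one_mul]
    exact orderGE_q e
  · rw [altQ, h.neg_one_zpow, neg_one_mul]
    exact (orderGE_q e).neg

/-- The sign of the double sums of Appell and Kronecker type: `1` if `n, r ≥ 0`, `-1` if
`n, r < 0`, and `0` otherwise. -/
def coneSign (n r : ℤ) : ℤ := (if 0 ≤ n then 1 else 0) - (if r < 0 then 1 else 0)

theorem coneSign_of_nonneg {n r : ℤ} (hn : 0 ≤ n) (hr : 0 ≤ r) : coneSign n r = 1 := by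
  simp [coneSign, hn, hr.not_gt]

theorem coneSign_of_neg {n r : ℤ} (hn : n < 0) (hr : r < 0) : coneSign n r = -1 := by
  simp [coneSign, hn.not_ge, hr]

theorem coneSign_of_nonneg_of_neg {n r : ℤ} (hn : 0 ≤ n) (hr : r < 0) : coneSign n r = 0 := by
  simp [coneSign, hn, hr]

theorem coneSign_of_neg_of_nonneg {n r : ℤ} (hn : n < 0) (hr : 0 ≤ r) : coneSign n r = 0 := by
  simp [coneSign, hn.not_ge, hr.not_gt]

theorem coneSign_neg_one_sub (n r : ℤ) : coneSign (-1 - n) (-1 - r) = -coneSign n r := by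
  unfold coneSign
  split_ifs <;> omega

theorem coneSign_comm (n r : ℤ) : coneSign n r = coneSign r n := by
  unfold coneSign
  split_ifs <;> omega

theorem coneSign_mul_add {d e b ε : ℤ} (hb₀ : 0 ≤ b) (hb : b < d) (hε₀ : 0 ≤ ε) (hε : ε < e)
    (m r : ℤ) :
    coneSign (m * d + b) (r * e + ε) = coneSign m r := by
  have hm : 0 ≤ m * d + b ↔ 0 ≤ m :=
    ⟨fun h => by by_contra! hm; nlinarith, fun h => by nlinarith⟩
  have hr : r * e + ε < 0 ↔ r < 0 :=
    ⟨fun h => by by_contra! hr; nlinarith, fun h => by nlinarith⟩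
  simp only [coneSign, hm, hr]

theorem OrderGE.coneSign_mul {n r w e : ℤ} {x : ℚ⸨X⸩} (hx : OrderGE e x)
    (hpos : 0 ≤ n → 0 ≤ r → w ≤ e) (hneg : n < 0 → r < 0 → w ≤ e) :
    OrderGE w ((coneSign n r : ℚ⸨X⸩) * x) := by
  rcases le_or_gt 0 n with hn | hn <;> rcases le_or_gt 0 r with hr | hr
  · exact (OrderGE.intCast _).mul_left (hx.mono (hpos hn hr))
  · rw [coneSign_of_nonneg_of_neg hn hr, Int.cast_zero, zero_mul]
    exact .zero w
  · rw [coneSign_of_neg_of_nonneg hn hr, Int.cast_zero, zero_mul]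
    exact .zero w
  · exact (OrderGE.intCast _).mul_left (hx.mono (hneg hn hr))

theorem hasSum_coneSign_mul {f : ℤ × ℤ → ℚ⸨X⸩} {x y : ℚ⸨X⸩}
    (hpos : HasSum (fun p : ℕ × ℕ => f (p.1, p.2)) x)
    (hneg : HasSum (fun p : ℕ × ℕ => f (-1 - p.1, -1 - p.2)) y) :
    HasSum (fun p : ℤ × ℤ => coneSign p.1 p.2 * f p) (x - y) := by
  classical
  let pos : ℕ × ℕ → ℤ × ℤ := fun p => (p.1, p.2)
  let neg : ℕ × ℕ → ℤ × ℤ := fun p => (-1 - p.1, -1 - p.2)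
  have hposinj : Function.Injective pos := fun p p' h => by
    simp only [pos, Prod.mk.injEq] at h
    ext <;> omega
  have hneginj : Function.Injective neg := fun p p' h => by
    simp only [neg, Prod.mk.injEq] at h
    ext <;> omega
  have hpos' : HasSum ((Set.range pos).indicator f) x := by
    rw [← hposinj.hasSum_iff fun p hp => Set.indicator_of_notMem hp f]
    exact hpos.congr_fun fun p => Set.indicator_of_mem (Set.mem_range_self p) f
  have hneg' : HasSum ((Set.range neg).indicator f) y := by
    rw [← hneginj.hasSum_iff fun p hp => Set.indicator_of_notMem hp f]
    exact hneg.congr_fun fun p => Set.indicator_of_mem (Set.mem_range_self p) f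
  have hmempos : ∀ p, p ∈ Set.range pos ↔ 0 ≤ p.1 ∧ 0 ≤ p.2 := fun p =>
    ⟨by rintro ⟨p, rfl⟩; exact ⟨by positivity, by positivity⟩,
      fun ⟨h₁, h₂⟩ => ⟨(p.1.toNat, p.2.toNat), by ext <;> simp [pos, h₁, h₂]⟩⟩
  have hmemneg : ∀ p, p ∈ Set.range neg ↔ p.1 < 0 ∧ p.2 < 0 := fun p =>
    ⟨by rintro ⟨p, rfl⟩; simp only [neg]; omega,
      fun _ => ⟨((-1 - p.1).toNat, (-1 - p.2).toNat), by ext <;> simp [neg] <;> omega⟩⟩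
  refine (hpos'.sub hneg').congr_fun fun p => ?_
  rw [Set.indicator_apply, Set.indicator_apply]
  simp only [hmempos, hmemneg, coneSign]
  split_ifs <;> first | omega | simp

section Theta

variable {ℓ : ℤ} {b b' c c' s t : ℤ}

/-- The exponent of `q` in the `n`-th term of `theta ℓ a`. -/
def thetaExp (ℓ a n : ℤ) : ℤ := ℓ * n * (n - 1) + a * n

theorem abs_le_thetaExp_add (hℓ : 0 < ℓ) (a n : ℤ) : |n| ≤ thetaExp ℓ a n + (a ^ 2 + 2) := by
  have hn : 0 ≤ n * (n - 1) := by
    rcases le_or_gt n 0 with h | h <;> nlinarith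
  have hmul : n * (n - 1) ≤ ℓ * (n * (n - 1)) := le_mul_of_one_le_left hn hℓ
  rw [thetaExp, mul_assoc]
  rcases abs_cases n with ⟨h, -⟩ | ⟨h, -⟩ <;> rw [h] <;>
    nlinarith [sq_nonneg (2 * n + a - 2), sq_nonneg (2 * n + a), sq_nonneg (a + 2),
      sq_nonneg (a - 2), sq_nonneg a]

/-- The theta function `∑ (-1)ⁿ q ^ (ℓ n (n - 1) + a n)` over `n : ℤ`, whose product form is
`(q ^ a, q ^ (2 ℓ - a), q ^ (2 ℓ); q ^ (2 ℓ))_∞`; it is written `j(q ^ a; q ^ (2 ℓ))` in the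
literature on mock theta functions. -/
noncomputable def theta (ℓ a : ℤ) : ℚ⸨X⸩ := ∑' n : ℤ, altQ n (thetaExp ℓ a n)

theorem summable_theta (hℓ : 0 < ℓ) (a : ℤ) : Summable fun n : ℤ => altQ n (thetaExp ℓ a n) :=
  summable_of_abs_add_abs_le (Prod.mk_left_injective (0 : ℤ)) (a ^ 2 + 2) fun n =>
    (orderGE_altQ _ _).mono (by simpa using abs_le_thetaExp_add hℓ a n)

theorem theta_reflect (ℓ a : ℤ) : theta ℓ (2 * ℓ - a) = theta ℓ a := by
  rw [theta, theta, ← (Equiv.neg ℤ).tsum_eq]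
  refine tsum_congr fun n => altQ_congr ⟨-n, by simp; ring⟩ ?_
  simp only [Equiv.neg_apply, thetaExp]
  ring

theorem q_mul_theta_add (ℓ a : ℤ) : q a * theta ℓ (a + 2 * ℓ) = -theta ℓ a := by
  rw [theta, theta, ← tsum_mul_left, ← tsum_neg, ← (Equiv.addRight (-1 : ℤ)).tsum_eq]
  refine tsum_congr fun n => ?_
  rw [q_mul_altQ]
  refine altQ_eq_neg ⟨-1, by simp⟩ ?_
  simp only [Equiv.coe_addRight, thetaExp]
  ring

theorem q_mul_theta_neg (ℓ a : ℤ) : q a * theta ℓ (-a) = -theta ℓ a := by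
  rw [← theta_reflect ℓ (-a), ← q_mul_theta_add ℓ a, sub_neg_eq_add, add_comm]

theorem theta_zero (ℓ : ℤ) : theta ℓ 0 = 0 := by
  have h := q_mul_theta_neg ℓ 0
  rwa [q_zero, one_mul, neg_zero, self_eq_neg] at h

/-- The general term of the double series `appell ℓ c b`. -/
noncomputable def appellTerm (ℓ c b : ℤ) (p : ℤ × ℤ) : ℚ⸨X⸩ :=
  coneSign p.1 p.2 * altQ p.1 (thetaExp ℓ b p.1 + p.2 * (c + 2 * ℓ * p.1))

/-- The Appell–Lerch series `∑ (-1)ⁿ q ^ (ℓ n (n - 1) + b n) / (1 - q ^ (c + 2 ℓ n))` over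
`n : ℤ`, with every summand expanded as a geometric series in positive powers of `q`. -/
noncomputable def appell (ℓ c b : ℤ) : ℚ⸨X⸩ := ∑' p : ℤ × ℤ, appellTerm ℓ c b p

theorem summable_appell (hc : 0 < c) (hcℓ : c < 2 * ℓ) (b : ℤ) :
    Summable (appellTerm ℓ c b) := by
  refine summable_of_abs_add_abs_le Function.injective_id (b ^ 2 + 2) fun p => ?_
  have hexp := abs_le_thetaExp_add (show 0 < ℓ by omega) b p.1
  refine OrderGE.coneSign_mul (orderGE_altQ _ _) (fun hn hr => ?_) (fun hn hr => ?_)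
  · have h : p.2 ≤ p.2 * (c + 2 * ℓ * p.1) := le_mul_of_one_le_right hr (by nlinarith)
    simp only [id, abs_of_nonneg hr]
    linarith
  · have h : -p.2 ≤ p.2 * (c + 2 * ℓ * p.1) := by
      nlinarith [show c + 2 * ℓ * p.1 ≤ -1 by nlinarith]
    simp only [id, abs_of_neg hr]
    linarith

/-- The general term of the double series `kronecker ℓ s t`. -/
noncomputable def kroneckerTerm (ℓ s t : ℤ) (p : ℤ × ℤ) : ℚ⸨X⸩ :=
  coneSign p.1 p.2 * q (2 * ℓ * p.1 * p.2 + s * p.1 + t * p.2)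

/-- Kronecker's double series `∑ q ^ (2 ℓ n r + s n + t r)` over `n, r ≥ 0`, minus the same sum
over `n, r < 0`. -/
noncomputable def kronecker (ℓ s t : ℤ) : ℚ⸨X⸩ := ∑' p : ℤ × ℤ, kroneckerTerm ℓ s t p

theorem summable_kronecker (hs : 0 < s) (hsℓ : s < 2 * ℓ) (ht : 0 < t) (htℓ : t < 2 * ℓ) :
    Summable (kroneckerTerm ℓ s t) := by
  refine summable_of_abs_add_abs_le Function.injective_id (2 * ℓ) fun p => ?_
  refine OrderGE.coneSign_mul (orderGE_q _) (fun hn hr => ?_) (fun hn hr => ?_)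
  · simp only [id, abs_of_nonneg hn, abs_of_nonneg hr]
    nlinarith [mul_nonneg (mul_nonneg (show 0 ≤ 2 * ℓ by omega) hn) hr,
      mul_nonneg (show 0 ≤ s - 1 by omega) hn, mul_nonneg (show 0 ≤ t - 1 by omega) hr]
  · simp only [id, abs_of_neg hn, abs_of_neg hr]
    nlinarith [mul_nonneg (mul_nonneg (show 0 ≤ 2 * ℓ by omega) (show 0 ≤ -1 - p.1 by omega))
        (show 0 ≤ -1 - p.2 by omega),
      mul_nonneg (show 0 ≤ 2 * ℓ - s - 1 by omega) (show 0 ≤ -1 - p.1 by omega),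
      mul_nonneg (show 0 ≤ 2 * ℓ - t - 1 by omega) (show 0 ≤ -1 - p.2 by omega)]

theorem altQ_thetaExp_neg_one_sub (ℓ c b n r : ℤ) :
    altQ (-1 - n) (thetaExp ℓ b (-1 - n) + (-1 - r) * (c + 2 * ℓ * (-1 - n))) =
      -(q (4 * ℓ - b - c) *
        altQ n (thetaExp ℓ (6 * ℓ - b) n + r * (2 * ℓ - c + 2 * ℓ * n))) := by
  rw [q_mul_altQ]
  exact altQ_eq_neg ⟨-1 - n, by ring⟩ (by unfold thetaExp; ring)

theorem appell_reflect (ℓ c b : ℤ) :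
    appell ℓ c b = q (4 * ℓ - b - c) * appell ℓ (2 * ℓ - c) (6 * ℓ - b) := by
  rw [appell, appell, ← tsum_mul_left,
    ← ((Equiv.subLeft (-1 : ℤ)).prodCongr (Equiv.subLeft (-1 : ℤ))).tsum_eq]
  refine tsum_congr fun p => ?_
  simp only [appellTerm, Equiv.prodCongr_apply, Prod.map, Equiv.subLeft_apply,
    coneSign_neg_one_sub, altQ_thetaExp_neg_one_sub, Int.cast_neg]
  ring

theorem appell_sub_q_mul_appell (hc : 0 < c) (hcℓ : c < 2 * ℓ) (b : ℤ) :
    appell ℓ c b - q c * appell ℓ c (b + 2 * ℓ) = theta ℓ b := by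
  let shifted : ℤ × ℤ → ℚ⸨X⸩ := fun p =>
    coneSign p.1 (p.2 - 1) * altQ p.1 (thetaExp ℓ b p.1 + p.2 * (c + 2 * ℓ * p.1))
  have hterm : ∀ p : ℤ × ℤ, q c * appellTerm ℓ c (b + 2 * ℓ) p = shifted (p.1, p.2 + 1) := by
    intro p
    simp only [appellTerm, shifted, add_sub_cancel_right]
    rw [mul_left_comm, q_mul_altQ]
    congr 2
    unfold thetaExp
    ring
  have hsum : HasSum shifted (q c * appell ℓ c (b + 2 * ℓ)) := by
    rw [← ((Equiv.refl ℤ).prodCongr (Equiv.addRight (1 : ℤ))).hasSum_iff]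
    exact ((summable_appell hc hcℓ _).hasSum.mul_left (q c)).congr_fun fun p => (hterm p).symm
  have hdiff := (summable_appell hc hcℓ b).hasSum.sub hsum
  rw [show theta ℓ b = ∑' p, (appellTerm ℓ c b p - shifted p) from ?_, hdiff.tsum_eq, appell]
  rw [theta, ← (Prod.mk_left_injective (0 : ℤ)).tsum_eq]
  · refine tsum_congr fun n => ?_
    simp only [appellTerm, shifted, ← sub_mul, coneSign]
    simp
  · intro p hp
    contrapose! hp
    have hr : p.2 ≠ 0 := fun hr => hp ⟨p.1, by rw [← hr]⟩
    have hsign : coneSign p.1 p.2 = coneSign p.1 (p.2 - 1) := by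
      unfold coneSign
      split_ifs <;> omega
    simp [appellTerm, shifted, hsign]

/-- The common general term of the triple series `theta ℓ b' * appell ℓ c b` and
`theta ℓ b * appell ℓ c' b'`, where `d = c - b = c' - b'`. -/
noncomputable def tripleTerm (ℓ b b' d : ℤ) (p : ℤ × ℤ × ℤ) : ℚ⸨X⸩ :=
  altQ (p.1 + p.2.1 - p.2.2)
    (thetaExp ℓ b p.1 + thetaExp ℓ b' p.2.1 - ℓ * p.2.2 * (p.2.2 - 1) + d * p.2.2)

theorem hasSum_theta_mul_appell (hc : 0 < c) (hcℓ : c < 2 * ℓ) (b b' : ℤ) :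
    HasSum (fun p : ℤ × ℤ × ℤ => coneSign (p.1 - p.2.2) p.2.2 * tripleTerm ℓ b b' (c - b) p)
      (theta ℓ b' * appell ℓ c b) := by
  let e : ℤ × ℤ × ℤ ≃ ℤ × ℤ × ℤ :=
    { toFun p := (p.2.1, p.1 - p.2.2, p.2.2)
      invFun p := (p.2.1 + p.2.2, p.1, p.2.2)
      left_inv p := by simp
      right_inv p := by simp }
  refine (e.hasSum_iff.2 ((summable_theta (by omega) b').hasSum.mul_of_nonarchimedean
    (summable_appell hc hcℓ b).hasSum)).congr_fun fun ⟨N, m, r⟩ => ?_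
  simp only [e, Function.comp, Equiv.coe_fn_mk, appellTerm, tripleTerm]
  rw [mul_left_comm, altQ_mul]
  exact congrArg _ (altQ_congr ⟨0, by ring⟩ (by unfold thetaExp; ring))

theorem hasSum_theta_mul_appell' (hc : 0 < c) (hcℓ : c < 2 * ℓ) (b b' : ℤ) :
    HasSum (fun p : ℤ × ℤ × ℤ => coneSign (p.2.1 - p.2.2) p.2.2 * tripleTerm ℓ b' b (c - b) p)
      (theta ℓ b' * appell ℓ c b) := by
  let e : ℤ × ℤ × ℤ ≃ ℤ × ℤ × ℤ :=
    { toFun p := (p.2.1, p.1, p.2.2)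
      invFun p := (p.2.1, p.1, p.2.2) }
  refine (e.hasSum_iff.2 (hasSum_theta_mul_appell hc hcℓ b b')).congr_fun fun ⟨N, m, r⟩ => ?_
  simp only [e, Function.comp, Equiv.coe_fn_mk, tripleTerm]
  exact congrArg _ (altQ_congr ⟨0, by ring⟩ (by ring))

theorem hasSum_theta_mul_kronecker (h : c - b = c' - b') (hc : 0 < c) (hcℓ : c < 2 * ℓ)
    (hc' : 0 < c') (hc'ℓ : c' < 2 * ℓ) :
    HasSum (fun p : ℤ × ℤ × ℤ =>
        coneSign (p.2.2 - p.1 - 1) (p.2.1 - p.2.2) * tripleTerm ℓ b b' (c - b) p)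
      (q c' * (theta ℓ (c + b') * kronecker ℓ c' (2 * ℓ - c))) := by
  let e : ℤ × ℤ × ℤ ≃ ℤ × ℤ × ℤ :=
    { toFun p := (p.2.1 + p.1 - p.2.2, p.2.2 - p.1 - 1, p.2.1 - p.2.2)
      invFun p := (p.1 - p.2.2, p.1 + p.2.1 + 1, p.1 - p.2.2 + p.2.1 + 1)
      left_inv p := by ext <;> simp <;> ring
      right_inv p := by ext <;> simp <;> ring }
  refine (e.hasSum_iff.2 (((summable_theta (by omega) (c + b')).hasSum.mul_of_nonarchimedean
    (summable_kronecker hc' hc'ℓ (by omega : 0 < 2 * ℓ - c) (by omega)).hasSum).mul_left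
      (q c'))).congr_fun fun ⟨N, m, r⟩ => ?_
  simp only [e, Function.comp, Equiv.coe_fn_mk, kroneckerTerm, tripleTerm]
  rw [← altQ_zero (_ + _), mul_left_comm (altQ _ _), altQ_mul, mul_left_comm, q_mul_altQ]
  refine congrArg _ (altQ_congr ⟨0, by ring⟩ ?_)
  obtain rfl : c = c' - b' + b := by omega
  unfold thetaExp
  ring

/-- The indicators of the three cones add up to zero, which turns into an identity between the
three triple series. -/
theorem theta_mul_appell_sub_theta_mul_appell (h : c - b = c' - b') (hc : 0 < c)
    (hcℓ : c < 2 * ℓ) (hc' : 0 < c') (hc'ℓ : c' < 2 * ℓ) :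
    theta ℓ b' * appell ℓ c b - theta ℓ b * appell ℓ c' b' =
      -(q c' * (theta ℓ (c + b') * kronecker ℓ c' (2 * ℓ - c))) := by
  refine ((hasSum_theta_mul_appell hc hcℓ b b').sub
    (hasSum_theta_mul_appell' hc' hc'ℓ b' b)).unique
    ((hasSum_theta_mul_kronecker h hc hcℓ hc' hc'ℓ).neg.congr_fun fun ⟨N, m, r⟩ => ?_)
  have hsign : coneSign (N - r) r - coneSign (m - r) r = -coneSign (r - N - 1) (m - r) := by
    unfold coneSign
    split_ifs <;> omega
  simp only [← h, ← sub_mul, ← neg_mul, ← Int.cast_sub, ← Int.cast_neg, hsign]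

end Theta

/-! ### Positivity of quotients -/

section Pochhammer

variable {ℓ a b : ℤ}

/-- The reciprocal `1 / (q ^ b; q ^ (2 ℓ))_m` of a finite `q`-Pochhammer symbol. -/
noncomputable def invQPoch (ℓ b : ℤ) (m : ℕ) : ℚ⸨X⸩ :=
  ∏ i ∈ Finset.range m, (1 - q (b + 2 * ℓ * i))⁻¹

theorem invQPoch_zero (ℓ b : ℤ) : invQPoch ℓ b 0 = 1 := Finset.prod_range_zero _

theorem invQPoch_succ (ℓ b : ℤ) (m : ℕ) :
    invQPoch ℓ b (m + 1) = invQPoch ℓ b m * (1 - q (b + 2 * ℓ * m))⁻¹ :=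
  Finset.prod_range_succ _ _

theorem invQPoch_succ_mul (hℓ : 0 < ℓ) (n : ℕ) :
    invQPoch ℓ (2 * ℓ) (n + 1) * (1 - q (2 * ℓ * (n + 1))) = invQPoch ℓ (2 * ℓ) n := by
  have hne : 1 - q (2 * ℓ * (n + 1)) ≠ 0 := one_sub_q_ne_zero (by positivity)
  rw [invQPoch_succ, mul_assoc, show 2 * ℓ + 2 * ℓ * n = 2 * ℓ * (n + 1) by ring,
    inv_mul_cancel₀ hne, mul_one]

theorem orderGE_invQPoch (hℓ : 0 < ℓ) (hb : 0 < b) (m : ℕ) : OrderGE 0 (invQPoch ℓ b m) := by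
  induction m with
  | zero => exact invQPoch_zero ℓ b ▸ .one
  | succ m ih => exact invQPoch_succ ℓ b m ▸ ih.mul_left (orderGE_inv_one_sub_q (by positivity))

theorem one_le_invQPoch (hℓ : 0 < ℓ) (hb : 0 < b) (m : ℕ) : CoeffLE (q 0) (invQPoch ℓ b m) := by
  induction m with
  | zero => exact invQPoch_zero ℓ b ▸ .refl _
  | succ m ih => exact invQPoch_succ ℓ b m ▸ ih.q_le_mul (one_le_inv_one_sub_q (by positivity))

/-- The infinite product `(q ^ a; q ^ (2 ℓ))_∞`, introduced through Euler's series so that `a` may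
be any integer. -/
noncomputable def qPochInf (ℓ a : ℤ) : ℚ⸨X⸩ :=
  ∑' n : ℕ, altQ n (thetaExp ℓ a n) * invQPoch ℓ (2 * ℓ) n

/-- The reciprocal `1 / (q ^ a; q ^ (2 ℓ))_∞`, introduced through Euler's series. -/
noncomputable def invQPochInf (ℓ a : ℤ) : ℚ⸨X⸩ :=
  ∑' n : ℕ, q (a * n) * invQPoch ℓ (2 * ℓ) n

theorem summable_of_orderGE_thetaExp (hℓ : 0 < ℓ) (a : ℤ) {f : ℕ → ℚ⸨X⸩}
    (hf : ∀ n : ℕ, OrderGE (thetaExp ℓ a n) (f n)) : Summable f :=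
  summable_of_abs_add_abs_le ((Prod.mk_left_injective (0 : ℤ)).comp Nat.cast_injective) (a ^ 2 + 2)
    fun n => (hf n).mono (by simpa using abs_le_thetaExp_add hℓ a n)

theorem summable_qPochInf (hℓ : 0 < ℓ) (a : ℤ) :
    Summable fun n : ℕ => altQ n (thetaExp ℓ a n) * invQPoch ℓ (2 * ℓ) n :=
  summable_of_orderGE_thetaExp hℓ a fun n =>
    (orderGE_altQ _ _).mul_right (orderGE_invQPoch hℓ (by positivity) n)

theorem summable_invQPochInf (hℓ : 0 < ℓ) (ha : 0 < a) :
    Summable fun n : ℕ => q (a * n) * invQPoch ℓ (2 * ℓ) n :=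
  summable_nat_of_orderGE fun n =>
    ((orderGE_q _).mono (le_mul_of_one_le_left (Int.natCast_nonneg n) ha)).mul_right
      (orderGE_invQPoch hℓ (by positivity) n)

theorem invQPochInf_mul_one_sub_q (hℓ : 0 < ℓ) (ha : 0 < a) :
    invQPochInf ℓ a * (1 - q a) = invQPochInf ℓ (a + 2 * ℓ) := by
  have hs := summable_invQPochInf hℓ ha
  have hs' := summable_invQPochInf hℓ (show 0 < a + 2 * ℓ by positivity)
  suffices h : invQPochInf ℓ a - invQPochInf ℓ (a + 2 * ℓ) = q a * invQPochInf ℓ a by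
    linear_combination h
  rw [invQPochInf, invQPochInf, ← hs.tsum_sub hs', (hs.sub hs').tsum_eq_zero_add, ← tsum_mul_left]
  simp only [Nat.cast_zero, mul_zero, sub_self, zero_add]
  refine tsum_congr fun n => ?_
  rw [← invQPoch_succ_mul hℓ n, Nat.cast_succ,
    show (a + 2 * ℓ) * ((n : ℤ) + 1) = a + a * n + 2 * ℓ * (n + 1) by ring,
    show a * ((n : ℤ) + 1) = a + a * n by ring, q_add _ (2 * ℓ * _), q_add]
  ring

theorem qPochInf_eq_one_sub_q_mul (hℓ : 0 < ℓ) (a : ℤ) :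
    qPochInf ℓ a = (1 - q a) * qPochInf ℓ (a + 2 * ℓ) := by
  have hs := summable_qPochInf hℓ a
  have hs' := summable_qPochInf hℓ (a + 2 * ℓ)
  suffices h : qPochInf ℓ a - qPochInf ℓ (a + 2 * ℓ) = -q a * qPochInf ℓ (a + 2 * ℓ) by
    linear_combination h
  rw [qPochInf, qPochInf, ← hs.tsum_sub hs', (hs.sub hs').tsum_eq_zero_add, ← tsum_mul_left]
  simp only [Nat.cast_zero, thetaExp, mul_zero, zero_mul, sub_self, zero_add, Nat.cast_succ]
  refine tsum_congr fun n => ?_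
  have hshift : altQ (n + 1) (ℓ * (n + 1) * (n + 1 - 1) + (a + 2 * ℓ) * (n + 1)) =
      q (2 * ℓ * (n + 1)) * altQ (n + 1) (ℓ * (n + 1) * (n + 1 - 1) + a * (n + 1)) := by
    rw [q_mul_altQ]
    congr 1
    ring
  have hneg : altQ (n + 1) (ℓ * (n + 1) * (n + 1 - 1) + a * (n + 1)) =
      -(q a * altQ n (ℓ * n * (n - 1) + (a + 2 * ℓ) * n)) := by
    rw [q_mul_altQ]
    exact altQ_eq_neg ⟨0, by ring⟩ (by ring)
  rw [hshift, hneg, ← invQPoch_succ_mul hℓ n]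
  ring

theorem orderGE_invQPochInf_sub_one (hℓ : 0 < ℓ) (ha : 0 < a) :
    OrderGE a (invQPochInf ℓ a - 1) := by
  refine .tsum_nat_sub_one (summable_invQPochInf hℓ ha) (by simp [q_zero, invQPoch_zero])
    fun n => ?_
  refine ((orderGE_q _).mono ?_).mul_right (orderGE_invQPoch hℓ (by positivity) _)
  rw [Nat.cast_succ]
  exact le_mul_of_one_le_right ha.le (by omega)

theorem orderGE_qPochInf_sub_one (hℓ : 0 < ℓ) (ha : 0 < a) : OrderGE a (qPochInf ℓ a - 1) := by
  refine .tsum_nat_sub_one (summable_qPochInf hℓ a)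
    (by simp [thetaExp, altQ_zero, q_zero, invQPoch_zero]) fun n => ?_
  refine ((orderGE_altQ _ _).mono ?_).mul_right (orderGE_invQPoch hℓ (by positivity) _)
  rw [thetaExp, Nat.cast_succ, add_sub_cancel_right]
  have : 0 ≤ ℓ * (n + 1) * n := by positivity
  have : 0 ≤ a * n := by positivity
  linarith

theorem orderGE_invQPochInf (hℓ : 0 < ℓ) (ha : 0 < a) : OrderGE 0 (invQPochInf ℓ a) :=
  (orderGE_invQPochInf_sub_one hℓ ha).of_sub_one ha.le

theorem orderGE_qPochInf (hℓ : 0 < ℓ) (ha : 0 < a) : OrderGE 0 (qPochInf ℓ a) :=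
  (orderGE_qPochInf_sub_one hℓ ha).of_sub_one ha.le

theorem q_le_invQPochInf (hℓ : 0 < ℓ) (ha : 0 < a) (k : ℕ) :
    CoeffLE (q (a * k)) (invQPochInf ℓ a) :=
  .le_tsum (summable_invQPochInf hℓ ha)
    (fun n => (q_nonneg _).mul_nonneg (one_le_invQPoch hℓ (by positivity) n).nonneg) k
    ((CoeffLE.refl _).q_le_mul (one_le_invQPoch hℓ (by positivity) k))

theorem one_le_invQPochInf (hℓ : 0 < ℓ) (ha : 0 < a) : CoeffLE (q 0) (invQPochInf ℓ a) := by
  simpa using q_le_invQPochInf hℓ ha 0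

theorem invQPochInf_mul_qPochInf (hℓ : 0 < ℓ) (ha : 0 < a) :
    invQPochInf ℓ a * qPochInf ℓ a = 1 := by
  refine eq_one_of_forall_add_eq (f := fun a => invQPochInf ℓ a * qPochInf ℓ a) (d := 2 * ℓ)
    (by positivity) (fun a ha => ?_) (fun a ha => ?_) ha
  · rw [← invQPochInf_mul_one_sub_q hℓ ha, qPochInf_eq_one_sub_q_mul hℓ a]
    ring
  · exact .mul_sub_one ha.le (orderGE_invQPochInf_sub_one hℓ ha) (orderGE_qPochInf_sub_one hℓ ha)

theorem qPochInf_ne_zero (hℓ : 0 < ℓ) (ha : 0 < a) : qPochInf ℓ a ≠ 0 :=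
  right_ne_zero_of_mul_eq_one (invQPochInf_mul_qPochInf hℓ ha)

theorem qPochInf_add_mul (hℓ : 0 < ℓ) (hb : 0 < b) (m : ℕ) :
    qPochInf ℓ (b + 2 * ℓ * m) = qPochInf ℓ b * invQPoch ℓ b m := by
  induction m with
  | zero => simp [invQPoch_zero]
  | succ m ih =>
    have hne : 1 - q (b + 2 * ℓ * m) ≠ 0 := one_sub_q_ne_zero (by positivity)
    rw [invQPoch_succ, ← mul_assoc, ← ih, qPochInf_eq_one_sub_q_mul hℓ (b + 2 * ℓ * m),
      mul_comm (1 - _), mul_assoc (qPochInf ℓ _), mul_inv_cancel₀ hne, mul_one, Nat.cast_succ,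
      mul_add_one, add_assoc]

theorem qPochInf_two_mul_mul_add_one (hℓ : 0 < ℓ) (r : ℕ) :
    qPochInf ℓ (2 * ℓ * (r + 1)) = qPochInf ℓ (2 * ℓ) * invQPoch ℓ (2 * ℓ) r := by
  rw [← qPochInf_add_mul hℓ (by positivity), mul_add_one, add_comm]

theorem qPochInf_neg (hℓ : 0 < ℓ) (m : ℕ) : qPochInf ℓ (-(2 * ℓ * m)) = 0 := by
  induction m with
  | zero => rw [qPochInf_eq_one_sub_q_mul hℓ]; simp [q_zero]
  | succ m ih =>
    rw [qPochInf_eq_one_sub_q_mul hℓ, Nat.cast_succ,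
      show -(2 * ℓ * ((m : ℤ) + 1)) + 2 * ℓ = -(2 * ℓ * m) by ring, ih, mul_zero]

theorem hasSum_theta_mul_invQPochInf (h₀ : 0 < a) (hℓ : a < 2 * ℓ) :
    HasSum (fun r : ℤ => altQ r (thetaExp ℓ a r) * qPochInf ℓ (2 * ℓ * (r + 1)))
      (theta ℓ a * invQPochInf ℓ (2 * ℓ - a)) := by
  have hℓ₀ : 0 < ℓ := by omega
  let e : ℤ × ℕ ≃ ℤ × ℕ :=
    { toFun p := (p.1 + p.2, p.2)
      invFun p := (p.1 - p.2, p.2)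
      left_inv p := by simp
      right_inv p := by simp }
  have hprod := e.hasSum_iff.2 ((summable_theta hℓ₀ a).hasSum.mul_of_nonarchimedean
    (summable_invQPochInf hℓ₀ (show 0 < 2 * ℓ - a by omega)).hasSum)
  have hterm : ∀ p : ℤ × ℕ, altQ p.1 (thetaExp ℓ a p.1) *
      (altQ p.2 (thetaExp ℓ (2 * ℓ * (p.1 + 1)) p.2) * invQPoch ℓ (2 * ℓ) p.2) =
      altQ (p.1 + p.2) (thetaExp ℓ a (p.1 + p.2)) *
        (q ((2 * ℓ - a) * p.2) * invQPoch ℓ (2 * ℓ) p.2) := fun p => by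
    rw [← mul_assoc, ← mul_assoc, altQ_mul, mul_comm (altQ _ _) (q _), q_mul_altQ]
    congr 2
    unfold thetaExp
    ring
  exact (hprod.congr_fun hterm).prod_fiberwise fun r =>
    (summable_qPochInf hℓ₀ (2 * ℓ * (r + 1))).hasSum.mul_left (altQ r (thetaExp ℓ a r))

theorem theta_mul_invQPochInf (h₀ : 0 < a) (hℓ : a < 2 * ℓ) :
    theta ℓ a * invQPochInf ℓ (2 * ℓ - a) = qPochInf ℓ (2 * ℓ) * qPochInf ℓ a := by
  have hℓ₀ : 0 < ℓ := by omega
  rw [← (hasSum_theta_mul_invQPochInf h₀ hℓ).tsum_eq, qPochInf.eq_1 ℓ a, ← tsum_mul_left,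
    ← (Nat.cast_injective (R := ℤ)).tsum_eq]
  · refine tsum_congr fun n => ?_
    rw [qPochInf_two_mul_mul_add_one hℓ₀]
    ring
  · intro r hr
    by_contra hneg
    have hr₀ : r < 0 := not_le.1 fun h => hneg ⟨r.toNat, Int.toNat_of_nonneg h⟩
    obtain ⟨m, rfl⟩ : ∃ m : ℕ, r = -1 - m := ⟨(-1 - r).toNat, by omega⟩
    refine hr ?_
    simp only
    rw [show 2 * ℓ * ((-1 - m : ℤ) + 1) = -(2 * ℓ * m) by ring, qPochInf_neg hℓ₀, mul_zero]

/-- Jacobi's triple product identity. -/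
theorem theta_eq_mul_qPochInf (h₀ : 0 < a) (hℓ : a < 2 * ℓ) :
    theta ℓ a = qPochInf ℓ (2 * ℓ) * qPochInf ℓ a * qPochInf ℓ (2 * ℓ - a) := by
  have hinv := invQPochInf_mul_qPochInf (ℓ := ℓ) (by omega) (show 0 < 2 * ℓ - a by omega)
  linear_combination qPochInf ℓ (2 * ℓ - a) * theta_mul_invQPochInf h₀ hℓ - theta ℓ a * hinv

theorem theta_ne_zero (h₀ : 0 < a) (hℓ : a < 2 * ℓ) : theta ℓ a ≠ 0 := by
  have hℓ₀ : 0 < ℓ := by omega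
  rw [theta_eq_mul_qPochInf h₀ hℓ]
  exact mul_ne_zero (mul_ne_zero (qPochInf_ne_zero hℓ₀ (by positivity)) (qPochInf_ne_zero hℓ₀ h₀))
    (qPochInf_ne_zero hℓ₀ (by omega))

end Pochhammer

section AppellQuotients

variable {ℓ b c y : ℤ}

/-- The partial theta function `∑ (-1)ⁿ q ^ (ℓ n (n - 1) + a n)` over `n ≥ 0`. -/
noncomputable def partialTheta (ℓ a : ℤ) : ℚ⸨X⸩ := ∑' n : ℕ, altQ n (thetaExp ℓ a n)

/-- The quotient of `partialTheta ℓ (b + 2 * ℓ * k)` by `(q ^ (2 ℓ), q ^ b; q ^ (2 ℓ))_∞`, in a form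
showing that its coefficients are nonnegative. -/
noncomputable def partialThetaQuot (ℓ b : ℤ) (k : ℕ) : ℚ⸨X⸩ :=
  ∑' n : ℕ, q (2 * ℓ * n) * invQPoch ℓ (2 * ℓ) n * invQPoch ℓ b (k + n)

theorem summable_partialThetaQuot (hℓ : 0 < ℓ) (hb : 0 < b) (k : ℕ) :
    Summable fun n : ℕ => q (2 * ℓ * n) * invQPoch ℓ (2 * ℓ) n * invQPoch ℓ b (k + n) :=
  summable_nat_of_orderGE fun n =>
    (((orderGE_q _).mono (by nlinarith)).mul_right
      (orderGE_invQPoch hℓ (by positivity) n)).mul_right (orderGE_invQPoch hℓ hb _)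

theorem orderGE_partialThetaQuot (hℓ : 0 < ℓ) (hb : 0 < b) (k : ℕ) :
    OrderGE 0 (partialThetaQuot ℓ b k) :=
  .tsum fun n => (((orderGE_q _).mono (by positivity)).mul_right
    (orderGE_invQPoch hℓ (by positivity) n)).mul_right (orderGE_invQPoch hℓ hb _)

theorem one_le_partialThetaQuot (hℓ : 0 < ℓ) (hb : 0 < b) (k : ℕ) :
    CoeffLE (q 0) (partialThetaQuot ℓ b k) := by
  have hterm : ∀ n : ℕ,
      CoeffLE (q (2 * ℓ * n)) (q (2 * ℓ * n) * invQPoch ℓ (2 * ℓ) n * invQPoch ℓ b (k + n)) :=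
    fun n => ((CoeffLE.refl _).q_le_mul (one_le_invQPoch hℓ (by positivity) n)).q_le_mul
      (one_le_invQPoch hℓ hb _)
  exact .le_tsum (summable_partialThetaQuot hℓ hb k) (fun n => (hterm n).nonneg) 0
    (by simpa using hterm 0)

/-- The general term of the double series obtained from `partialTheta ℓ a` by multiplying its
`r`-th term with `1 = (q ^ (2 ℓ (r + 1)))_∞ / (q ^ (2 ℓ (r + 1)))_∞` and expanding the
denominator. -/
noncomputable def partialThetaTerm (ℓ a : ℤ) (r n : ℕ) : ℚ⸨X⸩ :=
  altQ r (thetaExp ℓ a r) *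
    (q (2 * ℓ * (r + 1) * n) * invQPoch ℓ (2 * ℓ) n * invQPoch ℓ (2 * ℓ) r)

theorem summable_partialThetaTerm (hℓ : 0 < ℓ) (a : ℤ) :
    Summable (Function.uncurry (partialThetaTerm ℓ a)) := by
  refine summable_of_abs_add_abs_le (Nat.cast_injective.prodMap Nat.cast_injective) (a ^ 2 + 2)
    fun p => ?_
  have hexp := abs_le_thetaExp_add hℓ a p.1
  have hinv := fun n => orderGE_invQPoch hℓ (show 0 < 2 * ℓ by positivity) n
  refine ((orderGE_altQ _ _).mul (((orderGE_q _).mul_right (hinv _)).mul_right (hinv _))).mono ?_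
  have hn : (p.2 : ℤ) ≤ 2 * ℓ * (p.1 + 1) * p.2 :=
    le_mul_of_one_le_left (by positivity) (by nlinarith)
  simp only [Prod.map, Nat.abs_cast] at *
  linarith

theorem partialTheta_eq_mul_tsum (hℓ : 0 < ℓ) (a : ℤ) :
    partialTheta ℓ a = qPochInf ℓ (2 * ℓ) * ∑' r : ℕ, ∑' n : ℕ, partialThetaTerm ℓ a r n := by
  rw [← tsum_mul_left, partialTheta]
  refine tsum_congr fun r => ?_
  have hone := invQPochInf_mul_qPochInf hℓ (show 0 < 2 * ℓ * ((r : ℤ) + 1) by positivity)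
  rw [qPochInf_two_mul_mul_add_one hℓ, invQPochInf] at hone
  simp only [partialThetaTerm]
  rw [tsum_mul_left, tsum_mul_right]
  linear_combination (-altQ r (thetaExp ℓ a r)) * hone

theorem tsum_tsum_partialThetaTerm (hℓ : 0 < ℓ) (hb : 0 < b) (k : ℕ) :
    ∑' r : ℕ, ∑' n : ℕ, partialThetaTerm ℓ (b + 2 * ℓ * k) r n =
      qPochInf ℓ b * partialThetaQuot ℓ b k := by
  rw [← (summable_partialThetaTerm hℓ _).tsum_comm, partialThetaQuot, ← tsum_mul_left]
  refine tsum_congr fun n => ?_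
  rw [mul_left_comm, ← qPochInf_add_mul hℓ hb, qPochInf, ← tsum_mul_left]
  refine tsum_congr fun r => ?_
  have hexp : q (2 * ℓ * n) * altQ r (thetaExp ℓ (b + 2 * ℓ * ((k + n : ℕ) : ℤ)) r) =
      q (2 * ℓ * (r + 1) * n) * altQ r (thetaExp ℓ (b + 2 * ℓ * k) r) := by
    rw [q_mul_altQ, q_mul_altQ]
    congr 1
    unfold thetaExp
    push_cast
    ring
  rw [partialThetaTerm]
  linear_combination (-invQPoch ℓ (2 * ℓ) n * invQPoch ℓ (2 * ℓ) r) * hexp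

theorem partialTheta_eq_mul_partialThetaQuot (hℓ : 0 < ℓ) (hb : 0 < b) (k : ℕ) :
    partialTheta ℓ (b + 2 * ℓ * k) =
      qPochInf ℓ (2 * ℓ) * qPochInf ℓ b * partialThetaQuot ℓ b k := by
  rw [partialTheta_eq_mul_tsum hℓ, tsum_tsum_partialThetaTerm hℓ hb, mul_assoc]

/-- The part of the double series `appell ℓ c b` in which both indices are nonnegative. -/
noncomputable def halfAppell (ℓ c b : ℤ) : ℚ⸨X⸩ :=
  ∑' k : ℕ, q (c * k) * partialTheta ℓ (b + 2 * ℓ * k)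

theorem hasSum_halfAppell (hℓ : 0 < ℓ) (hc : 0 < c) (b : ℤ) :
    HasSum (fun p : ℕ × ℕ => altQ p.1 (thetaExp ℓ b p.1 + p.2 * (c + 2 * ℓ * p.1)))
      (halfAppell ℓ c b) := by
  have hs : Summable fun p : ℕ × ℕ => altQ p.1 (thetaExp ℓ b p.1 + p.2 * (c + 2 * ℓ * p.1)) := by
    refine summable_of_abs_add_abs_le (Nat.cast_injective.prodMap Nat.cast_injective) (b ^ 2 + 2)
      fun p => (orderGE_altQ _ _).mono ?_
    have hexp := abs_le_thetaExp_add hℓ b p.1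
    have hk : (p.2 : ℤ) ≤ p.2 * (c + 2 * ℓ * p.1) :=
      le_mul_of_one_le_right (by positivity) (by nlinarith [mul_nonneg hℓ.le p.1.cast_nonneg])
    simp only [Prod.map, Nat.abs_cast] at *
    linarith
  convert hs.hasSum using 1
  refine Eq.trans ?_ ((Equiv.prodComm ℕ ℕ).tsum_eq _)
  refine Eq.trans ?_ ((Equiv.prodComm ℕ ℕ).summable_iff.2 hs).tsum_prod.symm
  refine tsum_congr fun k => ?_
  rw [partialTheta, ← tsum_mul_left]
  refine tsum_congr fun n => ?_
  simp only [q_mul_altQ, Function.comp, Equiv.prodComm_apply, Prod.swap]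
  congr 1
  unfold thetaExp
  ring

theorem appell_eq_halfAppell_add (hc : 0 < c) (hcℓ : c < 2 * ℓ) (b : ℤ) :
    appell ℓ c b = halfAppell ℓ c b + q (4 * ℓ - b - c) * halfAppell ℓ (2 * ℓ - c) (6 * ℓ - b) := by
  rw [← sub_neg_eq_add]
  refine (hasSum_coneSign_mul
    (f := fun p : ℤ × ℤ => altQ p.1 (thetaExp ℓ b p.1 + p.2 * (c + 2 * ℓ * p.1)))
    (hasSum_halfAppell (by omega) hc b)
    (((hasSum_halfAppell (by omega) (by omega : 0 < 2 * ℓ - c) _).mul_left _).neg.congr_fun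
      fun p => ?_)).tsum_eq
  exact altQ_thetaExp_neg_one_sub ℓ c b p.1 p.2

/-- The quotient of `halfAppell ℓ c (b + 2 * ℓ * m)` by `(q ^ (2 ℓ), q ^ b; q ^ (2 ℓ))_∞`. -/
noncomputable def halfAppellQuot (ℓ c b : ℤ) (m : ℕ) : ℚ⸨X⸩ :=
  ∑' k : ℕ, q (c * k) * partialThetaQuot ℓ b (k + m)

theorem summable_halfAppellQuot (hℓ : 0 < ℓ) (hc : 0 < c) (hb : 0 < b) (m : ℕ) :
    Summable fun k : ℕ => q (c * k) * partialThetaQuot ℓ b (k + m) :=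
  summable_nat_of_orderGE fun k =>
    ((orderGE_q _).mono (le_mul_of_one_le_left (Int.natCast_nonneg k) hc)).mul_right
      (orderGE_partialThetaQuot hℓ hb _)

theorem q_le_halfAppellQuot (hℓ : 0 < ℓ) (hc : 0 < c) (hb : 0 < b) (m k : ℕ) :
    CoeffLE (q (c * k)) (halfAppellQuot ℓ c b m) :=
  .le_tsum (summable_halfAppellQuot hℓ hc hb m)
    (fun _ => (q_nonneg _).mul_nonneg (one_le_partialThetaQuot hℓ hb _).nonneg) k
    ((CoeffLE.refl _).q_le_mul (one_le_partialThetaQuot hℓ hb _))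

theorem halfAppellQuot_nonneg (hℓ : 0 < ℓ) (hc : 0 < c) (hb : 0 < b) (m : ℕ) :
    CoeffLE 0 (halfAppellQuot ℓ c b m) :=
  (q_le_halfAppellQuot hℓ hc hb m 0).nonneg

theorem halfAppell_eq_mul_halfAppellQuot (hℓ : 0 < ℓ) (c : ℤ) (hb : 0 < b) (m : ℕ) :
    halfAppell ℓ c (b + 2 * ℓ * m) =
      qPochInf ℓ (2 * ℓ) * qPochInf ℓ b * halfAppellQuot ℓ c b m := by
  rw [halfAppell, halfAppellQuot, ← tsum_mul_left]
  refine tsum_congr fun k => ?_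
  rw [mul_left_comm, ← partialTheta_eq_mul_partialThetaQuot hℓ hb, Nat.cast_add, mul_add,
    add_assoc, add_comm (2 * ℓ * (m : ℤ))]

theorem appell_div_theta (hc : 0 < c) (hcℓ : c < 2 * ℓ) (hb : 0 < b) (hbℓ : b < 2 * ℓ) :
    appell ℓ c b / theta ℓ b = invQPochInf ℓ (2 * ℓ - b) * halfAppellQuot ℓ c b 0 +
      q (4 * ℓ - b - c) * (invQPochInf ℓ b * halfAppellQuot ℓ (2 * ℓ - c) (2 * ℓ - b) 2) := by
  have hℓ : 0 < ℓ := by omega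
  have hb' : 0 < 2 * ℓ - b := by omega
  have hpos := halfAppell_eq_mul_halfAppellQuot hℓ c hb 0
  have hneg := halfAppell_eq_mul_halfAppellQuot hℓ (2 * ℓ - c) hb' 2
  rw [Nat.cast_zero, mul_zero, add_zero] at hpos
  rw [show 2 * ℓ - b + 2 * ℓ * (2 : ℕ) = 6 * ℓ - b by push_cast; ring] at hneg
  rw [div_eq_iff (theta_ne_zero hb hbℓ), appell_eq_halfAppell_add hc hcℓ, hpos, hneg,
    theta_eq_mul_qPochInf hb hbℓ]
  linear_combination
    (-qPochInf ℓ (2 * ℓ) * qPochInf ℓ b * halfAppellQuot ℓ c b 0) *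
      invQPochInf_mul_qPochInf hℓ hb' +
    (-q (4 * ℓ - b - c) * qPochInf ℓ (2 * ℓ) * qPochInf ℓ (2 * ℓ - b) *
      halfAppellQuot ℓ (2 * ℓ - c) (2 * ℓ - b) 2) * invQPochInf_mul_qPochInf hℓ hb

theorem q_le_appell_div_theta (hc : 0 < c) (hcℓ : c < 2 * ℓ) (hb : 0 < b) (hbℓ : b < 2 * ℓ)
    (k l : ℕ) : CoeffLE (q ((2 * ℓ - b) * l + c * k)) (appell ℓ c b / theta ℓ b) := by
  have hℓ : 0 < ℓ := by omega
  have hb' : 0 < 2 * ℓ - b := by omega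
  rw [appell_div_theta hc hcℓ hb hbℓ]
  exact ((q_le_invQPochInf hℓ hb' l).q_add_le_mul
    (q_le_halfAppellQuot hℓ hc hb 0 k)).add_nonneg_right
      ((q_nonneg _).mul_nonneg ((one_le_invQPochInf hℓ hb).nonneg.mul_nonneg
        (halfAppellQuot_nonneg hℓ (by omega) hb' 2)))

theorem appell_two_mul_div_sq (hc : 0 < c) (hcℓ : c < 2 * ℓ) :
    appell ℓ c (2 * ℓ) / qPochInf ℓ (2 * ℓ) ^ 2 =
      halfAppellQuot ℓ c (2 * ℓ) 0 + q (2 * ℓ - c) * halfAppellQuot ℓ (2 * ℓ - c) (2 * ℓ) 1 := by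
  have hℓ : 0 < ℓ := by omega
  have h₂ℓ : 0 < 2 * ℓ := by omega
  have hpos := halfAppell_eq_mul_halfAppellQuot hℓ c h₂ℓ 0
  have hneg := halfAppell_eq_mul_halfAppellQuot hℓ (2 * ℓ - c) h₂ℓ 1
  rw [Nat.cast_zero, mul_zero, add_zero] at hpos
  rw [Nat.cast_one, mul_one] at hneg
  rw [div_eq_iff (pow_ne_zero 2 (qPochInf_ne_zero hℓ h₂ℓ)), appell_eq_halfAppell_add hc hcℓ,
    show 6 * ℓ - 2 * ℓ = 2 * ℓ + 2 * ℓ by ring, show 4 * ℓ - 2 * ℓ - c = 2 * ℓ - c by ring, hpos,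
    hneg]
  ring

theorem q_le_appell_two_mul_div_sq (hc : 0 < c) (hcℓ : c < 2 * ℓ) (k : ℕ) :
    CoeffLE (q (c * k)) (appell ℓ c (2 * ℓ) / qPochInf ℓ (2 * ℓ) ^ 2) := by
  have hℓ : 0 < ℓ := by omega
  rw [appell_two_mul_div_sq hc hcℓ]
  exact (q_le_halfAppellQuot hℓ hc (by omega) 0 k).add_nonneg_right
    ((q_nonneg _).mul_nonneg (halfAppellQuot_nonneg hℓ (by omega) (by omega) 1))

end AppellQuotients

section QBinomial

variable {ℓ b y : ℤ}

/-- The `q`-binomial series in `q ^ b`, divided by `(q ^ y; q ^ (2 ℓ))_∞`. -/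
noncomputable def qBinomialSum (ℓ y b : ℤ) : ℚ⸨X⸩ :=
  ∑' m : ℕ, q (b * m) * invQPochInf ℓ (y + 2 * ℓ * m) * invQPoch ℓ (2 * ℓ) m

theorem orderGE_qBinomialSum_term (hℓ : 0 < ℓ) (hy : 0 < y) (b : ℤ) (m : ℕ) :
    OrderGE (b * m) (q (b * m) * invQPochInf ℓ (y + 2 * ℓ * m) * invQPoch ℓ (2 * ℓ) m) :=
  ((orderGE_q _).mul_right (orderGE_invQPochInf hℓ (by positivity))).mul_right
    (orderGE_invQPoch hℓ (by positivity) m)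

theorem summable_qBinomialSum (hℓ : 0 < ℓ) (hy : 0 < y) (hb : 0 < b) :
    Summable fun m : ℕ => q (b * m) * invQPochInf ℓ (y + 2 * ℓ * m) * invQPoch ℓ (2 * ℓ) m :=
  summable_nat_of_orderGE fun m => (orderGE_qBinomialSum_term hℓ hy b m).mono
    (le_mul_of_one_le_left (Int.natCast_nonneg m) hb)

theorem one_le_qBinomialSum (hℓ : 0 < ℓ) (hy : 0 < y) (hb : 0 < b) :
    CoeffLE (q 0) (qBinomialSum ℓ y b) := by
  have hterm : ∀ m : ℕ, CoeffLE (q (b * m))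
      (q (b * m) * invQPochInf ℓ (y + 2 * ℓ * m) * invQPoch ℓ (2 * ℓ) m) := fun m =>
    ((CoeffLE.refl _).q_le_mul (one_le_invQPochInf hℓ (by positivity))).q_le_mul
      (one_le_invQPoch hℓ (by positivity) m)
  exact .le_tsum (summable_qBinomialSum hℓ hy hb) (fun m => (hterm m).nonneg) 0
    (by simpa using hterm 0)

theorem qBinomialSum_mul_one_sub_q (hℓ : 0 < ℓ) (hy : 0 < y) (hb : 0 < b) :
    qBinomialSum ℓ y b * (1 - q b) = (1 - q (y + b)) * qBinomialSum ℓ y (b + 2 * ℓ) := by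
  have hs := summable_qBinomialSum hℓ hy hb
  have hs' := summable_qBinomialSum hℓ hy (show 0 < b + 2 * ℓ by positivity)
  suffices h : qBinomialSum ℓ y b - qBinomialSum ℓ y (b + 2 * ℓ) =
      q b * (qBinomialSum ℓ y b - q y * qBinomialSum ℓ y (b + 2 * ℓ)) by
    rw [q_add]
    linear_combination h
  simp only [qBinomialSum]
  rw [← tsum_mul_left (a := q y), ← hs.tsum_sub hs', ← hs.tsum_sub (hs'.mul_left _),
    (hs.sub hs').tsum_eq_zero_add, ← tsum_mul_left]
  simp only [Nat.cast_zero, mul_zero, sub_self, zero_add]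
  refine tsum_congr fun m => ?_
  have hstep := invQPochInf_mul_one_sub_q hℓ (show 0 < y + 2 * ℓ * m by positivity)
  rw [← invQPoch_succ_mul hℓ m, Nat.cast_succ,
    show (b + 2 * ℓ) * ((m : ℤ) + 1) = b + b * m + 2 * ℓ * (m + 1) by ring,
    show b * ((m : ℤ) + 1) = b + b * m by ring,
    show y + 2 * ℓ * ((m : ℤ) + 1) = y + 2 * ℓ * m + 2 * ℓ by ring, ← hstep, add_mul b]
  simp only [q_add]
  ring

theorem orderGE_qBinomialSum_mul_qPochInf_sub_one (hℓ : 0 < ℓ) (hy : 0 < y) (hb : 0 < b) :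
    OrderGE b (qBinomialSum ℓ y b * qPochInf ℓ y - 1) := by
  rw [qBinomialSum, ← tsum_mul_right]
  refine .tsum_nat_sub_one ((summable_qBinomialSum hℓ hy hb).mul_right _) ?_ fun m => ?_
  · simp [q_zero, invQPoch_zero, invQPochInf_mul_qPochInf hℓ hy]
  · refine ((orderGE_qBinomialSum_term hℓ hy b _).mono ?_).mul_right (orderGE_qPochInf hℓ hy)
    exact le_mul_of_one_le_right hb.le (by simp)

/-- The `q`-binomial theorem. -/
theorem qBinomialSum_eq (hℓ : 0 < ℓ) (hy : 0 < y) (hb : 0 < b) :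
    qBinomialSum ℓ y b = invQPochInf ℓ y * invQPochInf ℓ b * qPochInf ℓ (y + b) := by
  have hone : qBinomialSum ℓ y b * qPochInf ℓ y * (qPochInf ℓ b * invQPochInf ℓ (y + b)) = 1 := by
    refine eq_one_of_forall_add_eq (d := 2 * ℓ) (f := fun b =>
      qBinomialSum ℓ y b * qPochInf ℓ y * (qPochInf ℓ b * invQPochInf ℓ (y + b)))
      (by positivity) (fun b hb => ?_) (fun b hb => ?_) hb
    · have hstep := qBinomialSum_mul_one_sub_q hℓ hy hb
      rw [← add_assoc, ← invQPochInf_mul_one_sub_q hℓ (show 0 < y + b by positivity),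
        qPochInf_eq_one_sub_q_mul hℓ b]
      linear_combination qPochInf ℓ y * qPochInf ℓ (b + 2 * ℓ) * invQPochInf ℓ (y + b) * hstep
    · exact .mul_sub_one hb.le (orderGE_qBinomialSum_mul_qPochInf_sub_one hℓ hy hb)
        (.mul_sub_one hb.le (orderGE_qPochInf_sub_one hℓ hb)
          ((orderGE_invQPochInf_sub_one hℓ (by positivity)).mono (by omega)))
  have hy' := invQPochInf_mul_qPochInf hℓ hy
  have hb' := invQPochInf_mul_qPochInf hℓ hb
  have hyb := invQPochInf_mul_qPochInf hℓ (show 0 < y + b by positivity)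
  calc qBinomialSum ℓ y b
      = qBinomialSum ℓ y b * (invQPochInf ℓ y * qPochInf ℓ y) * (invQPochInf ℓ b * qPochInf ℓ b) *
          (invQPochInf ℓ (y + b) * qPochInf ℓ (y + b)) := by rw [hy', hb', hyb]; ring
    _ = qBinomialSum ℓ y b * qPochInf ℓ y * (qPochInf ℓ b * invQPochInf ℓ (y + b)) *
          (invQPochInf ℓ y * invQPochInf ℓ b * qPochInf ℓ (y + b)) := by ring
    _ = invQPochInf ℓ y * invQPochInf ℓ b * qPochInf ℓ (y + b) := by rw [hone, one_mul]

end QBinomial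

/-! ### Theta and Appell–Lerch identities -/

section Appell

variable {ℓ : ℤ} {b b' c c' s t : ℤ}

/-- The common value of the products `theta ℓ s * appell ℓ s (2 * ℓ)`, see
`theta_mul_appell_two_mul`; in product form it is the cube of `qPochInf ℓ (2 * ℓ)`. -/
noncomputable def appellConst (ℓ : ℤ) : ℚ⸨X⸩ := theta ℓ ℓ * appell ℓ ℓ (2 * ℓ)

theorem kronecker_symm (ℓ s t : ℤ) : kronecker ℓ s t = kronecker ℓ t s := by
  rw [kronecker, kronecker, ← (Equiv.prodComm ℤ ℤ).tsum_eq]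
  refine tsum_congr fun p => ?_
  simp only [kroneckerTerm, Equiv.prodComm_apply, Prod.swap, coneSign_comm p.2]
  ring_nf

theorem theta_add_mul_appell (hs : 0 < s) (hsℓ : s < 2 * ℓ) (ht : 0 < t) (htℓ : t < 2 * ℓ) :
    theta ℓ (s + t) * appell ℓ s (2 * ℓ) = theta ℓ t * kronecker ℓ s t := by
  have hkey := theta_mul_appell_sub_theta_mul_appell (c := 2 * ℓ - t) (b := 2 * ℓ - (s + t))
    (c' := s) (b' := 0) (by ring) (by omega) (by omega) hs hsℓ
  have hshift := appell_sub_q_mul_appell hs hsℓ 0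
  rw [theta_zero, theta_reflect, add_zero, theta_reflect, sub_sub_cancel] at hkey
  rw [theta_zero, zero_add] at hshift
  refine mul_left_cancel₀ (q_ne_zero s) ?_
  linear_combination -hkey - theta ℓ (s + t) * hshift

theorem theta_add_ne_zero (h : theta ℓ s ≠ 0) : theta ℓ (s + 2 * ℓ) ≠ 0 := fun h' =>
  h (by simpa [h'] using q_mul_theta_add ℓ s)

theorem theta_mul_appell_two_mul (hs : 0 < s) (hsℓ : s < 2 * ℓ) :
    theta ℓ s * appell ℓ s (2 * ℓ) = appellConst ℓ := by
  have hℓ : 0 < ℓ := by omega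
  have h₁ := theta_add_mul_appell hs hsℓ hℓ (by omega)
  have h₂ := theta_add_mul_appell hℓ (by omega) hs hsℓ
  rw [kronecker_symm, add_comm] at h₂
  rcases eq_or_ne s ℓ with rfl | hne
  · rfl
  have h₀ : theta ℓ (s + ℓ) ≠ 0 := by
    rcases hne.lt_or_gt with hlt | hgt
    · exact theta_ne_zero (by omega) (by omega)
    · have h := theta_add_ne_zero (theta_ne_zero (ℓ := ℓ) (by omega : 0 < s - ℓ) (by omega))
      rwa [show s - ℓ + 2 * ℓ = s + ℓ by ring] at h
  refine mul_left_cancel₀ h₀ ?_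
  rw [appellConst]
  linear_combination theta ℓ s * h₁ - theta ℓ ℓ * h₂

theorem appellConst_ne_zero (hℓ : 0 < ℓ) : appellConst ℓ ≠ 0 := by
  have h := (q_le_appell_two_mul_div_sq hℓ (by omega : ℓ < 2 * ℓ) 0).ne_zero
  exact mul_ne_zero (theta_ne_zero hℓ (by omega)) (div_ne_zero_iff.1 h).1

theorem theta_mul_appell_sub_eq_appellConst (h : c - b = c' - b') (hc : 0 < c) (hcℓ : c < 2 * ℓ)
    (hc' : 0 < c') (hc'ℓ : c' < 2 * ℓ) :
    theta ℓ c * theta ℓ c' * (theta ℓ b' * appell ℓ c b - theta ℓ b * appell ℓ c' b') =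
      -(q c' * theta ℓ (c + b') * theta ℓ (c - c') * appellConst ℓ) := by
  have hkron := theta_add_mul_appell hc' hc'ℓ (by omega : 0 < 2 * ℓ - c) (by omega)
  rw [theta_reflect, show c' + (2 * ℓ - c) = 2 * ℓ - (c - c') by ring, theta_reflect] at hkron
  rw [theta_mul_appell_sub_theta_mul_appell h hc hcℓ hc' hc'ℓ,
    ← theta_mul_appell_two_mul hc' hc'ℓ]
  linear_combination (q c' * theta ℓ (c + b') * theta ℓ c') * hkron

/-- The three-term relation for theta functions. -/
theorem weierstrass {c₁ c₂ c₃ : ℤ} (a : ℤ) (h₁ : 0 < c₁) (h₁ℓ : c₁ < 2 * ℓ) (h₂ : 0 < c₂)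
    (h₂ℓ : c₂ < 2 * ℓ) (h₃ : 0 < c₃) (h₃ℓ : c₃ < 2 * ℓ) :
    q c₂ * theta ℓ (c₁ + (c₂ + a)) * theta ℓ (c₁ - c₂) * theta ℓ c₃ * theta ℓ (c₃ + a) +
      q c₃ * theta ℓ (c₂ + (c₃ + a)) * theta ℓ (c₂ - c₃) * theta ℓ c₁ * theta ℓ (c₁ + a) +
      q c₁ * theta ℓ (c₃ + (c₁ + a)) * theta ℓ (c₃ - c₁) * theta ℓ c₂ * theta ℓ (c₂ + a) = 0 := by
  have h₁₂ := theta_mul_appell_sub_eq_appellConst (c := c₁) (b := c₁ + a) (c' := c₂)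
    (b' := c₂ + a) (by ring) h₁ h₁ℓ h₂ h₂ℓ
  have h₂₃ := theta_mul_appell_sub_eq_appellConst (c := c₂) (b := c₂ + a) (c' := c₃)
    (b' := c₃ + a) (by ring) h₂ h₂ℓ h₃ h₃ℓ
  have h₃₁ := theta_mul_appell_sub_eq_appellConst (c := c₃) (b := c₃ + a) (c' := c₁)
    (b' := c₁ + a) (by ring) h₃ h₃ℓ h₁ h₁ℓ
  refine (mul_eq_zero.1 ?_).resolve_left (appellConst_ne_zero (by omega : 0 < ℓ))
  linear_combination (theta ℓ c₃ * theta ℓ (c₃ + a)) * h₁₂ +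
    (theta ℓ c₁ * theta ℓ (c₁ + a)) * h₂₃ + (theta ℓ c₂ * theta ℓ (c₂ + a)) * h₃₁

end Appell

section Lambert

variable {ℓ : ℤ} {a b b' c c' : ℤ}

/-- The general term of the double series `appellZero ℓ b`. -/
noncomputable def appellZeroTerm (ℓ b : ℤ) (p : ℤ × ℤ) : ℚ⸨X⸩ :=
  if p.1 = 0 then 0 else appellTerm ℓ 0 b p

/-- The Appell–Lerch series `appell ℓ 0 b` with its singular summand `n = 0` left out. -/
noncomputable def appellZero (ℓ b : ℤ) : ℚ⸨X⸩ := ∑' p : ℤ × ℤ, appellZeroTerm ℓ b p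

theorem summable_appellZero (hℓ : 0 < ℓ) (b : ℤ) : Summable (appellZeroTerm ℓ b) := by
  refine summable_of_abs_add_abs_le Function.injective_id (b ^ 2 + 2) fun p => ?_
  have hexp := abs_le_thetaExp_add hℓ b p.1
  rw [appellZeroTerm]
  split_ifs with hp
  · exact .zero _
  refine OrderGE.coneSign_mul (orderGE_altQ _ _) (fun hn hr => ?_) (fun hn hr => ?_)
  · have h : p.2 ≤ p.2 * (0 + 2 * ℓ * p.1) :=
      le_mul_of_one_le_right hr (by nlinarith [show 1 ≤ p.1 by omega])
    simp only [id, abs_of_nonneg hr]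
    linarith
  · have h : -p.2 ≤ p.2 * (0 + 2 * ℓ * p.1) := by
      nlinarith [show 0 + 2 * ℓ * p.1 ≤ -1 by nlinarith]
    simp only [id, abs_of_neg hr]
    linarith

/-- The general term of the double series `kroneckerZero ℓ s`. -/
noncomputable def kroneckerZeroTerm (ℓ s : ℤ) (p : ℤ × ℤ) : ℚ⸨X⸩ :=
  if p.1 = 0 then 0 else kroneckerTerm ℓ s 0 p

/-- Kronecker's double series `kronecker ℓ s 0` with its divergent part `n = 0` left out. -/
noncomputable def kroneckerZero (ℓ s : ℤ) : ℚ⸨X⸩ := ∑' p : ℤ × ℤ, kroneckerZeroTerm ℓ s p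

theorem summable_kroneckerZero (hc : 0 < c) (hcℓ : c < 2 * ℓ) :
    Summable (kroneckerZeroTerm ℓ c) := by
  refine summable_of_abs_add_abs_le Function.injective_id (2 * ℓ) fun p => ?_
  rw [kroneckerZeroTerm]
  split_ifs with hp
  · exact .zero _
  refine OrderGE.coneSign_mul (orderGE_q _) (fun hn hr => ?_) (fun hn hr => ?_)
  · simp only [id, abs_of_nonneg hn, abs_of_nonneg hr]
    nlinarith [mul_nonneg (mul_nonneg (show 0 ≤ 2 * ℓ by omega) hr) (show 0 ≤ p.1 - 1 by omega),
      mul_nonneg (show 0 ≤ 2 * ℓ - 1 by omega) hr, mul_nonneg (show 0 ≤ c - 1 by omega) hn]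
  · simp only [id, abs_of_neg hn, abs_of_neg hr]
    nlinarith [mul_nonneg (mul_nonneg (show 0 ≤ 2 * ℓ by omega) (show 0 ≤ -1 - p.1 by omega))
        (show 0 ≤ -1 - p.2 by omega),
      mul_nonneg (show 0 ≤ 2 * ℓ - c - 1 by omega) (show 0 ≤ -1 - p.1 by omega),
      mul_nonneg (show 0 ≤ 2 * ℓ - 1 by omega) (show 0 ≤ -1 - p.2 by omega)]

/-- The theta series `theta ℓ a` weighted by `n`: its derivative `z ∂/∂z` with respect to the
variable `z = q ^ a`. -/
noncomputable def thetaDeriv (ℓ a : ℤ) : ℚ⸨X⸩ := ∑' n : ℤ, (n : ℚ⸨X⸩) * altQ n (thetaExp ℓ a n)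

theorem summable_thetaDeriv (hℓ : 0 < ℓ) (a : ℤ) :
    Summable fun n : ℤ => (n : ℚ⸨X⸩) * altQ n (thetaExp ℓ a n) :=
  summable_of_abs_add_abs_le (Prod.mk_left_injective (0 : ℤ)) (a ^ 2 + 2) fun n =>
    (OrderGE.intCast n).mul_left
      ((orderGE_altQ _ _).mono (by simpa using abs_le_thetaExp_add hℓ a n))

theorem q_mul_thetaDeriv_add (hℓ : 0 < ℓ) (a : ℤ) :
    q a * thetaDeriv ℓ (a + 2 * ℓ) = theta ℓ a - thetaDeriv ℓ a := by
  rw [theta, thetaDeriv, thetaDeriv, ← (summable_theta hℓ a).tsum_sub (summable_thetaDeriv hℓ a),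
    ← tsum_mul_left, ← (Equiv.addRight (-1 : ℤ)).tsum_eq]
  refine tsum_congr fun n => ?_
  have hterm : altQ (n + -1) (a + thetaExp ℓ (a + 2 * ℓ) (n + -1)) = -altQ n (thetaExp ℓ a n) :=
    altQ_eq_neg ⟨-1, by ring⟩ (by unfold thetaExp; ring)
  rw [mul_left_comm, q_mul_altQ, Equiv.coe_addRight, hterm]
  push_cast
  ring

theorem thetaDeriv_reflect (ℓ a : ℤ) : thetaDeriv ℓ (2 * ℓ - a) = -thetaDeriv ℓ a := by
  rw [thetaDeriv, thetaDeriv, ← (Equiv.neg ℤ).tsum_eq, ← tsum_neg]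
  refine tsum_congr fun n => ?_
  have hterm : altQ (-n) (thetaExp ℓ (2 * ℓ - a) (-n)) = altQ n (thetaExp ℓ a n) :=
    altQ_congr ⟨-n, by ring⟩ (by unfold thetaExp; ring)
  rw [Equiv.neg_apply, hterm, Int.cast_neg, neg_mul]

theorem thetaDeriv_self (ℓ : ℤ) : thetaDeriv ℓ ℓ = 0 := by
  have h := thetaDeriv_reflect ℓ ℓ
  rwa [two_mul, add_sub_cancel_right, self_eq_neg] at h

/-- The logarithmic derivative `z ∂/∂z` of `theta ℓ a` with respect to the variable
`z = q ^ a`. -/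
noncomputable def thetaLogDeriv (ℓ a : ℤ) : ℚ⸨X⸩ := thetaDeriv ℓ a / theta ℓ a

theorem thetaLogDeriv_add (hℓ : 0 < ℓ) (h : theta ℓ a ≠ 0) :
    thetaLogDeriv ℓ (a + 2 * ℓ) = thetaLogDeriv ℓ a - 1 := by
  rw [thetaLogDeriv, thetaLogDeriv, div_sub_one h, div_eq_div_iff (theta_add_ne_zero h) h]
  refine mul_left_cancel₀ (q_ne_zero a) ?_
  linear_combination theta ℓ a * q_mul_thetaDeriv_add hℓ a -
    (thetaDeriv ℓ a - theta ℓ a) * q_mul_theta_add ℓ a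

theorem thetaLogDeriv_reflect (ℓ a : ℤ) :
    thetaLogDeriv ℓ (2 * ℓ - a) = -thetaLogDeriv ℓ a := by
  rw [thetaLogDeriv, thetaDeriv_reflect, theta_reflect, thetaLogDeriv]
  ring

theorem hasSum_coneSign_sub (m : ℤ) :
    HasSum (fun r : ℤ => (coneSign (m - r) r : ℚ⸨X⸩)) (m + 1) := by
  have hfibre : ∀ k : ℤ, HasSum (fun r : ℤ => if r = k then (1 : ℚ⸨X⸩) else 0) 1 := fun k =>
    hasSum_ite_eq k 1
  have hstep : ∀ k r : ℤ,
      (coneSign (k - r) r : ℚ⸨X⸩) = coneSign (k - 1 - r) r + if r = k then 1 else 0 := by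
    intro k r
    have h : coneSign (k - r) r = coneSign (k - 1 - r) r + if r = k then 1 else 0 := by
      unfold coneSign
      split_ifs <;> omega
    rw [h]
    push_cast
    rfl
  induction m using Int.inductionOn' (b := -1) with
  | zero =>
    have h : ∀ r : ℤ, coneSign (-1 - r) r = 0 := fun r => by
      unfold coneSign
      split_ifs <;> omega
    simp [h]
  | succ k _ ih =>
    have h := (ih.add (hfibre (k + 1))).congr_fun fun r => by
      simpa using hstep (k + 1) r
    simpa using h
  | pred k _ ih =>
    have h := (ih.sub (hfibre k)).congr_fun fun r => eq_sub_of_add_eq (hstep k r).symm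
    simpa using h

theorem hasSum_theta_mul_appellZero (hℓ : 0 < ℓ) (b b' : ℤ) :
    HasSum (fun p : ℤ × ℤ × ℤ =>
        if p.1 = p.2.2 then 0 else coneSign (p.1 - p.2.2) p.2.2 * tripleTerm ℓ b b' (-b) p)
      (theta ℓ b' * appellZero ℓ b) := by
  let e : ℤ × ℤ × ℤ ≃ ℤ × ℤ × ℤ :=
    { toFun p := (p.2.1, p.1 - p.2.2, p.2.2)
      invFun p := (p.2.1 + p.2.2, p.1, p.2.2)
      left_inv p := by simp
      right_inv p := by simp }
  refine (e.hasSum_iff.2 ((summable_theta hℓ b').hasSum.mul_of_nonarchimedean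
    (summable_appellZero hℓ b).hasSum)).congr_fun fun ⟨N, m, r⟩ => ?_
  simp only [e, Function.comp, Equiv.coe_fn_mk, appellZeroTerm, appellTerm, tripleTerm,
    sub_eq_zero, mul_ite, mul_zero]
  rw [mul_left_comm (altQ _ _), altQ_mul]
  exact if_congr Iff.rfl rfl
    (congrArg _ (altQ_congr ⟨0, by ring⟩ (by unfold thetaExp; ring)))

theorem hasSum_theta_mul_kroneckerZero (b : ℤ) (hc : 0 < c) (hcℓ : c < 2 * ℓ) :
    HasSum (fun p : ℤ × ℤ × ℤ => if p.1 = p.2.2 then 0 else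
        coneSign (p.2.2 - p.1) (p.2.1 - p.2.2) * tripleTerm ℓ b (b + c) (-b) p)
      (theta ℓ (b + c) * kroneckerZero ℓ c) := by
  let e : ℤ × ℤ × ℤ ≃ ℤ × ℤ × ℤ :=
    { toFun p := (p.2.1 + p.1 - p.2.2, p.2.2 - p.1, p.2.1 - p.2.2)
      invFun p := (p.1 - p.2.2, p.1 + p.2.1, p.1 - p.2.2 + p.2.1)
      left_inv p := by simp
      right_inv p := Prod.ext (by simp; ring) (by simp) }
  refine (e.hasSum_iff.2 ((summable_theta (by omega) (b + c)).hasSum.mul_of_nonarchimedean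
    (summable_kroneckerZero hc hcℓ).hasSum)).congr_fun fun ⟨N, m, r⟩ => ?_
  simp only [e, Function.comp, Equiv.coe_fn_mk, kroneckerZeroTerm, kroneckerTerm, tripleTerm,
    sub_eq_zero, mul_ite, mul_zero]
  rw [mul_left_comm (altQ _ _), ← altQ_zero (_ + _), altQ_mul]
  exact if_congr eq_comm rfl
    (congrArg _ (altQ_congr ⟨0, by ring⟩ (by unfold thetaExp; ring)))

theorem tripleTerm_diag (ℓ b b' m r : ℤ) :
    tripleTerm ℓ b b' (-b) (r, m, r) = altQ m (thetaExp ℓ b' m) :=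
  altQ_congr ⟨0, by ring⟩ (by unfold thetaExp; ring)

/-- Off the plane `N = r` the three triple series cancel as in
`theta_mul_appell_sub_theta_mul_appell`; the plane itself contributes the right-hand side. -/
theorem theta_mul_appellZero_sub (b : ℤ) (hc : 0 < c) (hcℓ : c < 2 * ℓ) :
    theta ℓ (b + c) * appellZero ℓ b - theta ℓ b * appell ℓ c (b + c) +
        theta ℓ (b + c) * kroneckerZero ℓ c =
      -(thetaDeriv ℓ (b + c) + theta ℓ (b + c)) := by
  have hℓ : 0 < ℓ := by omega
  have hdiag : HasSum (fun p : ℤ × ℤ × ℤ => if p.1 = p.2.2 then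
      -(coneSign (p.2.1 - p.2.2) p.2.2 * altQ p.2.1 (thetaExp ℓ (b + c) p.2.1)) else 0)
      (theta ℓ (b + c) * appellZero ℓ b - theta ℓ b * appell ℓ c (b + c) +
        theta ℓ (b + c) * kroneckerZero ℓ c) := by
    refine (((hasSum_theta_mul_appellZero hℓ b (b + c)).sub
      (hasSum_theta_mul_appell' hc hcℓ (b + c) b)).add
      (hasSum_theta_mul_kroneckerZero b hc hcℓ)).congr_fun fun ⟨N, m, r⟩ => ?_
    simp only [sub_add_cancel_right]
    split_ifs with hN
    · rw [hN, tripleTerm_diag]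
      ring
    · have hsign : coneSign (N - r) r - coneSign (m - r) r + coneSign (r - N) (m - r) = 0 := by
        unfold coneSign
        split_ifs <;> omega
      simp only [← sub_mul, ← add_mul, ← Int.cast_sub, ← Int.cast_add, hsign, Int.cast_zero,
        zero_mul]
  have hinj : Function.Injective fun p : ℤ × ℤ => ((p.2, p) : ℤ × ℤ × ℤ) := fun p p' h =>
    (Prod.mk.inj h).2
  rw [← hinj.hasSum_iff fun p hp => if_neg fun h => hp ⟨p.2, Prod.ext h.symm rfl⟩] at hdiag
  have hfibre := hdiag.prod_fiberwise fun m => by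
    simpa using ((hasSum_coneSign_sub m).mul_right (altQ m (thetaExp ℓ (b + c) m))).neg
  rw [← hfibre.tsum_eq, thetaDeriv, theta,
    ← (summable_thetaDeriv hℓ _).tsum_add (summable_theta hℓ _), ← tsum_neg]
  exact tsum_congr fun m => by ring

theorem kroneckerZero_self (ℓ : ℤ) : kroneckerZero ℓ ℓ = 0 := by
  refine self_eq_neg.1 ?_
  rw [kroneckerZero, ← tsum_neg]
  refine Eq.trans ?_ (((Equiv.neg ℤ).prodCongr (Equiv.subLeft (-1 : ℤ))).tsum_eq _)
  refine tsum_congr fun p => ?_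
  simp only [kroneckerZeroTerm, kroneckerTerm, Equiv.prodCongr_apply, Prod.map,
    Equiv.subLeft_apply, Equiv.neg_apply, neg_eq_zero]
  split_ifs with hp
  · exact neg_zero.symm
  · have hsign : coneSign (-p.1) (-1 - p.2) = -coneSign p.1 p.2 := by
      unfold coneSign
      split_ifs <;> omega
    rw [hsign, Int.cast_neg, neg_mul, neg_neg]
    ring_nf

theorem appellZero_zero (hℓ : 0 < ℓ) : appellZero ℓ 0 = -1 := by
  have h := theta_mul_appellZero_sub 0 hℓ (by omega : ℓ < 2 * ℓ)
  rw [theta_zero, zero_add, thetaDeriv_self, kroneckerZero_self] at h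
  refine mul_left_cancel₀ (theta_ne_zero hℓ (by omega : ℓ < 2 * ℓ)) ?_
  linear_combination h

theorem kroneckerZero_eq_neg_thetaLogDeriv (hc : 0 < c) (hcℓ : c < 2 * ℓ) :
    kroneckerZero ℓ c = -thetaLogDeriv ℓ c := by
  have h := theta_mul_appellZero_sub 0 hc hcℓ
  rw [theta_zero, zero_add, appellZero_zero (by omega)] at h
  have hc₀ := theta_ne_zero hc hcℓ
  rw [thetaLogDeriv]
  field_simp
  linear_combination h

theorem appellZero_sub_div_mul_appell (hc : 0 < c) (hcℓ : c < 2 * ℓ)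
    (hb : theta ℓ (b + c) ≠ 0) :
    appellZero ℓ b - theta ℓ b / theta ℓ (b + c) * appell ℓ c (b + c) =
      thetaLogDeriv ℓ c - thetaLogDeriv ℓ (b + c) - 1 := by
  have h := theta_mul_appellZero_sub b hc hcℓ
  rw [kroneckerZero_eq_neg_thetaLogDeriv hc hcℓ] at h
  have hlog : thetaLogDeriv ℓ (b + c) = thetaDeriv ℓ (b + c) / theta ℓ (b + c) := rfl
  rw [hlog]
  field_simp
  linear_combination h

theorem thetaLogDeriv_sub_add (hc : 0 < c) (hcℓ : c < 2 * ℓ) (hc' : 0 < c') (hc'ℓ : c' < 2 * ℓ)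
    (hb : theta ℓ (b + c) ≠ 0) (hb' : theta ℓ (b + c') ≠ 0) :
    thetaLogDeriv ℓ c - thetaLogDeriv ℓ (b + c) - thetaLogDeriv ℓ c' + thetaLogDeriv ℓ (b + c') =
      -(q c * appellConst ℓ * theta ℓ b * theta ℓ (c' + (b + c)) * theta ℓ (c' - c)) /
        (theta ℓ c' * theta ℓ c * theta ℓ (b + c') * theta ℓ (b + c)) := by
  have h := appellZero_sub_div_mul_appell hc hcℓ hb
  have h' := appellZero_sub_div_mul_appell hc' hc'ℓ hb'
  have hkey := theta_mul_appell_sub_eq_appellConst (c := c') (b := b + c') (c' := c)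
    (b' := b + c) (by ring) hc' hc'ℓ hc hcℓ
  have hc₀ := theta_ne_zero hc hcℓ
  have hc'₀ := theta_ne_zero hc' hc'ℓ
  suffices theta ℓ b / theta ℓ (b + c') * appell ℓ c' (b + c') -
      theta ℓ b / theta ℓ (b + c) * appell ℓ c (b + c) =
        -(q c * appellConst ℓ * theta ℓ b * theta ℓ (c' + (b + c)) * theta ℓ (c' - c)) /
          (theta ℓ c' * theta ℓ c * theta ℓ (b + c') * theta ℓ (b + c)) by
    linear_combination h' - h + this
  rw [eq_div_iff (by simp [*])]
  field_simp
  linear_combination theta ℓ b * hkey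

end Lambert

section ModulusFive

local notation "j" => theta 5

local notation "L" => appell 5

local notation "Λ" => thetaLogDeriv 5

local notation "C₅" => appellConst 5

theorem q_ofNat (n : ℕ) [n.AtLeastTwo] : q ofNat(n) = q 1 ^ (OfNat.ofNat n : ℕ) := by
  rw [q_pow, mul_one, Nat.cast_ofNat]

theorem theta_five_add_ten (a : ℤ) : j (a + 10) = -j a / q a :=
  eq_div_of_mul_eq (q_ne_zero a) (by rw [mul_comm]; exact q_mul_theta_add 5 a)

theorem theta_five_neg (a : ℤ) : j (-a) = -j a / q a :=
  eq_div_of_mul_eq (q_ne_zero a) (by rw [mul_comm]; exact q_mul_theta_neg 5 a)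

theorem theta_five_six : j 6 = j 4 := theta_reflect 5 4

theorem theta_five_seven : j 7 = j 3 := theta_reflect 5 3

theorem theta_five_eight : j 8 = j 2 := theta_reflect 5 2

theorem theta_five_nine : j 9 = j 1 := theta_reflect 5 1

theorem theta_five_eleven : j 11 = -j 1 / q 1 := theta_five_add_ten 1

theorem theta_five_twelve : j 12 = -j 2 / q 2 := theta_five_add_ten 2

theorem theta_five_thirteen : j 13 = -j 3 / q 3 := theta_five_add_ten 3

theorem theta_five_fourteen : j 14 = -j 4 / q 4 := theta_five_add_ten 4

theorem theta_five_fifteen : j 15 = -j 5 / q 5 := theta_five_add_ten 5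

theorem theta_five_sixteen : j 16 = -j 6 / q 6 := theta_five_add_ten 6

theorem theta_five_seventeen : j 17 = -j 7 / q 7 := theta_five_add_ten 7

theorem theta_five_eighteen : j 18 = -j 8 / q 8 := theta_five_add_ten 8

theorem theta_five_nineteen : j 19 = -j 9 / q 9 := theta_five_add_ten 9

theorem theta_five_twenty_one : j 21 = -j 11 / q 11 := theta_five_add_ten 11

theorem theta_five_twenty_two : j 22 = -j 12 / q 12 := theta_five_add_ten 12

theorem theta_five_twenty_three : j 23 = -j 13 / q 13 := theta_five_add_ten 13

theorem theta_five_one_ne_zero : j 1 ≠ 0 := theta_ne_zero (by norm_num) (by norm_num)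

theorem theta_five_two_ne_zero : j 2 ≠ 0 := theta_ne_zero (by norm_num) (by norm_num)

theorem theta_five_three_ne_zero : j 3 ≠ 0 := theta_ne_zero (by norm_num) (by norm_num)

theorem theta_five_four_ne_zero : j 4 ≠ 0 := theta_ne_zero (by norm_num) (by norm_num)

theorem theta_five_five_ne_zero : j 5 ≠ 0 := theta_ne_zero (by norm_num) (by norm_num)

attribute [local simp] theta_five_neg theta_five_six theta_five_seven theta_five_eight
  theta_five_nine theta_five_eleven theta_five_twelve theta_five_thirteen theta_five_fourteen
  theta_five_fifteen theta_five_sixteen theta_five_seventeen theta_five_eighteen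
  theta_five_nineteen theta_five_twenty_one theta_five_twenty_two theta_five_twenty_three q_ofNat
  q_ne_zero theta_five_one_ne_zero theta_five_two_ne_zero theta_five_three_ne_zero
  theta_five_four_ne_zero theta_five_five_ne_zero

theorem appell_five_two_eight :
    L 2 8 = -q 1 ^ 2 * L 6 12 + C₅ * j 4 / j 2 ^ 2 := by
  have h := theta_mul_appell_sub_eq_appellConst (ℓ := 5) (c := 2) (b := 8) (c' := 6) (b' := 12)
    (by norm_num) (by norm_num) (by norm_num) (by norm_num) (by norm_num)
  norm_num at h
  field_simp (disch := simp) at h ⊢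
  linear_combination -h

theorem appell_five_two_thirteen :
    L 2 13 = q 1 ^ 2 * (j 3 / j 5) * L 4 15 + C₅ * j 3 / (j 4 * j 5) := by
  have h := theta_mul_appell_sub_eq_appellConst (ℓ := 5) (c := 2) (b := 13) (c' := 4) (b' := 15)
    (by norm_num) (by norm_num) (by norm_num) (by norm_num) (by norm_num)
  norm_num at h
  field_simp (disch := simp) at h ⊢
  linear_combination -h

theorem appell_five_six_seventeen :
    q 1 ^ 3 * L 6 17 = q 1 * (j 3 / j 5) * L 4 15 + C₅ * j 1 * j 2 / (j 4 ^ 2 * j 5) := by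
  have h := theta_mul_appell_sub_eq_appellConst (ℓ := 5) (c := 6) (b := 17) (c' := 4) (b' := 15)
    (by norm_num) (by norm_num) (by norm_num) (by norm_num) (by norm_num)
  norm_num at h
  field_simp (disch := simp) at h ⊢
  linear_combination -h

theorem appell_five_two_nine :
    L 2 9 = -q 1 ^ 5 * (j 1 / j 5) * L 8 15 + C₅ * j 3 * j 4 / (j 2 ^ 2 * j 5) := by
  have h := theta_mul_appell_sub_eq_appellConst (ℓ := 5) (c := 2) (b := 9) (c' := 8) (b' := 15)
    (by norm_num) (by norm_num) (by norm_num) (by norm_num) (by norm_num)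
  norm_num at h
  field_simp (disch := simp) at h ⊢
  linear_combination -h

theorem appell_five_four_eleven :
    L 4 11 = q 1 ^ 4 * (j 1 / j 5) * L 8 15 + C₅ * j 1 / (j 2 * j 5) := by
  have h := theta_mul_appell_sub_eq_appellConst (ℓ := 5) (c := 4) (b := 11) (c' := 8) (b' := 15)
    (by norm_num) (by norm_num) (by norm_num) (by norm_num) (by norm_num)
  norm_num at h
  field_simp (disch := simp) at h ⊢
  linear_combination -h

theorem appell_five_two_fourteen :
    L 2 14 = q 1 ^ 2 * L 4 16 + C₅ * j 2 / j 4 ^ 2 := by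
  have h := theta_mul_appell_sub_eq_appellConst (ℓ := 5) (c := 2) (b := 14) (c' := 4) (b' := 16)
    (by norm_num) (by norm_num) (by norm_num) (by norm_num) (by norm_num)
  norm_num at h
  field_simp (disch := simp) at h ⊢
  linear_combination -h

theorem appell_five_eight_nineteen :
    q 1 ^ 7 * L 8 19 = q 1 ^ 3 * (j 1 / j 5) * L 4 15 + C₅ * j 3 / (j 2 * j 5) := by
  have h := theta_mul_appell_sub_eq_appellConst (ℓ := 5) (c := 8) (b := 19) (c' := 4) (b' := 15)
    (by norm_num) (by norm_num) (by norm_num) (by norm_num) (by norm_num)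
  norm_num at h
  field_simp (disch := simp) at h ⊢
  linear_combination -h

theorem appell_five_six_thirteen :
    q 1 * L 6 13 = q 1 ^ 3 * (j 3 / j 5) * L 8 15 - C₅ * j 1 / (j 4 * j 5) := by
  have h := theta_mul_appell_sub_eq_appellConst (ℓ := 5) (c := 6) (b := 13) (c' := 8) (b' := 15)
    (by norm_num) (by norm_num) (by norm_num) (by norm_num) (by norm_num)
  norm_num at h
  field_simp (disch := simp) at h ⊢
  linear_combination -h

theorem appell_five_seven_fourteen :
    q 1 ^ 2 * L 7 14 = q 1 ^ 3 * (j 4 / j 5) * L 8 15 - C₅ * j 1 / (j 3 * j 5) := by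
  have h := theta_mul_appell_sub_eq_appellConst (ℓ := 5) (c := 7) (b := 14) (c' := 8) (b' := 15)
    (by norm_num) (by norm_num) (by norm_num) (by norm_num) (by norm_num)
  norm_num at h
  field_simp (disch := simp) at h ⊢
  linear_combination -h

theorem weierstrass_five_one_two_three_four :
    q 1 * j 1 ^ 3 * j 5 + j 1 * j 3 ^ 3 - j 2 ^ 3 * j 4 = 0 := by
  have h := weierstrass (ℓ := 5) (c₁ := 1) (c₂ := 2) (c₃ := 3) 4 (by norm_num) (by norm_num)
    (by norm_num) (by norm_num) (by norm_num) (by norm_num)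
  norm_num at h
  field_simp (disch := simp) at h
  refine mul_left_cancel₀ (q_ne_zero 1) ?_
  linear_combination -h

theorem weierstrass_five_one_two_three_three :
    q 1 * j 1 ^ 2 * j 2 * j 4 + j 1 * j 3 * j 4 ^ 2 - j 2 ^ 2 * j 3 * j 5 = 0 := by
  have h := weierstrass (ℓ := 5) (c₁ := 1) (c₂ := 2) (c₃ := 3) 3 (by norm_num) (by norm_num)
    (by norm_num) (by norm_num) (by norm_num) (by norm_num)
  norm_num at h
  field_simp (disch := simp) at h
  refine mul_left_cancel₀ (q_ne_zero 1) ?_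
  linear_combination -h

theorem weierstrass_five_one_two_three_two :
    q 1 * j 1 ^ 2 * j 3 ^ 2 + j 1 * j 3 * j 5 ^ 2 - j 2 ^ 2 * j 4 ^ 2 = 0 := by
  have h := weierstrass (ℓ := 5) (c₁ := 1) (c₂ := 2) (c₃ := 3) 2 (by norm_num) (by norm_num)
    (by norm_num) (by norm_num) (by norm_num) (by norm_num)
  norm_num at h
  field_simp (disch := simp) at h
  refine mul_left_cancel₀ (q_ne_zero 1) ?_
  linear_combination -h

theorem weierstrass_five_one_two_four_two :
    q 1 * j 1 * j 2 ^ 2 * j 3 + j 1 * j 4 ^ 2 * j 5 - j 2 * j 3 ^ 2 * j 4 = 0 := by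
  have h := weierstrass (ℓ := 5) (c₁ := 1) (c₂ := 2) (c₃ := 4) 2 (by norm_num) (by norm_num)
    (by norm_num) (by norm_num) (by norm_num) (by norm_num)
  norm_num at h
  field_simp (disch := simp) at h
  refine mul_left_cancel₀ (q_ne_zero 1) ?_
  linear_combination -h

theorem appell_five_one_ten : L 1 10 = C₅ / j 1 := by
  have h := theta_mul_appell_two_mul (ℓ := 5) (s := 1) (by norm_num) (by norm_num)
  norm_num at h
  exact eq_div_of_mul_eq (by simp) (by rwa [mul_comm])

theorem appell_five_two_ten : L 2 10 = C₅ / j 2 := by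
  have h := theta_mul_appell_two_mul (ℓ := 5) (s := 2) (by norm_num) (by norm_num)
  norm_num at h
  exact eq_div_of_mul_eq (by simp) (by rwa [mul_comm])

theorem appell_five_four_ten : L 4 10 = C₅ / j 4 := by
  have h := theta_mul_appell_two_mul (ℓ := 5) (s := 4) (by norm_num) (by norm_num)
  norm_num at h
  exact eq_div_of_mul_eq (by simp) (by rwa [mul_comm])

theorem appell_five_eight_ten : L 8 10 = C₅ / j 2 := by
  have h := theta_mul_appell_two_mul (ℓ := 5) (s := 8) (by norm_num) (by norm_num)
  norm_num at h
  exact eq_div_of_mul_eq (by simp) (by rwa [mul_comm])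

theorem thetaLogDeriv_five_five : Λ 5 = 0 :=
  self_eq_neg.1 (thetaLogDeriv_reflect 5 5)

theorem thetaLogDeriv_five_six : Λ 6 = -Λ 4 := thetaLogDeriv_reflect 5 4

theorem thetaLogDeriv_five_seven : Λ 7 = -Λ 3 := thetaLogDeriv_reflect 5 3

theorem thetaLogDeriv_five_eight : Λ 8 = -Λ 2 := thetaLogDeriv_reflect 5 2

theorem thetaLogDeriv_five_nine : Λ 9 = -Λ 1 := thetaLogDeriv_reflect 5 1

theorem thetaLogDeriv_five_add_ten (a : ℤ) (ha : j a ≠ 0) : Λ (a + 10) = Λ a - 1 :=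
  thetaLogDeriv_add (by norm_num) ha

theorem thetaLogDeriv_five_eleven : Λ 11 = Λ 1 - 1 :=
  thetaLogDeriv_five_add_ten 1 (by simp)

theorem thetaLogDeriv_five_twelve : Λ 12 = Λ 2 - 1 :=
  thetaLogDeriv_five_add_ten 2 (by simp)

theorem thetaLogDeriv_five_thirteen : Λ 13 = Λ 3 - 1 :=
  thetaLogDeriv_five_add_ten 3 (by simp)

theorem thetaLogDeriv_five_fourteen : Λ 14 = Λ 4 - 1 :=
  thetaLogDeriv_five_add_ten 4 (by simp)

theorem thetaLogDeriv_five_eighteen : Λ 18 = Λ 8 - 1 :=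
  thetaLogDeriv_five_add_ten 8 (by simp)

theorem thetaLogDeriv_five_nineteen : Λ 19 = Λ 9 - 1 :=
  thetaLogDeriv_five_add_ten 9 (by simp)

attribute [local simp] thetaLogDeriv_five_five thetaLogDeriv_five_six thetaLogDeriv_five_seven
  thetaLogDeriv_five_eight thetaLogDeriv_five_nine thetaLogDeriv_five_eleven
  thetaLogDeriv_five_twelve thetaLogDeriv_five_thirteen thetaLogDeriv_five_fourteen
  thetaLogDeriv_five_eighteen thetaLogDeriv_five_nineteen

theorem thetaLogDeriv_five_one_add_four :
    2 * Λ 1 + 2 * Λ 4 - 1 = -C₅ * j 2 * j 5 ^ 2 / (j 1 ^ 2 * j 4 ^ 2) := by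
  have h := thetaLogDeriv_sub_add (ℓ := 5) (c := 1) (c' := 6) (b := 5) (by norm_num) (by norm_num)
    (by norm_num) (by norm_num) (by norm_num) (by norm_num)
  norm_num at h
  field_simp (disch := simp) at h ⊢
  linear_combination h

theorem thetaLogDeriv_five_two_add_three :
    2 * Λ 2 + 2 * Λ 3 - 1 = -C₅ * j 4 * j 5 ^ 2 / (j 2 ^ 2 * j 3 ^ 2) := by
  have h := thetaLogDeriv_sub_add (ℓ := 5) (c := 2) (c' := 7) (b := 5) (by norm_num) (by norm_num)
    (by norm_num) (by norm_num) (by norm_num) (by norm_num)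
  norm_num at h
  field_simp (disch := simp) at h ⊢
  linear_combination h

theorem thetaLogDeriv_five_one_sub_two_add_three :
    Λ 1 - 2 * Λ 2 + Λ 3 = -C₅ * q 1 * j 1 * j 4 / (j 2 ^ 2 * j 3) := by
  have h := thetaLogDeriv_sub_add (ℓ := 5) (c := 1) (c' := 2) (b := 1) (by norm_num) (by norm_num)
    (by norm_num) (by norm_num) (by norm_num) (by norm_num)
  norm_num at h
  field_simp (disch := simp) at h ⊢
  linear_combination h

theorem thetaLogDeriv_five_one_sub_four_sub_two :
    Λ 1 - Λ 4 - Λ 2 = -C₅ * q 1 * j 3 / (j 2 * j 5) := by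
  have h := thetaLogDeriv_sub_add (ℓ := 5) (c := 1) (c' := 2) (b := 3) (by norm_num) (by norm_num)
    (by norm_num) (by norm_num) (by norm_num) (by norm_num)
  norm_num at h
  field_simp (disch := simp) at h ⊢
  linear_combination h

theorem appellZero_five_six : appellZero 5 6 + q 1 ^ 4 * L 8 14 = -Λ 2 - Λ 4 := by
  have h := appellZero_sub_div_mul_appell (ℓ := 5) (c := 8) (b := 6) (by norm_num) (by norm_num)
    (by norm_num)
  norm_num at h
  field_simp (disch := simp) at h
  linear_combination h

theorem appellZero_five_eleven : appellZero 5 11 - q 1 ^ 8 * L 8 19 = Λ 1 - Λ 2 := by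
  have h := appellZero_sub_div_mul_appell (ℓ := 5) (c := 8) (b := 11) (by norm_num) (by norm_num)
    (by norm_num)
  norm_num at h
  field_simp (disch := simp) at h
  linear_combination h

theorem appellZero_five_seven : appellZero 5 7 + q 1 ^ 3 * L 6 13 = -Λ 4 - Λ 3 := by
  have h := appellZero_sub_div_mul_appell (ℓ := 5) (c := 6) (b := 7) (by norm_num) (by norm_num)
    (by norm_num)
  norm_num at h
  field_simp (disch := simp) at h
  linear_combination h

theorem appellZero_five_twelve : appellZero 5 12 - q 1 ^ 6 * L 6 18 = Λ 2 - Λ 4 := by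
  have h := appellZero_sub_div_mul_appell (ℓ := 5) (c := 6) (b := 12) (by norm_num) (by norm_num)
    (by norm_num)
  norm_num at h
  field_simp (disch := simp) at h
  linear_combination h

/-- The closed form of `∑ (N̄(0,5,5n) - N̄(1,5,5n)) qⁿ`. -/
noncomputable def rankDiff₀ : ℚ⸨X⸩ := C₅ / (j 1 * j 2) - 3 * q 1 * C₅ / (j 3 * j 4)

/-- The closed form of `∑ (N̄(0,5,5n+2) - N̄(1,5,5n+2)) qⁿ`. -/
noncomputable def rankDiff₂ : ℚ⸨X⸩ := -2 * C₅ / (j 1 * j 4)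

/-- The closed form of `∑ (N̄(0,5,5n+3) - N̄(1,5,5n+3)) qⁿ`. -/
noncomputable def rankDiff₃ : ℚ⸨X⸩ := 4 * C₅ / (j 2 * j 3)

/-- The closed form of `∑ (N̄(0,5,5n+1) - N̄(1,5,5n+1)) qⁿ`. -/
noncomputable def rankDiff₁ : ℚ⸨X⸩ :=
  (6 * q 1 * (L 4 10 + q 1 ^ 2 * L 4 15) + 2 * j 3 * rankDiff₀ - 2 * q 1 * j 1 * rankDiff₂) / j 5

/-- The closed form of `∑ (N̄(0,5,5n+4) - N̄(1,5,5n+4)) qⁿ`. -/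
noncomputable def rankDiff₄ : ℚ⸨X⸩ :=
  (-8 * (L 8 10 + q 1 ^ 4 * L 8 15) + 2 * j 3 * rankDiff₃ - 2 * j 1 * rankDiff₀) / j 5

theorem dissection_one :
    j 5 * rankDiff₁ - 2 * j 3 * rankDiff₀ + 2 * q 1 * j 1 * rankDiff₂ =
      6 * q 1 * (L 4 10 + q 1 ^ 2 * L 4 15) := by
  rw [rankDiff₁, mul_div_cancel₀ _ theta_five_five_ne_zero]
  ring

theorem dissection_four :
    j 5 * rankDiff₄ - 2 * j 3 * rankDiff₃ + 2 * j 1 * rankDiff₀ =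
      -8 * (L 8 10 + q 1 ^ 4 * L 8 15) := by
  rw [rankDiff₄, mul_div_cancel₀ _ theta_five_five_ne_zero]
  ring

theorem dissection_two :
    j 5 * rankDiff₂ - 2 * j 3 * rankDiff₁ + 2 * q 1 * j 1 * rankDiff₃ =
      -6 * (L 2 8 + q 1 * L 2 13 + q 1 ^ 2 * (L 6 12 + q 1 ^ 3 * L 6 17)) := by
  rw [appell_five_two_eight, appell_five_two_thirteen, appell_five_six_seventeen, rankDiff₁,
    rankDiff₀, rankDiff₂, rankDiff₃, appell_five_four_ten]
  field_simp (disch := simp)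
  linear_combination (C₅ * (2 * j 4 * j 5)) * weierstrass_five_one_two_three_three +
    (C₅ * (4 * j 3 * j 4 + 6 * q 1 * j 1 * j 2)) * weierstrass_five_one_two_four_two

theorem dissection_three :
    j 5 * rankDiff₃ - 2 * j 3 * rankDiff₂ + 2 * q 1 * j 1 * rankDiff₄ =
      8 * (L 2 9 + q 1 * L 2 14) - 8 * q 1 * (L 4 11 + q 1 ^ 2 * L 4 16) := by
  rw [appell_five_two_nine, appell_five_two_fourteen, appell_five_four_eleven, rankDiff₄,
    rankDiff₀, rankDiff₂, rankDiff₃, appell_five_eight_ten]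
  field_simp (disch := simp)
  linear_combination
    (C₅ * (-8 * j 3 * j 4 + 12 * q 1 * j 1 * j 2)) * weierstrass_five_one_two_three_three +
    (C₅ * (4 * j 2 * j 5)) * weierstrass_five_one_two_four_two

theorem appellZero_five_combination :
    1 + 6 * (appellZero 5 6 + appellZero 5 11 + q 1 ^ 4 * (L 8 14 + q 1 ^ 4 * L 8 19)) -
        8 * (appellZero 5 7 + appellZero 5 12) + 8 * q 1 ^ 3 * (L 6 13 + q 1 ^ 3 * L 6 18) =
      12 * q 1 ^ 4 * (j 1 / j 5) * L 4 15 + 16 * q 1 ^ 5 * (j 3 / j 5) * L 8 15 +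
        C₅ * (-j 2 * j 5 ^ 2 / (j 1 ^ 2 * j 4 ^ 2) + 2 * j 4 * j 5 ^ 2 / (j 2 ^ 2 * j 3 ^ 2) -
          12 * q 1 * j 1 * j 4 / (j 2 ^ 2 * j 3) + 20 * q 1 * j 3 / (j 2 * j 5) -
          16 * q 1 ^ 2 * j 1 / (j 4 * j 5)) := by
  linear_combination thetaLogDeriv_five_one_add_four - 2 * thetaLogDeriv_five_two_add_three +
    12 * thetaLogDeriv_five_one_sub_two_add_three - 8 * thetaLogDeriv_five_one_sub_four_sub_two +
    6 * appellZero_five_six + 6 * appellZero_five_eleven - 8 * appellZero_five_seven -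
    8 * appellZero_five_twelve + 12 * q 1 * appell_five_eight_nineteen +
    16 * q 1 ^ 2 * appell_five_six_thirteen

theorem dissection_zero :
    j 5 * rankDiff₀ - 2 * q 1 * j 3 * rankDiff₄ + 2 * q 1 * j 1 * rankDiff₁ =
      1 + 6 * (appellZero 5 6 + appellZero 5 11 + q 1 ^ 4 * (L 8 14 + q 1 ^ 4 * L 8 19)) -
        8 * (appellZero 5 7 + appellZero 5 12) +
        8 * q 1 ^ 3 * (L 6 13 + q 1 ^ 3 * L 6 18) := by
  rw [appellZero_five_combination, rankDiff₄, rankDiff₁, rankDiff₀, rankDiff₂, rankDiff₃,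
    appell_five_eight_ten, appell_five_four_ten]
  field_simp (disch := simp)
  linear_combination
    (C₅ * (-j 2 * j 3 * j 5 ^ 2 + 12 * q 1 * j 1 ^ 2 * j 4 * j 5)) *
      weierstrass_five_one_two_three_three -
    (C₅ * (2 * j 1 * j 4 * j 5 ^ 2)) * weierstrass_five_one_two_four_two -
    (C₅ * (12 * q 1 * j 1 * j 2 * j 4 ^ 2)) * weierstrass_five_one_two_three_four +
    (C₅ * (12 * q 1 * j 1 * j 2 ^ 2 * j 4)) * weierstrass_five_one_two_three_two

end ModulusFive

section Quotient

variable {ℓ s t : ℤ}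

theorem appellConst_div_theta_mul_theta (hs : 0 < s) (hsℓ : s < 2 * ℓ) (ht : 0 < t)
    (htℓ : t < 2 * ℓ) :
    appellConst ℓ / (theta ℓ s * theta ℓ t) =
      qBinomialSum ℓ t (2 * ℓ - t) * (appell ℓ s (2 * ℓ) / qPochInf ℓ (2 * ℓ) ^ 2) := by
  have hℓ : 0 < ℓ := by omega
  have ht' : 0 < 2 * ℓ - t := by omega
  have h₁ := invQPochInf_mul_qPochInf hℓ ht
  have h₂ := invQPochInf_mul_qPochInf hℓ ht'
  have hs₀ := theta_ne_zero hs hsℓ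
  have ht₀ := qPochInf_ne_zero hℓ ht
  have ht₀' := qPochInf_ne_zero hℓ ht'
  have hℓ₀ := qPochInf_ne_zero hℓ (by positivity : 0 < 2 * ℓ)
  rw [← theta_mul_appell_two_mul hs hsℓ, qBinomialSum_eq hℓ ht ht', theta_eq_mul_qPochInf ht htℓ,
    eq_inv_of_mul_eq_one_left h₁, eq_inv_of_mul_eq_one_left h₂, add_sub_cancel]
  field_simp

theorem q_le_appellConst_div (hs : 0 < s) (hsℓ : s < 2 * ℓ) (ht : 0 < t) (htℓ : t < 2 * ℓ)
    (k : ℕ) : CoeffLE (q (s * k)) (appellConst ℓ / (theta ℓ s * theta ℓ t)) := by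
  rw [appellConst_div_theta_mul_theta hs hsℓ ht htℓ,
    mul_comm (qBinomialSum ℓ t (2 * ℓ - t))]
  exact (q_le_appell_two_mul_div_sq hs hsℓ k).q_le_mul
    (one_le_qBinomialSum (by omega) ht (sub_pos.2 htℓ))

end Quotient

theorem rankDiff₂_eq : rankDiff₂ = -(2 * (appellConst 5 / (theta 5 1 * theta 5 4))) := by
  rw [rankDiff₂]
  ring

theorem coeff_rankDiff₂_neg (n : ℕ) : rankDiff₂.coeff n < 0 := by
  have h := (q_le_appellConst_div (ℓ := 5) (s := 1) (t := 4) (by norm_num) (by norm_num)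
    (by norm_num) (by norm_num) n).one_le_coeff
  rw [one_mul] at h
  rw [rankDiff₂_eq, HahnSeries.coeff_neg, coeff_ofNat_mul]
  linarith

theorem appell_five_three_six_div :
    appell 5 3 6 / theta 5 6 - 1 = q 4 * appell 5 7 14 / theta 5 4 := by
  have hreflect := appell_reflect 5 3 6
  have hshift := appell_sub_q_mul_appell (ℓ := 5) (c := 7) (by norm_num) (by norm_num) 14
  have hq : q 11 = q 4 * q 7 := by rw [← q_add]; norm_num
  have hq₀ := q_ne_zero 4
  norm_num [theta_five_fourteen] at hreflect hshift
  field_simp at hshift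
  rw [theta_five_six, div_sub_one theta_five_four_ne_zero, hreflect, hq]
  congr 1
  linear_combination -hshift

theorem appell_five_eight_five_div :
    appell 5 8 5 / theta 5 5 - 1 = q 8 * appell 5 8 15 / theta 5 5 := by
  have hshift := appell_sub_q_mul_appell (ℓ := 5) (c := 8) (by norm_num) (by norm_num) 5
  norm_num at hshift
  rw [div_sub_one theta_five_five_ne_zero, ← hshift, sub_sub_cancel]

theorem rankDiff₄_eq :
    rankDiff₄ = -(2 * (appellConst 5 / (theta 5 2 * theta 5 5)) +
      (2 * (q (-4) * (appell 5 8 5 / theta 5 5 - 1)) +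
        6 * (q (-1) * (appell 5 3 6 / theta 5 6 - 1)))) := by
  have h₁ := theta_five_one_ne_zero
  have h₂ := theta_five_two_ne_zero
  have h₃ := theta_five_three_ne_zero
  have h₄ := theta_five_four_ne_zero
  have h₅ := theta_five_five_ne_zero
  have hq := q_ne_zero 1
  rw [appell_five_three_six_div, appell_five_eight_five_div, q_neg, q_neg, q_ofNat 4, q_ofNat 8,
    show q 1 ^ 4 * appell 5 7 14 = q 1 ^ 2 * (q 1 ^ 2 * appell 5 7 14) by ring,
    appell_five_seven_fourteen, rankDiff₄, rankDiff₃, rankDiff₀, appell_five_eight_ten]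
  field_simp
  ring

theorem one_le_coeff_appell_five_three_six_div {n : ℕ} (h₁ : n ≠ 1) (h₂ : n ≠ 2) (h₅ : n ≠ 5) :
    1 ≤ (appell 5 3 6 / theta 5 6).coeff n := by
  obtain ⟨k, l, rfl⟩ : ∃ k l : ℕ, n = 4 * l + 3 * k := by
    have : n % 3 < 3 := Nat.mod_lt _ (by norm_num)
    rcases (by omega : n % 3 = 0 ∨ n % 3 = 1 ∨ n % 3 = 2) with h | h | h
    · exact ⟨n / 3, 0, by omega⟩
    · exact ⟨n / 3 - 1, 1, by omega⟩
    · exact ⟨n / 3 - 2, 2, by omega⟩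
  exact_mod_cast (q_le_appell_div_theta (ℓ := 5) (c := 3) (b := 6) (by norm_num) (by norm_num)
    (by norm_num) (by norm_num) k l).one_le_coeff

theorem coeff_rankDiff₄_neg (n : ℕ) : rankDiff₄.coeff n < 0 := by
  have hconst := q_le_appellConst_div (ℓ := 5) (s := 2) (t := 5) (by norm_num) (by norm_num)
    (by norm_num) (by norm_num) 0
  have height := q_le_appell_div_theta (ℓ := 5) (c := 8) (b := 5) (by norm_num) (by norm_num)
    (by norm_num) (by norm_num)
  have hthree := q_le_appell_div_theta (ℓ := 5) (c := 3) (b := 6) (by norm_num) (by norm_num)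
    (by norm_num) (by norm_num) 0 0
  have hconst_nonneg := hconst.nonneg n
  have height_nonneg := (height 0 0).nonneg (n + 4)
  have hthree_nonneg := hthree.nonneg (n + 1)
  suffices 0 < (appellConst 5 / (theta 5 2 * theta 5 5)).coeff n +
      ((appell 5 8 5 / theta 5 5).coeff (n + 4) +
        3 * (appell 5 3 6 / theta 5 6).coeff (n + 1)) by
    simp only [rankDiff₄_eq, HahnSeries.coeff_neg, HahnSeries.coeff_add, coeff_ofNat_mul,
      coeff_q_mul, HahnSeries.coeff_sub, sub_neg_eq_add,
      coeff_one_of_ne_zero (by omega : (n + 4 : ℤ) ≠ 0),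
      coeff_one_of_ne_zero (by omega : (n + 1 : ℤ) ≠ 0)]
    linarith
  simp only [HahnSeries.coeff_zero] at *
  rcases eq_or_ne n 0 with rfl | h₀
  · have := hconst.one_le_coeff
    norm_num at *
    linarith
  rcases eq_or_ne n 1 with rfl | h₁
  · have := (height 0 1).one_le_coeff
    norm_num at *
    linarith
  rcases eq_or_ne n 4 with rfl | h₄
  · have := (height 1 0).one_le_coeff
    norm_num at *
    linarith
  have := one_le_coeff_appell_five_three_six_div (n := n + 1) (by omega) (by omega) (by omega)
  push_cast at this
  linarith

/-! ### Dissection -/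

section Dilate

variable {K : Type*} [Field K] (ℓ : ℕ) [NeZero ℓ]

/-- The substitution `q ↦ q ^ ℓ` on Laurent series. -/
noncomputable def dilate : K⸨X⸩ →+* K⸨X⸩ :=
  HahnSeries.embDomainRingHom (AddMonoidHom.mulLeft (ℓ : ℤ))
    (fun _ _ h => mul_left_cancel₀ (NeZero.ne _) h)
    (fun _ _ => mul_le_mul_iff_right₀ (Nat.cast_pos.2 (NeZero.pos ℓ)))

theorem coeff_dilate_mul (x : K⸨X⸩) (n : ℤ) : (dilate ℓ x).coeff (ℓ * n) = x.coeff n :=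
  HahnSeries.embDomain_mk_coeff (f := fun n : ℤ => ℓ * n)
    (fun _ _ h => mul_left_cancel₀ (NeZero.ne _) h)
    (fun _ _ => mul_le_mul_iff_right₀ (Nat.cast_pos.2 (NeZero.pos ℓ)))

theorem coeff_dilate_of_not_dvd (x : K⸨X⸩) {n : ℤ} (h : ¬(ℓ : ℤ) ∣ n) :
    (dilate ℓ x).coeff n = 0 := by
  apply HahnSeries.embDomain_of_notMem_range
  rintro ⟨m, rfl⟩
  exact h ⟨m, rfl⟩

theorem continuous_dilate : Continuous (dilate ℓ : K⸨X⸩ → K⸨X⸩) := by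
  refine continuous_of_continuousAt_zero (dilate ℓ) ?_
  rw [ContinuousAt, map_zero, hasBasis_nhds_zero.tendsto_iff hasBasis_nhds_zero]
  refine fun N _ => ⟨max N 0, trivial, fun x hx n hn => ?_⟩
  by_cases h : (ℓ : ℤ) ∣ n
  · obtain ⟨m, rfl⟩ := h
    rw [coeff_dilate_mul]
    refine hx m (lt_of_not_ge fun hm => hn.not_ge ?_)
    exact (le_max_left N 0).trans (hm.trans (le_mul_of_one_le_left ((le_max_right N 0).trans hm)
      (Nat.one_le_cast.2 (NeZero.one_le))))
  · exact coeff_dilate_of_not_dvd ℓ x h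

theorem dilate_q (a : ℤ) : dilate ℓ (q a) = q (ℓ * a) := HahnSeries.embDomain_single

theorem dilate_altQ (n e : ℤ) : dilate ℓ (altQ n e) = altQ n (ℓ * e) := by
  rw [altQ, altQ, map_mul, dilate_q, map_zpow₀, map_neg, map_one]

end Dilate

/-- The general term of the double series `rankSeries ℓ a`. -/
noncomputable def rankTerm (ℓ a : ℤ) (p : ℤ × ℤ) : ℚ⸨X⸩ :=
  if p.1 = 0 then 0 else coneSign p.1 p.2 * altQ p.1 (p.1 ^ 2 + a * p.1 + ℓ * p.1 * p.2)

/-- The Lerch series `∑ (-1)ⁿ q ^ (n² + a n) / (1 - q ^ (ℓ n))` over `n ≠ 0`, with every summand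
expanded in positive powers of `q`. Such series express the overpartition rank modulo `ℓ`. -/
noncomputable def rankSeries (ℓ a : ℤ) : ℚ⸨X⸩ := ∑' p : ℤ × ℤ, rankTerm ℓ a p

/-- The theta function `∑ (-1)ⁿ q ^ n²`, the reciprocal of the generating function of
overpartitions. -/
noncomputable def altSquareTheta : ℚ⸨X⸩ := ∑' n : ℤ, altQ n (n ^ 2)

theorem summable_altSquareTheta : Summable fun n : ℤ => altQ n (n ^ 2) :=
  summable_of_abs_add_abs_le (Prod.mk_left_injective (0 : ℤ)) 0 fun n =>
    (orderGE_altQ _ _).mono (by simpa using Int.natAbs_le_self_sq n)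

theorem summable_rankTerm {ℓ a : ℤ} (ha : 0 ≤ a) (haℓ : a ≤ ℓ) (hℓ : 0 < ℓ) :
    Summable (rankTerm ℓ a) := by
  refine summable_of_abs_add_abs_le Function.injective_id 1 fun p => ?_
  rw [rankTerm]
  split_ifs with hp
  · exact .zero _
  refine OrderGE.coneSign_mul (orderGE_altQ _ _) (fun hn hr => ?_) (fun hn hr => ?_)
  · have h : p.2 ≤ ℓ * p.1 * p.2 :=
      le_mul_of_one_le_left hr (Int.mul_pos hℓ (lt_of_le_of_ne hn (Ne.symm hp)))
    simp only [id, abs_of_nonneg hn, abs_of_nonneg hr]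
    nlinarith [mul_nonneg ha hn]
  · have h : ℓ * -p.1 + -p.2 - 1 ≤ ℓ * p.1 * p.2 := by
      have := mul_nonneg (show 0 ≤ ℓ * -p.1 - 1 by nlinarith) (show 0 ≤ -p.2 - 1 by omega)
      linarith
    simp only [id, abs_of_neg hn, abs_of_neg hr]
    nlinarith

section Dissection

variable (ℓ : ℕ) [NeZero ℓ]

/-- Splitting the summation over `(n, r)` according to the residues of `n` modulo `ℓ` and of `r`
modulo `2`. -/
def residueEquiv : (Fin ℓ × Fin 2) × (ℤ × ℤ) ≃ ℤ × ℤ :=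
  (Equiv.prodProdProdComm (Fin ℓ) (Fin 2) ℤ ℤ).trans
    (((Equiv.prodComm _ _).trans (Int.divModEquiv ℓ).symm).prodCongr
      ((Equiv.prodComm _ _).trans (Int.divModEquiv 2).symm))

theorem residueEquiv_apply (b : Fin ℓ) (ε : Fin 2) (m r : ℤ) :
    residueEquiv ℓ ((b, ε), (m, r)) = (m * ℓ + (b : ℕ), r * 2 + (ε : ℕ)) := by
  simp [residueEquiv]

/-- The contribution to `rankSeries ℓ a` of the indices `n ≡ b` modulo `ℓ` and `r ≡ ε`
modulo `2`. -/
noncomputable def rankComponent (a : ℤ) (b ε : ℕ) : ℚ⸨X⸩ :=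
  if b = 0 then dilate ℓ (appellZero ℓ (a + ℓ + ℓ * ε))
  else altQ b (b ^ 2 + a * b + ℓ * (b * ε)) * dilate ℓ (appell ℓ (2 * b) (2 * b + a + ℓ + ℓ * ε))

variable {ℓ}

theorem rankTerm_residueEquiv_zero (hℓ : Odd ℓ) (a : ℤ) (ε : Fin 2) (p : ℤ × ℤ) :
    rankTerm ℓ a (residueEquiv ℓ ((0, ε), p)) =
      dilate ℓ (appellZeroTerm ℓ (a + ℓ + ℓ * (ε : ℕ)) p) := by
  obtain ⟨m, r⟩ := p
  simp only [residueEquiv_apply, rankTerm, appellZeroTerm, appellTerm]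
  rcases eq_or_ne m 0 with rfl | hm
  · simp
  rw [if_neg (by simpa using ⟨hm, NeZero.ne ℓ⟩), if_neg hm, map_mul, map_intCast, dilate_altQ,
    coneSign_mul_add (Nat.cast_nonneg _) (Nat.cast_lt.2 (Fin.is_lt _)) (Nat.cast_nonneg _)
      (by omega) m r]
  obtain ⟨k, rfl⟩ := hℓ
  congr 1
  refine altQ_congr ⟨m * k, by push_cast; simp; ring⟩ ?_
  simp only [thetaExp, Fin.val_zero]
  push_cast
  ring

theorem rankTerm_residueEquiv_of_ne_zero (hℓ : Odd ℓ) (a : ℤ) {b : Fin ℓ} (hb : (b : ℕ) ≠ 0)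
    (ε : Fin 2) (p : ℤ × ℤ) :
    rankTerm ℓ a (residueEquiv ℓ ((b, ε), p)) =
      altQ (b : ℕ) ((b : ℕ) ^ 2 + a * (b : ℕ) + ℓ * ((b : ℕ) * (ε : ℕ))) *
        dilate ℓ (appellTerm ℓ (2 * (b : ℕ)) (2 * (b : ℕ) + a + ℓ + ℓ * (ε : ℕ)) p) := by
  obtain ⟨m, r⟩ := p
  have hne : m * ℓ + (b : ℕ) ≠ 0 := fun h => by
    have hdvd : (ℓ : ℤ) ∣ (b : ℕ) := ⟨-m, by linarith⟩
    exact hb (Nat.eq_zero_of_dvd_of_lt (Int.natCast_dvd_natCast.1 hdvd) b.is_lt)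
  simp only [residueEquiv_apply, rankTerm, appellTerm]
  rw [if_neg hne, map_mul, map_intCast, dilate_altQ,
    coneSign_mul_add (Nat.cast_nonneg _) (Nat.cast_lt.2 b.is_lt) (Nat.cast_nonneg _)
      (by omega) m r,
    mul_left_comm, altQ_mul]
  generalize ((b : ℕ) : ℤ) = b
  obtain ⟨k, rfl⟩ := hℓ
  congr 1
  refine altQ_congr ⟨m * k, by push_cast; ring⟩ ?_
  simp only [thetaExp]
  push_cast
  ring

theorem hasSum_rankTerm_residueEquiv (hℓ : Odd ℓ) (a : ℤ) (b : Fin ℓ × Fin 2) :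
    HasSum (fun p => rankTerm ℓ a (residueEquiv ℓ (b, p))) (rankComponent ℓ a b.1 b.2) := by
  obtain ⟨b, ε⟩ := b
  have hpos : 0 < (ℓ : ℤ) := Nat.cast_pos.2 (NeZero.pos ℓ)
  rcases eq_or_ne b 0 with rfl | hb
  · rw [rankComponent, if_pos (Fin.val_zero _)]
    exact ((summable_appellZero hpos _).hasSum.map (dilate ℓ) (continuous_dilate ℓ)).congr_fun
      (rankTerm_residueEquiv_zero hℓ a ε)
  · have hb' : (b : ℕ) ≠ 0 := Fin.val_ne_zero_iff.2 hb
    have hc : 0 < 2 * ((b : ℕ) : ℤ) := by omega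
    have hcℓ : 2 * ((b : ℕ) : ℤ) < 2 * ℓ := by omega
    rw [rankComponent, if_neg hb']
    exact (((summable_appell hc hcℓ _).hasSum.map (dilate ℓ)
      (continuous_dilate ℓ)).mul_left _).congr_fun (rankTerm_residueEquiv_of_ne_zero hℓ a hb' ε)

theorem rankSeries_eq_sum (hℓ : Odd ℓ) {a : ℤ} (ha : 0 ≤ a) (haℓ : a ≤ ℓ) :
    rankSeries ℓ a = ∑ b ∈ Finset.range ℓ, ∑ ε ∈ Finset.range 2, rankComponent ℓ a b ε := by
  have hpos : 0 < (ℓ : ℤ) := Nat.cast_pos.2 (NeZero.pos ℓ)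
  have hsum := ((residueEquiv ℓ).hasSum_iff.2 (summable_rankTerm ha haℓ hpos).hasSum)
  have hfin := hsum.prod_fiberwise (hasSum_rankTerm_residueEquiv hℓ a)
  simp_rw [← Fin.sum_univ_eq_sum_range]
  rw [rankSeries, ← Fintype.sum_prod_type']
  exact hfin.unique (hasSum_fintype _)

theorem altSquareTheta_eq_sum (hℓ : Odd ℓ) :
    altSquareTheta =
      ∑ b ∈ Finset.range ℓ, altQ b (b ^ 2) * dilate ℓ (theta ℓ (ℓ + 2 * b)) := by
  have hpos : 0 < (ℓ : ℤ) := Nat.cast_pos.2 (NeZero.pos ℓ)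
  let e := (Equiv.prodComm (Fin ℓ) ℤ).trans (Int.divModEquiv ℓ).symm
  have hsum := e.hasSum_iff.2 summable_altSquareTheta.hasSum
  have hfin := hsum.prod_fiberwise (g := fun b : Fin ℓ =>
    altQ (b : ℕ) ((b : ℕ) ^ 2) * dilate ℓ (theta ℓ (ℓ + 2 * (b : ℕ)))) fun b => by
      refine (((summable_theta hpos _).hasSum.map (dilate ℓ)
        (continuous_dilate ℓ)).mul_left _).congr_fun fun m => ?_
      obtain ⟨k, hk⟩ := (Int.odd_coe_nat ℓ).2 hℓ
      simp only [Function.comp, dilate_altQ, altQ_mul, e, Equiv.trans_apply, Equiv.prodComm_apply,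
        Prod.swap_prod_mk, Int.divModEquiv_symm_apply]
      refine altQ_congr ⟨m * k, by linear_combination m * hk⟩ ?_
      simp only [thetaExp]
      ring
  rw [altSquareTheta, Finset.sum_range]
  exact hfin.unique (hasSum_fintype _)

end Dissection

section ModulusFive

local notation "j" => theta 5

local notation "L" => appell 5

theorem dilate_five_q_one : dilate 5 (q 1) = q 1 ^ 5 := by
  rw [dilate_q, q_pow, Nat.cast_ofNat, mul_one]

theorem altSquareTheta_eq :
    altSquareTheta = dilate 5 (j 5) - 2 * q 1 * dilate 5 (j 3) + 2 * q 1 ^ 4 * dilate 5 (j 1) := by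
  rw [altSquareTheta_eq_sum (ℓ := 5) (by decide)]
  simp only [Finset.sum_range_succ, Finset.sum_range_zero, altQ]
  norm_num [q_zero, q_ofNat, theta_five_seven, theta_five_nine, theta_five_eleven,
    theta_five_thirteen, dilate_five_q_one, map_div₀]
  field_simp
  ring

theorem rankSeries_five_one :
    rankSeries 5 1 = dilate 5 (appellZero 5 6 + appellZero 5 11)
      - q 1 ^ 2 * dilate 5 (L 2 8 + q 1 * L 2 13)
      + q 1 ^ 6 * dilate 5 (L 4 10 + q 1 ^ 2 * L 4 15)
      - q 1 ^ 12 * dilate 5 (L 6 12 + q 1 ^ 3 * L 6 17)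
      + q 1 ^ 20 * dilate 5 (L 8 14 + q 1 ^ 4 * L 8 19) := by
  have h := rankSeries_eq_sum (ℓ := 5) (by decide) zero_le_one (by norm_num)
  simp only [Finset.sum_range_succ, Finset.sum_range_zero, rankComponent, altQ] at h
  norm_num [q_ofNat] at h
  rw [h]
  simp only [map_add, map_mul, map_pow, dilate_five_q_one]
  ring

theorem rankSeries_five_two :
    rankSeries 5 2 = dilate 5 (appellZero 5 7 + appellZero 5 12)
      - q 1 ^ 3 * dilate 5 (L 2 9 + q 1 * L 2 14)
      + q 1 ^ 8 * dilate 5 (L 4 11 + q 1 ^ 2 * L 4 16)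
      - q 1 ^ 15 * dilate 5 (L 6 13 + q 1 ^ 3 * L 6 18)
      + q 1 ^ 24 * dilate 5 (L 8 15 + q 1 ^ 4 * L 8 20) := by
  have h := rankSeries_eq_sum (ℓ := 5) (by decide) zero_le_two (by norm_num)
  simp only [Finset.sum_range_succ, Finset.sum_range_zero, rankComponent, altQ] at h
  norm_num [q_ofNat] at h
  rw [h]
  simp only [map_add, map_mul, map_pow, dilate_five_q_one]
  ring

/-- The series `∑ (N̄(0,5,n) - N̄(1,5,n)) qⁿ`, assembled from its 5-dissection. -/
noncomputable def rankDiff : ℚ⸨X⸩ :=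
  dilate 5 rankDiff₀ + q 1 * dilate 5 rankDiff₁ + q 1 ^ 2 * dilate 5 rankDiff₂ +
    q 1 ^ 3 * dilate 5 rankDiff₃ + q 1 ^ 4 * dilate 5 rankDiff₄

theorem altSquareTheta_mul_rankDiff :
    altSquareTheta * rankDiff = 1 + 6 * rankSeries 5 1 - 8 * rankSeries 5 2 := by
  have h₀ := congrArg (dilate 5) dissection_zero
  have h₁ := congrArg (dilate 5) dissection_one
  have h₂ := congrArg (dilate 5) dissection_two
  have h₃ := congrArg (dilate 5) dissection_three
  have h₄ := congrArg (dilate 5) dissection_four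
  have htwenty : L 8 10 = q 1 ^ 8 * L 8 20 := by
    have h := appell_sub_q_mul_appell (ℓ := 5) (c := 8) (by norm_num) (by norm_num) 10
    norm_num [q_ofNat] at h
    have hten : j 10 = 0 := by simpa [theta_zero] using theta_five_add_ten 0
    rwa [hten, sub_eq_zero] at h
  have h₅ := congrArg (dilate 5) htwenty
  rw [altSquareTheta_eq, rankSeries_five_one, rankSeries_five_two, rankDiff]
  simp only [map_add, map_sub, map_mul, map_neg, map_ofNat, map_one, map_pow,
    dilate_five_q_one] at *
  linear_combination h₀ + q 1 * h₁ + q 1 ^ 2 * h₂ + q 1 ^ 3 * h₃ + q 1 ^ 4 * h₄ -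
    8 * q 1 ^ 4 * h₅

theorem coeff_rankDiff_neg {n : ℕ} (h : n % 5 = 2 ∨ n % 5 = 4) : rankDiff.coeff n < 0 := by
  have hdvd {m : ℤ} (x : ℚ⸨X⸩) (hm : m % 5 ≠ 0) : (dilate 5 x).coeff m = 0 :=
    coeff_dilate_of_not_dvd 5 x fun hm' => hm (Int.emod_eq_zero_of_dvd (by exact_mod_cast hm'))
  simp only [rankDiff, HahnSeries.coeff_add, q_pow, mul_one, Nat.cast_ofNat,
    coeff_q_mul]
  rcases h with h | h
  · rw [hdvd _ (by omega), hdvd _ (by omega), hdvd rankDiff₃ (by omega), hdvd rankDiff₄ (by omega),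
      show (n : ℤ) - 2 = (5 : ℕ) * ((n / 5 : ℕ) : ℤ) by omega, coeff_dilate_mul]
    simpa only [zero_add, add_zero] using coeff_rankDiff₂_neg (n / 5)
  · rw [hdvd _ (by omega), hdvd _ (by omega), hdvd rankDiff₃ (by omega), hdvd rankDiff₂ (by omega),
      show (n : ℤ) - 4 = (5 : ℕ) * ((n / 5 : ℕ) : ℤ) by omega, coeff_dilate_mul]
    simpa only [zero_add, add_zero] using coeff_rankDiff₄_neg (n / 5)

end ModulusFive

/-! ### Rank generating functions -/

theorem orderGE_q_one_pow (n : ℕ) : OrderGE n (q 1 ^ n) := by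
  rw [q_pow, mul_one]
  exact orderGE_q _

theorem orderGE_q_one_pow_succ (r : ℕ) : OrderGE 1 (q 1 ^ (r + 1)) :=
  (orderGE_q_one_pow _).mono (by omega)

theorem one_sub_q_one_pow_ne_zero (n : ℕ) : 1 - q 1 ^ (n + 1) ≠ 0 := by
  rw [q_pow, mul_one]
  exact one_sub_q_ne_zero (Nat.cast_ne_zero.2 n.succ_ne_zero)

theorem one_add_q_one_pow_ne_zero (n : ℕ) : 1 + q 1 ^ n ≠ 0 := by
  rw [q_pow]
  exact one_add_q_ne_zero _

/-- Half of the generating function of the overpartitions with `k + 1` parts and largest part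
`L + 1`. The recursion removes one copy of the largest part; the factor `2` accounts for the
choice of overlining a largest part that occurs only once. -/
noncomputable def overpartitionSeries : ℕ → ℕ → ℚ⸨X⸩
  | 0, L => q 1 ^ (L + 1)
  | k + 1, L =>
    q 1 ^ (L + 1) * (overpartitionSeries k L + 2 * ∑ i ∈ Finset.range L, overpartitionSeries k i)

section Symmetry

local notation "s" => overpartitionSeries

theorem overpartitionSeries_zero (L : ℕ) : s 0 L = q 1 ^ (L + 1) := rfl

theorem overpartitionSeries_succ (k L : ℕ) :
    s (k + 1) L = q 1 ^ (L + 1) * (s k L + 2 * ∑ i ∈ Finset.range L, s k i) := rfl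

theorem overpartitionSeries_succ_succ (k L : ℕ) :
    s (k + 1) (L + 1) = q 1 * s (k + 1) L + q 1 ^ (L + 2) * (s k (L + 1) + s k L) := by
  rw [overpartitionSeries_succ, overpartitionSeries_succ, Finset.sum_range_succ]
  ring

theorem overpartitionSeries_zero_right (k : ℕ) : s k 0 = q 1 ^ (k + 1) := by
  induction k with
  | zero => rfl
  | succ k ih => rw [overpartitionSeries_succ, ih, Finset.sum_range_zero]; ring

theorem one_sub_q_mul_overpartitionSeries_one_right (k : ℕ) :
    (1 - q 1) * s k 1 = 2 * q 1 ^ (k + 2) - q 1 ^ (2 * k + 2) - q 1 ^ (2 * k + 3) := by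
  induction k with
  | zero => rw [overpartitionSeries_zero]; ring
  | succ k ih =>
    rw [overpartitionSeries_succ_succ k 0, overpartitionSeries_zero_right,
      overpartitionSeries_zero_right]
    linear_combination q 1 ^ 2 * ih

theorem one_sub_q_mul_overpartitionSeries_one_left (L : ℕ) :
    (1 - q 1) * s 1 L = 2 * q 1 ^ (L + 2) - q 1 ^ (2 * L + 2) - q 1 ^ (2 * L + 3) := by
  induction L with
  | zero => rw [overpartitionSeries_zero_right]; ring
  | succ L ih =>
    rw [overpartitionSeries_succ_succ 0 L, overpartitionSeries_zero, overpartitionSeries_zero]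
    linear_combination q 1 * ih

theorem overpartitionSeries_exchange (k L : ℕ) :
    (1 - q 1 ^ (k + 1)) * s (k + 1) L - (1 - q 1 ^ (L + 1)) * s k (L + 1) =
      (q 1 ^ (k + 1) - q 1 ^ (L + 1)) * s k L := by
  induction k generalizing L with
  | zero =>
    rw [overpartitionSeries_zero, overpartitionSeries_zero]
    linear_combination one_sub_q_mul_overpartitionSeries_one_left L
  | succ k ihk =>
    induction L with
    | zero =>
      rw [overpartitionSeries_zero_right, overpartitionSeries_zero_right]
      linear_combination -one_sub_q_mul_overpartitionSeries_one_right (k + 1)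
    | succ L ihL =>
      linear_combination q 1 * ihL + q 1 ^ (L + 3) * (ihk (L + 1) + ihk L) +
        (1 - q 1 ^ (k + 2)) * overpartitionSeries_succ_succ (k + 1) L -
        (1 - q 1 ^ (L + 2)) * overpartitionSeries_succ_succ k (L + 1) +
        q 1 * (q 1 ^ (L + 1) - q 1 ^ (k + 1)) * overpartitionSeries_succ_succ k L

theorem overpartitionSeries_comm (k L : ℕ) : s k L = s L k := by
  induction k generalizing L with
  | zero => rw [overpartitionSeries_zero, overpartitionSeries_zero_right]
  | succ k ih =>
    -- The exchange identity is antisymmetric in `(k, L)`, so adding its two versions leaves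
    -- `s (k + 1) L - s L (k + 1)`.
    have h := overpartitionSeries_exchange L k
    rw [← ih (L + 1), ← ih L] at h
    refine mul_left_cancel₀ (one_sub_q_one_pow_ne_zero k) ?_
    linear_combination overpartitionSeries_exchange k L + h

theorem orderGE_overpartitionSeries (k L : ℕ) : OrderGE (k + L + 1) (s k L) := by
  induction k generalizing L with
  | zero => exact (orderGE_q_one_pow _).mono (by push_cast; omega)
  | succ k ih =>
    have hsum : OrderGE (k + 1) (∑ i ∈ Finset.range L, s k i) :=
      .sum fun i _ => (ih i).mono (by omega)
    have htwo : OrderGE 0 (2 : ℚ⸨X⸩) := OrderGE.intCast 2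
    exact ((orderGE_q_one_pow (L + 1)).mul (((ih L).mono (by omega)).add (htwo.mul_left hsum))).mono
      (by push_cast; omega)

end Symmetry

/-- The quotient `(-1; q)ₙ / (q; q)ₙ` of `q`-Pochhammer symbols. -/
noncomputable def pochRatio (n : ℕ) : ℚ⸨X⸩ :=
  ∏ i ∈ Finset.range n, (1 + q 1 ^ i) / (1 - q 1 ^ (i + 1))

/-- The quotient `(-1)ⁿ (-q; q)ₙ / (q; q)ₙ` of `q`-Pochhammer symbols. -/
noncomputable def altPochRatio (n : ℕ) : ℚ⸨X⸩ :=
  ∏ i ∈ Finset.range n, -((1 + q 1 ^ (i + 1)) / (1 - q 1 ^ (i + 1)))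

theorem pochRatio_succ_mul (n : ℕ) :
    pochRatio (n + 1) * (1 - q 1 ^ (n + 1)) = pochRatio n * (1 + q 1 ^ n) := by
  rw [pochRatio, Finset.prod_range_succ, mul_assoc, div_mul_cancel₀ _ (one_sub_q_one_pow_ne_zero n),
    pochRatio]

theorem altPochRatio_succ_mul (n : ℕ) :
    altPochRatio (n + 1) * (1 - q 1 ^ (n + 1)) = -(altPochRatio n * (1 + q 1 ^ (n + 1))) := by
  rw [altPochRatio, Finset.prod_range_succ, mul_assoc, neg_mul,
    div_mul_cancel₀ _ (one_sub_q_one_pow_ne_zero n), mul_neg, altPochRatio]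

theorem orderGE_inv_one_sub_q_one_pow (n : ℕ) : OrderGE 0 (1 - q 1 ^ (n + 1))⁻¹ := by
  rw [q_pow, mul_one]
  exact orderGE_inv_one_sub_q (Nat.cast_pos.2 n.succ_pos)

theorem orderGE_one_add_q_one_pow (n : ℕ) : OrderGE 0 (1 + q 1 ^ n) :=
  OrderGE.one.add ((orderGE_q_one_pow n).mono (Nat.cast_nonneg n))

theorem orderGE_pochRatio (n : ℕ) : OrderGE 0 (pochRatio n) :=
  Finset.prod_induction _ _ (fun _ _ => OrderGE.mul_left) .one fun i _ =>
    div_eq_mul_inv (1 + q 1 ^ i) _ ▸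
      (orderGE_one_add_q_one_pow i).mul_left (orderGE_inv_one_sub_q_one_pow i)

theorem orderGE_altPochRatio (n : ℕ) : OrderGE 0 (altPochRatio n) :=
  Finset.prod_induction _ _ (fun _ _ => OrderGE.mul_left) .one fun i _ =>
    div_eq_mul_inv (1 + q 1 ^ (i + 1)) _ ▸
      ((orderGE_one_add_q_one_pow (i + 1)).mul_left (orderGE_inv_one_sub_q_one_pow i)).neg

section PowerSeries

open PowerSeries

theorem powerSeries_eq_C_of_rescale_eq {K : Type*} [Field K] {a : K} (ha : ∀ n ≠ 0, a ^ n ≠ 1)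
    {F : K⟦X⟧} (h : rescale a F = F) : F = C (constantCoeff F) := by
  ext n
  rcases eq_or_ne n 0 with rfl | hn
  · simp
  have hn' : a ^ n * coeff n F = coeff n F := by rw [← coeff_rescale, h]
  rw [coeff_C, if_neg hn]
  exact (mul_left_eq_self₀.1 hn').resolve_left (ha n hn)

theorem one_sub_X_mul_mk_pochRatio :
    (1 - X) * mk pochRatio = (1 + X) * rescale (q 1) (mk pochRatio) := by
  refine PowerSeries.ext fun n => ?_
  rcases n with _ | n <;> simp only [sub_mul, add_mul, one_mul, map_sub, map_add, coeff_zero_X_mul,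
    coeff_succ_X_mul, coeff_rescale, coeff_mk]
  · ring
  · linear_combination pochRatio_succ_mul n

theorem one_add_X_mul_mk_altPochRatio :
    (1 + X) * mk altPochRatio = rescale (q 1) ((1 - X) * mk altPochRatio) := by
  refine PowerSeries.ext fun n => ?_
  rcases n with _ | n <;> simp only [sub_mul, add_mul, one_mul, map_sub, map_add, coeff_zero_X_mul,
    coeff_succ_X_mul, coeff_rescale, coeff_mk]
  · ring
  · linear_combination altPochRatio_succ_mul n

theorem one_sub_X_mul_mk_altPochRatio_mul_mk_pochRatio :
    (1 - X) * (mk altPochRatio * mk pochRatio) = 1 := by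
  have hrescale : rescale (q 1) ((1 - X) * (mk altPochRatio * mk pochRatio)) =
      (1 - X) * (mk altPochRatio * mk pochRatio) := by
    have h := one_add_X_mul_mk_altPochRatio
    rw [map_mul] at h
    rw [map_mul, map_mul]
    linear_combination -mk altPochRatio * one_sub_X_mul_mk_pochRatio -
      rescale (q 1) (mk pochRatio) * h
  rw [powerSeries_eq_C_of_rescale_eq (fun n hn h => ?_) hrescale]
  · simp [altPochRatio, pochRatio]
  · obtain ⟨m, rfl⟩ := Nat.exists_eq_succ_of_ne_zero hn
    exact one_sub_q_one_pow_ne_zero m (sub_eq_zero.2 h.symm)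

theorem sum_antidiagonal_altPochRatio_mul_pochRatio (L : ℕ) :
    ∑ p ∈ Finset.HasAntidiagonal.antidiagonal L, altPochRatio p.1 * pochRatio p.2 = 1 := by
  have h : mk altPochRatio * mk pochRatio = mk 1 := by
    rw [← mul_one (mk altPochRatio * mk pochRatio), ← mk_one_mul_one_sub_eq_one]
    linear_combination mk 1 * one_sub_X_mul_mk_altPochRatio_mul_mk_pochRatio
  simpa [coeff_mul] using congrArg (coeff L) h

end PowerSeries

theorem sum_altPochRatio_mul_pochRatio_succ (k L : ℕ) :
    ∑ r ∈ Finset.range (L + 1), altPochRatio r * pochRatio (L + 1 - r) *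
        q 1 ^ ((r + 1) * (k + 1)) =
      ∑ r ∈ Finset.range (L + 1), altPochRatio r * pochRatio (L - r) * q 1 ^ ((r + 1) * (k + 1)) +
      q 1 ^ (L + 2) *
        ∑ r ∈ Finset.range (L + 1), altPochRatio r * pochRatio (L + 1 - r) * q 1 ^ ((r + 1) * k) +
      q 1 ^ (L + 1) *
        ∑ r ∈ Finset.range (L + 1), altPochRatio r * pochRatio (L - r) * q 1 ^ ((r + 1) * k) := by
  rw [Finset.mul_sum, Finset.mul_sum, ← Finset.sum_add_distrib, ← Finset.sum_add_distrib]
  refine Finset.sum_congr rfl fun r hr => ?_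
  obtain ⟨N, rfl⟩ := Nat.exists_eq_add_of_le (Finset.mem_range_succ_iff.1 hr)
  rw [show r + N + 1 - r = N + 1 by omega, Nat.add_sub_cancel_left]
  linear_combination altPochRatio r * q 1 ^ ((r + 1) * k) * q 1 ^ (r + 1) * pochRatio_succ_mul N

theorem overpartitionSeries_eq_sum (k L : ℕ) :
    overpartitionSeries k L = q 1 ^ (L + 1) *
      ∑ r ∈ Finset.range (L + 1), altPochRatio r * pochRatio (L - r) * q 1 ^ ((r + 1) * k) := by
  induction k generalizing L with
  | zero =>
    have h := sum_antidiagonal_altPochRatio_mul_pochRatio L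
    rw [Finset.Nat.sum_antidiagonal_eq_sum_range_succ fun i j => altPochRatio i * pochRatio j] at h
    simp only [overpartitionSeries_zero, mul_zero, pow_zero, mul_one, h]
  | succ k ihk =>
    induction L with
    | zero =>
      rw [overpartitionSeries_zero_right]
      simp [altPochRatio, pochRatio]
      ring
    | succ L ihL =>
      rw [overpartitionSeries_succ_succ, ihL, ihk, ihk, Finset.sum_range_succ _ (L + 1),
        Finset.sum_range_succ _ (L + 1), sum_altPochRatio_mul_pochRatio_succ, Nat.sub_self]
      ring

theorem summable_of_orderGE_add {f : ℕ × ℕ → ℚ⸨X⸩} (hf : ∀ p, OrderGE (p.1 + p.2) (f p)) :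
    Summable f :=
  summable_of_abs_add_abs_le (Nat.cast_injective.prodMap Nat.cast_injective) 0 fun p => by
    simpa only [Prod.map, Nat.abs_cast, sub_zero] using hf p

/-- The series `∑ (-1; q)ᵢ / (q; q)ᵢ q ^ (i (r + 1))`. For `r = 0` it is the generating function of
overpartitions. -/
noncomputable def pochRatioSeries (r : ℕ) : ℚ⸨X⸩ := ∑' i : ℕ, pochRatio i * q 1 ^ (i * (r + 1))

theorem summable_pochRatioSeries (r : ℕ) :
    Summable fun i : ℕ => pochRatio i * q 1 ^ (i * (r + 1)) :=
  summable_nat_of_orderGE fun i =>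
    ((orderGE_pochRatio i).mul_left (orderGE_q_one_pow _)).mono
      (Nat.cast_le.2 (Nat.le_mul_of_pos_right i r.succ_pos))

theorem one_sub_mul_pochRatioSeries (r : ℕ) :
    (1 - q 1 ^ (r + 1)) * pochRatioSeries r = (1 + q 1 ^ (r + 1)) * pochRatioSeries (r + 1) := by
  have h : pochRatioSeries r - pochRatioSeries (r + 1) =
      q 1 ^ (r + 1) * (pochRatioSeries r + pochRatioSeries (r + 1)) := by
    have hr := summable_pochRatioSeries r
    have hr' := summable_pochRatioSeries (r + 1)
    simp only [pochRatioSeries]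
    rw [← hr.tsum_sub hr', (hr.sub hr').tsum_eq_zero_add, ← hr.tsum_add hr', ← tsum_mul_left]
    simp only [zero_mul, sub_self, zero_add]
    refine tsum_congr fun i => ?_
    linear_combination q 1 ^ ((i + 1) * (r + 1)) * pochRatio_succ_mul i
  linear_combination h

theorem altPochRatio_mul_pochRatioSeries (r : ℕ) :
    altPochRatio r * pochRatioSeries r = (-1) ^ r * pochRatioSeries 0 := by
  induction r with
  | zero => simp [altPochRatio]
  | succ r ih =>
    refine mul_left_cancel₀ (one_sub_q_one_pow_ne_zero r) ?_
    linear_combination pochRatioSeries (r + 1) * altPochRatio_succ_mul r +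
      altPochRatio r * one_sub_mul_pochRatioSeries r - (1 - q 1 ^ (r + 1)) * ih

/-- The factor `(1 - x) / (1 + x)`, with `x = q ^ (r + 1)`, of the generating functions of the
overpartitions of a given rank. -/
noncomputable def rankFactor (r : ℕ) : ℚ⸨X⸩ := (1 - q 1 ^ (r + 1)) / (1 + q 1 ^ (r + 1))

theorem rankFactor_mul (r : ℕ) : rankFactor r * (1 + q 1 ^ (r + 1)) = 1 - q 1 ^ (r + 1) :=
  div_mul_cancel₀ _ (one_add_q_one_pow_ne_zero _)

theorem orderGE_rankFactor (r : ℕ) : OrderGE 0 (rankFactor r) := by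
  have hone : OrderGE 0 (1 - q 1 ^ (r + 1)) :=
    OrderGE.one.sub ((orderGE_q_one_pow _).mono (Nat.cast_nonneg _))
  have h : rankFactor r =
      (1 - q 1 ^ (r + 1)) * (1 - q 1 ^ (r + 1)) * (1 - q 1 ^ (2 * r + 1 + 1))⁻¹ := by
    rw [rankFactor, ← div_eq_mul_inv, div_eq_div_iff (one_add_q_one_pow_ne_zero _)
      (one_sub_q_one_pow_ne_zero _)]
    ring
  rw [h]
  exact (hone.mul_left hone).mul_left (orderGE_inv_one_sub_q_one_pow _)

theorem altPochRatio_mul_pochRatioSeries_succ (r : ℕ) :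
    altPochRatio r * pochRatioSeries (r + 1) =
      (-1) ^ r * rankFactor r * pochRatioSeries 0 := by
  refine mul_left_cancel₀ (one_add_q_one_pow_ne_zero (r + 1)) ?_
  linear_combination (1 - q 1 ^ (r + 1)) * altPochRatio_mul_pochRatioSeries r -
    altPochRatio r * one_sub_mul_pochRatioSeries r -
    (-1) ^ r * pochRatioSeries 0 * rankFactor_mul r

/-- The double series over `p = (r, i)` obtained from the partial fraction expansion of the
generating function of the overpartitions of rank `m`. -/
noncomputable def rankDoubleTerm (m : ℕ) (p : ℕ × ℕ) : ℚ⸨X⸩ :=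
  altPochRatio p.1 * pochRatio p.2 * q 1 ^ ((p.1 + 1) ^ 2 + (p.1 + 2) * p.2 + (p.1 + 1) * m)

theorem summable_rankDoubleTerm (m : ℕ) : Summable (rankDoubleTerm m) :=
  summable_of_orderGE_add fun p =>
    (((orderGE_altPochRatio _).mul_left (orderGE_pochRatio _)).mul_left
      (orderGE_q_one_pow _)).mono (by norm_cast; nlinarith)

theorem tsum_rankDoubleTerm (m : ℕ) :
    ∑' p, rankDoubleTerm m p = pochRatioSeries 0 *
      ∑' r : ℕ, (-1) ^ r * rankFactor r * q 1 ^ ((r + 1) ^ 2 + (r + 1) * m) := by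
  rw [(summable_rankDoubleTerm m).tsum_prod, ← tsum_mul_left]
  refine tsum_congr fun r => ?_
  have h : ∑' i, rankDoubleTerm m (r, i) =
      q 1 ^ ((r + 1) ^ 2 + (r + 1) * m) * altPochRatio r * pochRatioSeries (r + 1) := by
    rw [pochRatioSeries, ← tsum_mul_left]
    refine tsum_congr fun i => ?_
    rw [rankDoubleTerm]
    ring
  rw [h]
  linear_combination q 1 ^ ((r + 1) ^ 2 + (r + 1) * m) * altPochRatio_mul_pochRatioSeries_succ r

theorem sum_antidiagonal_rankDoubleTerm (m L : ℕ) :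
    ∑ p ∈ Finset.HasAntidiagonal.antidiagonal L, rankDoubleTerm m p =
      overpartitionSeries (L + m) L := by
  rw [overpartitionSeries_eq_sum, Finset.Nat.sum_antidiagonal_eq_sum_range_succ_mk, Finset.mul_sum]
  refine Finset.sum_congr rfl fun r hr => ?_
  obtain ⟨N, rfl⟩ := Nat.exists_eq_add_of_le (Finset.mem_range_succ_iff.1 hr)
  rw [Nat.add_sub_cancel_left, rankDoubleTerm]
  ring

theorem tsum_overpartitionSeries_diag (m : ℕ) :
    ∑' L : ℕ, overpartitionSeries (L + m) L = pochRatioSeries 0 *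
      ∑' r : ℕ, (-1) ^ r * rankFactor r * q 1 ^ ((r + 1) ^ 2 + (r + 1) * m) := by
  let e := Finset.HasAntidiagonal.sigmaAntidiagonalEquivProd (A := ℕ)
  have hsum : Summable fun c => rankDoubleTerm m (e c) :=
    e.summable_iff.2 (summable_rankDoubleTerm m)
  rw [← tsum_rankDoubleTerm, ← e.tsum_eq, hsum.tsum_sigma]
  refine tsum_congr fun L => ?_
  rw [tsum_fintype, ← sum_antidiagonal_rankDoubleTerm, ← Finset.sum_coe_sort]
  rfl

/-- Half of the generating function of the overpartitions with largest part `p.1 + 1` and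
`p.2 + 1` parts, weighted by the value of `χ` at their rank. -/
noncomputable def weightedTerm (χ : ℤ → ℤ) (p : ℕ × ℕ) : ℚ⸨X⸩ :=
  χ (p.1 - p.2) * overpartitionSeries p.2 p.1

theorem summable_weightedTerm (χ : ℤ → ℤ) : Summable (weightedTerm χ) :=
  summable_of_orderGE_add fun p =>
    (OrderGE.intCast _).mul_left ((orderGE_overpartitionSeries _ _).mono (by omega))

/-- Pairs of natural numbers, parametrized by their difference and their minimum. -/
def diffMinEquiv : ℤ × ℕ ≃ ℕ × ℕ where
  toFun p := (p.2 + p.1.toNat, p.2 + (-p.1).toNat)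
  invFun p := (p.1 - p.2, min p.1 p.2)
  left_inv := fun ⟨m, i⟩ => by ext <;> dsimp only <;> omega
  right_inv := fun ⟨m, i⟩ => by ext <;> dsimp only <;> omega

theorem weightedTerm_diffMinEquiv (χ : ℤ → ℤ) (m : ℤ) (i : ℕ) :
    weightedTerm χ (diffMinEquiv (m, i)) = χ m * overpartitionSeries (i + m.natAbs) i := by
  have hm : ((i + m.toNat : ℕ) : ℤ) - (i + (-m).toNat : ℕ) = m := by omega
  simp only [weightedTerm, diffMinEquiv, Equiv.coe_fn_mk, hm]
  rcases le_total 0 m with h | h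
  · rw [show (-m).toNat = 0 by omega, show m.natAbs = m.toNat by omega, overpartitionSeries_comm,
      add_zero]
  · rw [show m.toNat = 0 by omega, show m.natAbs = (-m).toNat by omega, add_zero]

theorem summable_mul_rankFactor (χ : ℤ → ℤ) : Summable fun p : ℕ × ℤ =>
    χ p.2 * ((-1) ^ p.1 * rankFactor p.1 * q 1 ^ ((p.1 + 1) ^ 2 + (p.1 + 1) * p.2.natAbs)) := by
  refine summable_of_abs_add_abs_le (Nat.cast_injective.prodMap Function.injective_id) 0 fun p => ?_
  have hsign : OrderGE 0 ((-1) ^ p.1 : ℚ⸨X⸩) := by exact_mod_cast OrderGE.intCast ((-1) ^ p.1)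
  refine ((OrderGE.intCast _).mul_left ((hsign.mul_left (orderGE_rankFactor _)).mul_left
    (orderGE_q_one_pow _))).mono ?_
  simp only [Prod.map, id, Nat.abs_cast, Int.abs_eq_natAbs p.2, sub_zero]
  norm_cast
  nlinarith [Nat.zero_le (p.1 * p.2.natAbs)]

theorem tsum_weightedTerm (χ : ℤ → ℤ) :
    ∑' p, weightedTerm χ p = pochRatioSeries 0 * ∑' r : ℕ,
      (-1) ^ r * q 1 ^ ((r + 1) ^ 2) *
        (rankFactor r * ∑' m : ℤ, χ m * (q 1 ^ (r + 1)) ^ m.natAbs) := by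
  have hsum : Summable fun p => weightedTerm χ (diffMinEquiv p) :=
    (diffMinEquiv.summable_iff (f := weightedTerm χ)).2 (summable_weightedTerm χ)
  have hm (m : ℤ) : ∑' i, weightedTerm χ (diffMinEquiv (m, i)) =
      pochRatioSeries 0 * ∑' r : ℕ,
        χ m * ((-1) ^ r * rankFactor r * q 1 ^ ((r + 1) ^ 2 + (r + 1) * m.natAbs)) := by
    simp only [weightedTerm_diffMinEquiv]
    rw [tsum_mul_left, tsum_mul_left, tsum_overpartitionSeries_diag, mul_left_comm]
  rw [← diffMinEquiv.tsum_eq (f := weightedTerm χ), hsum.tsum_prod, tsum_congr hm, tsum_mul_left]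
  congr 1
  refine (Summable.tsum_comm (f := fun (r : ℕ) (m : ℤ) =>
    χ m * ((-1) ^ r * rankFactor r * q 1 ^ ((r + 1) ^ 2 + (r + 1) * m.natAbs)))
    (summable_mul_rankFactor χ)).trans (tsum_congr fun r => ?_)
  rw [← mul_assoc, ← tsum_mul_left]
  refine tsum_congr fun m => ?_
  ring

section LargestPart

/-- Half of the generating function of the overpartitions with largest part `L + 1`. -/
noncomputable def largestPartSeries (L : ℕ) : ℚ⸨X⸩ := ∑' k : ℕ, overpartitionSeries k L

theorem summable_largestPartSeries (L : ℕ) : Summable fun k => overpartitionSeries k L :=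
  summable_nat_of_orderGE fun k => (orderGE_overpartitionSeries k L).mono (by omega)

theorem largestPartSeries_mul_one_sub (L : ℕ) :
    largestPartSeries L * (1 - q 1 ^ (L + 1)) =
      q 1 ^ (L + 1) * (1 + 2 * ∑ i ∈ Finset.range L, largestPartSeries i) := by
  have h : largestPartSeries L = q 1 ^ (L + 1) +
      q 1 ^ (L + 1) * (largestPartSeries L + 2 * ∑ i ∈ Finset.range L, largestPartSeries i) := by
    have hs := summable_largestPartSeries
    conv_lhs => rw [largestPartSeries, (hs L).tsum_eq_zero_add]
    simp only [overpartitionSeries_zero, overpartitionSeries_succ]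
    rw [tsum_mul_left, (hs L).tsum_add ((summable_sum fun i _ => hs i).mul_left 2), tsum_mul_left,
      Summable.tsum_finsetSum fun i _ => hs i]
    rfl
  linear_combination h

theorem two_mul_one_add_sum_largestPartSeries (L : ℕ) :
    2 * (1 + 2 * ∑ i ∈ Finset.range L, largestPartSeries i) =
      pochRatio (L + 1) * (1 - q 1 ^ (L + 1)) := by
  induction L with
  | zero => rw [pochRatio_succ_mul]; norm_num [pochRatio]
  | succ L ih =>
    rw [Finset.sum_range_succ]
    refine mul_left_cancel₀ (one_sub_q_one_pow_ne_zero L) ?_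
    linear_combination (1 + q 1 ^ (L + 1)) * ih + 4 * largestPartSeries_mul_one_sub L -
      (1 - q 1 ^ (L + 1)) * pochRatio_succ_mul (L + 1)

theorem two_mul_largestPartSeries (L : ℕ) :
    2 * largestPartSeries L = pochRatio (L + 1) * q 1 ^ (L + 1) := by
  refine mul_left_cancel₀ (one_sub_q_one_pow_ne_zero L) ?_
  linear_combination 2 * largestPartSeries_mul_one_sub L +
    q 1 ^ (L + 1) * two_mul_one_add_sum_largestPartSeries L

theorem pochRatioSeries_zero : pochRatioSeries 0 = 1 + 2 * ∑' p, weightedTerm 1 p := by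
  have hlargest : ∑' p, weightedTerm 1 p = ∑' L : ℕ, largestPartSeries L := by
    rw [(summable_weightedTerm _).tsum_prod]
    exact tsum_congr fun L => tsum_congr fun k => by simp [weightedTerm]
  rw [hlargest, ← tsum_mul_left, pochRatioSeries, (summable_pochRatioSeries 0).tsum_eq_zero_add]
  refine congrArg₂ (· + ·) (by simp [pochRatio]) (tsum_congr fun L => ?_)
  rw [two_mul_largestPartSeries, zero_add, mul_one]

end LargestPart

theorem tsum_periodic_mul_pow_natAbs {x : ℚ⸨X⸩} (hx : OrderGE 1 x) {χ : ℤ → ℤ} {ℓ : ℕ}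
    (hχ : Function.Periodic χ ℓ) :
    (∑' m : ℤ, χ m * x ^ m.natAbs + χ 0) * (1 - x ^ ℓ) =
      ∑ i ∈ Finset.range ℓ, ((χ i + χ (-i) : ℤ) : ℚ⸨X⸩) * x ^ i := by
  have hs : Summable fun m : ℤ => (χ m : ℚ⸨X⸩) * x ^ m.natAbs :=
    summable_of_abs_add_abs_le (Prod.mk_left_injective (0 : ℤ)) 0 fun m =>
      ((OrderGE.intCast _).mul_left (hx.pow _)).mono (by simp)
  set g : ℕ → ℚ⸨X⸩ := fun n => ((χ n + χ (-n) : ℤ) : ℚ⸨X⸩) * x ^ n with hg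
  have hfold : HasSum g (∑' m : ℤ, χ m * x ^ m.natAbs + χ 0) := by
    have h := hs.hasSum.nat_add_neg
    simp only [Int.natAbs_neg, Int.natAbs_natCast, Int.natAbs_zero, pow_zero, mul_one,
      ← add_mul, ← Int.cast_add] at h
    exact h
  have hshift (n : ℕ) : g (n + ℓ) = x ^ ℓ * g n := by
    have hpos : χ ((n + ℓ : ℕ) : ℤ) = χ n := by rw [Nat.cast_add, hχ]
    have hneg : χ (-((n + ℓ : ℕ) : ℤ)) = χ (-n) := by
      rw [← hχ (-((n + ℓ : ℕ) : ℤ)), Nat.cast_add, neg_add, neg_add_cancel_right]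
    simp only [hg, hpos, hneg]
    ring
  have h := hfold.summable.sum_add_tsum_nat_add ℓ
  rw [tsum_congr hshift, tsum_mul_left, hfold.tsum_eq] at h
  linear_combination -h

theorem hasSum_nat_succ_add_neg {f : ℤ → ℚ⸨X⸩} {x : ℚ⸨X⸩} (hf : HasSum f x) :
    HasSum (fun n : ℕ => f (n + 1) + f (-(n + 1))) (x - f 0) := by
  have h := (hasSum_nat_add_iff' 1).2 hf.nat_add_neg
  simp only [Finset.sum_range_one, Nat.cast_zero, neg_zero, Nat.cast_add, Nat.cast_one] at h
  rwa [add_sub_add_right_eq_sub] at h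

theorem altQ_succ_sq (n : ℕ) : altQ (n + 1) ((n + 1) ^ 2) = -((-1) ^ n * q 1 ^ ((n + 1) ^ 2)) := by
  rw [altQ, q_pow, mul_one, ← Nat.cast_succ, zpow_natCast, pow_succ, Nat.cast_pow]
  ring

theorem hasSum_altSquareTheta :
    HasSum (fun n : ℕ => -2 * ((-1) ^ n * q 1 ^ ((n + 1) ^ 2))) (altSquareTheta - 1) := by
  have h := hasSum_nat_succ_add_neg summable_altSquareTheta.hasSum
  rw [altQ, zpow_zero, zero_pow two_ne_zero, q_zero, one_mul] at h
  refine h.congr_fun fun n => ?_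
  have hneg : altQ (-(n + 1)) ((-(n + 1)) ^ 2) = altQ (n + 1) ((n + 1) ^ 2) :=
    altQ_congr ⟨-(n + 1), by ring⟩ (by ring)
  rw [hneg, altQ_succ_sq]
  ring

theorem hasSum_coneSign_mul_q {n c : ℤ} (h : 0 < n * c) :
    HasSum (fun r => coneSign n r * q (c * r)) (1 - q c)⁻¹ := by
  rcases pos_and_pos_or_neg_and_neg_of_mul_pos h with ⟨hn, hc⟩ | ⟨hn, hc⟩
  · have hnat : HasSum (fun r : ℕ => coneSign n r * q (c * r)) (1 - q c)⁻¹ := by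
      rw [← tsum_q_mul hc]
      refine (summable_q_mul hc).hasSum.congr_fun fun r => ?_
      rw [coneSign_of_nonneg hn.le (Nat.cast_nonneg r), Int.cast_one, one_mul]
    have hneg : HasSum (fun r : ℕ => coneSign n (-(r + 1)) * q (c * -(r + 1))) 0 :=
      hasSum_zero.congr_fun fun r => by
        rw [coneSign_of_nonneg_of_neg hn.le (by omega), Int.cast_zero, zero_mul]
    exact add_zero (1 - q c)⁻¹ ▸ HasSum.of_nat_of_neg_add_one hnat hneg
  · have hnat : HasSum (fun r : ℕ => coneSign n r * q (c * r)) 0 :=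
      hasSum_zero.congr_fun fun r => by
        rw [coneSign_of_neg_of_nonneg hn (Nat.cast_nonneg r), Int.cast_zero, zero_mul]
    have hinv : -q (-c) * (1 - q (-c))⁻¹ = (1 - q c)⁻¹ := by
      have h₁ := one_sub_q_ne_zero hc.ne
      have h₂ := one_sub_q_ne_zero (neg_pos.2 hc).ne'
      rw [← div_eq_mul_inv, inv_eq_one_div, div_eq_div_iff h₂ h₁, mul_sub, neg_mul, neg_mul,
        ← q_add, neg_add_cancel, q_zero]
      ring
    have hneg : HasSum (fun r : ℕ => coneSign n (-(r + 1)) * q (c * -(r + 1))) (1 - q c)⁻¹ := by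
      rw [← hinv, ← tsum_q_mul (neg_pos.2 hc)]
      refine ((summable_q_mul (neg_pos.2 hc)).hasSum.mul_left _).congr_fun fun r => ?_
      rw [coneSign_of_neg hn (by omega), neg_mul, ← q_add, Int.cast_neg, Int.cast_one, neg_one_mul]
      ring_nf
    exact zero_add (1 - q c)⁻¹ ▸ HasSum.of_nat_of_neg_add_one hnat hneg

theorem hasSum_rankSeries {ℓ a : ℤ} (ha : 0 ≤ a) (haℓ : a ≤ ℓ) (hℓ : 0 < ℓ) :
    HasSum (fun n : ℤ => altQ n (n ^ 2 + a * n) * (1 - q (ℓ * n))⁻¹) (rankSeries ℓ a) := by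
  refine (summable_rankTerm ha haℓ hℓ).hasSum.prod_fiberwise fun n => ?_
  rcases eq_or_ne n 0 with rfl | hn
  · simp [rankTerm, q_zero]
  have hpos : 0 < n * (ℓ * n) := by nlinarith [mul_self_pos.2 hn]
  refine ((hasSum_coneSign_mul_q hpos).mul_left _).congr_fun fun r => ?_
  rw [rankTerm, if_neg hn, mul_left_comm, mul_comm (altQ _ _), q_mul_altQ, add_comm (_ * r)]

theorem hasSum_rankSeries_nat {ℓ a : ℕ} (haℓ : a ≤ ℓ) (hℓ : 0 < ℓ) :
    HasSum (fun r : ℕ => -((-1) ^ r * q 1 ^ ((r + 1) ^ 2) *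
      (((q 1 ^ (r + 1)) ^ a - (q 1 ^ (r + 1)) ^ (ℓ - a)) / (1 - (q 1 ^ (r + 1)) ^ ℓ))))
      (rankSeries ℓ a) := by
  have h := hasSum_nat_succ_add_neg
    (hasSum_rankSeries (Nat.cast_nonneg a) (Nat.cast_le.2 haℓ) (Nat.cast_pos.2 hℓ))
  -- The term of index `0` vanishes because `0⁻¹ = 0`.
  rw [mul_zero (ℓ : ℤ), q_zero, sub_self, inv_zero, mul_zero, sub_zero] at h
  refine h.congr_fun fun r => ?_
  have hpow (c : ℕ) : q (c * (r + 1)) = (q 1 ^ (r + 1)) ^ c := by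
    rw [← pow_mul, q_pow, mul_one, mul_comm, Nat.cast_mul, Nat.cast_succ]
  have hsq (c : ℤ) : altQ (r + 1) ((r + 1) ^ 2 + c) = -((-1) ^ r * q 1 ^ ((r + 1) ^ 2) * q c) := by
    rw [add_comm _ c, ← q_mul_altQ, altQ_succ_sq]
    ring
  have hneg : altQ (-(r + 1)) ((-(r + 1)) ^ 2 + a * -(r + 1)) =
      altQ (r + 1) ((r + 1) ^ 2 + -(a * (r + 1))) :=
    altQ_congr ⟨-(r + 1), by ring⟩ (by ring)
  have hx : q 1 ^ (r + 1) ≠ 0 := pow_ne_zero _ (q_ne_zero 1)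
  have hden : 1 - (q 1 ^ (r + 1)) ^ ℓ ≠ 0 := by
    rw [← hpow]
    exact one_sub_q_ne_zero (by positivity)
  rw [hneg, hsq, hsq, mul_neg (ℓ : ℤ), q_neg, q_neg, hpow, hpow]
  generalize q 1 ^ (r + 1) = x at *
  obtain ⟨b, rfl⟩ := Nat.exists_eq_add_of_le haℓ
  have hden' : x ^ (a + b) - 1 ≠ 0 := by rwa [← neg_ne_zero, neg_sub]
  rw [Nat.add_sub_cancel_left, pow_add]
  rw [pow_add] at hden hden'
  field_simp
  ring

theorem pochRatioSeries_zero_mul_altSquareTheta : pochRatioSeries 0 * altSquareTheta = 1 := by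
  have hterm (r : ℕ) : rankFactor r * ∑' m : ℤ, ((1 : ℤ → ℤ) m : ℚ⸨X⸩) * (q 1 ^ (r + 1)) ^ m.natAbs
      = 1 := by
    have h := tsum_periodic_mul_pow_natAbs (χ := 1) (ℓ := 1) (orderGE_q_one_pow_succ r)
      fun _ => rfl
    simp only [Finset.sum_range_one, Pi.one_apply, Int.cast_one, pow_one, pow_zero] at h ⊢
    refine mul_left_cancel₀ (one_sub_q_one_pow_ne_zero r) ?_
    push_cast at h
    linear_combination rankFactor r * h + rankFactor_mul r
  have h := pochRatioSeries_zero
  rw [tsum_weightedTerm] at h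
  simp only [hterm, mul_one] at h
  have hθ := hasSum_altSquareTheta.tsum_eq
  rw [tsum_mul_left] at hθ
  linear_combination h - pochRatioSeries 0 * hθ

/-- The difference of the indicator functions of the residue classes `0` and `1` modulo `5`. -/
def rankChar (m : ℤ) : ℤ := (if m ≡ 0 [ZMOD 5] then 1 else 0) - if m ≡ 1 [ZMOD 5] then 1 else 0

theorem rankChar_periodic : Function.Periodic rankChar (5 : ℕ) := fun m => by
  simp only [rankChar, Nat.cast_ofNat, Int.add_modulus_modEq_iff]

theorem rankFactor_mul_tsum_rankChar (r : ℕ) :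
    rankFactor r * ∑' m : ℤ, rankChar m * (q 1 ^ (r + 1)) ^ m.natAbs =
      1 - 3 * (((q 1 ^ (r + 1)) ^ 1 - (q 1 ^ (r + 1)) ^ (5 - 1)) / (1 - (q 1 ^ (r + 1)) ^ 5)) +
        4 * (((q 1 ^ (r + 1)) ^ 2 - (q 1 ^ (r + 1)) ^ (5 - 2)) / (1 - (q 1 ^ (r + 1)) ^ 5)) := by
  have h := tsum_periodic_mul_pow_natAbs (orderGE_q_one_pow_succ r) rankChar_periodic
  have hden : 1 - (q 1 ^ (r + 1)) ^ 5 ≠ 0 := by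
    rw [← pow_mul]
    exact one_sub_q_one_pow_ne_zero _
  have hadd := one_add_q_one_pow_ne_zero (r + 1)
  simp only [Finset.sum_range_succ, Finset.sum_range_zero,
    show rankChar (0 : ℕ) + rankChar (-(0 : ℕ)) = 2 by decide,
    show rankChar (1 : ℕ) + rankChar (-(1 : ℕ)) = -1 by decide,
    show rankChar (2 : ℕ) + rankChar (-(2 : ℕ)) = 0 by decide,
    show rankChar (3 : ℕ) + rankChar (-(3 : ℕ)) = 0 by decide,
    show rankChar (4 : ℕ) + rankChar (-(4 : ℕ)) = -1 by decide,
    show rankChar 0 = 1 by decide] at h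
  rw [rankFactor]
  generalize q 1 ^ (r + 1) = x at *
  rw [eq_sub_of_add_eq ((eq_div_iff hden).2 h)]
  push_cast
  field_simp
  ring

theorem rankDiff_eq : rankDiff = 1 + 2 * ∑' p, weightedTerm rankChar p := by
  have hθ := pochRatioSeries_zero_mul_altSquareTheta
  have h₁ := hasSum_rankSeries_nat (ℓ := 5) (a := 1) (by norm_num) (by norm_num)
  have h₂ := hasSum_rankSeries_nat (ℓ := 5) (a := 2) (by norm_num) (by norm_num)
  have hsum := (((hasSum_altSquareTheta.mul_left (-2⁻¹)).add (h₁.mul_left 3)).sub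
    (h₂.mul_left 4)).congr_fun (g := fun r : ℕ => (-1) ^ r * q 1 ^ ((r + 1) ^ 2) *
      (rankFactor r * ∑' m : ℤ, rankChar m * (q 1 ^ (r + 1)) ^ m.natAbs)) fun r => by
        rw [rankFactor_mul_tsum_rankChar]
        ring
  refine mul_left_cancel₀ (right_ne_zero_of_mul_eq_one hθ) ?_
  rw [altSquareTheta_mul_rankDiff, tsum_weightedTerm, hsum.tsum_eq]
  push_cast
  linear_combination (altSquareTheta - 1 - 6 * rankSeries 5 1 + 8 * rankSeries 5 2) * hθ

/-! ### Counting overpartitions -/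

theorem mem_of_sup_eq {s : Multiset ℕ} {L : ℕ} (hL : L ≠ 0) (h : s.sup = L) : L ∈ s := by
  induction s using Multiset.induction_on with
  | empty => exact absurd h.symm hL
  | cons a s ih =>
    rw [Multiset.sup_cons] at h
    rcases max_choice a s.sup with ha | hs
    · exact Multiset.mem_cons.2 (.inl (h.symm.trans ha))
    · exact Multiset.mem_cons_of_mem (ih (hs.symm.trans h))

theorem sum_partition_eq_sum_cons {M : Type*} [AddCommMonoid M] {n a : ℕ} (ha : 0 < a)
    (han : a ≤ n) {f : Multiset ℕ → M} (hf : ∀ s, a ∉ s → f s = 0) :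
    ∑ p : n.Partition, f p.parts = ∑ p : (n - a).Partition, f (a ::ₘ p.parts) := by
  rw [← Finset.sum_filter_of_ne (p := fun p : n.Partition => a ∈ p.parts)
      fun p _ hp => not_not.1 fun h => hp (hf _ h),
    Finset.sum_subtype (p := fun p : n.Partition => a ∈ p.parts) _ (by simp)]
  exact (Fintype.sum_equiv (Nat.Partition.partitionWithPartEquiv ha han).symm _ _
    fun p => by simp).symm

/-- The number of overpartitions with largest part `L` and `k` parts whose underlying multiset of
parts is `s`. -/
def overpartitionWeight (L k : ℕ) (s : Multiset ℕ) : ℕ :=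
  if s.sup = L ∧ s.card = k then 2 ^ s.toFinset.card else 0

theorem overpartitionWeight_eq_zero_of_notMem {L : ℕ} (hL : L ≠ 0) (k : ℕ) {s : Multiset ℕ}
    (h : L ∉ s) : overpartitionWeight L k s = 0 :=
  if_neg fun hs => h (mem_of_sup_eq hL hs.1)

theorem card_toFinset_cons_sup (s : Multiset ℕ) (hs : s.sup ≠ 0) :
    (s.sup ::ₘ s).toFinset.card = s.toFinset.card := by
  rw [Multiset.toFinset_cons,
    Finset.insert_eq_of_mem (Multiset.mem_toFinset.2 (mem_of_sup_eq hs rfl))]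

theorem card_toFinset_cons_of_sup_lt {s : Multiset ℕ} {a : ℕ} (h : s.sup < a) :
    (a ::ₘ s).toFinset.card = s.toFinset.card + 1 := by
  rw [Multiset.toFinset_cons, Finset.card_insert_of_notMem]
  exact fun hm => h.not_ge (Multiset.le_sup (Multiset.mem_toFinset.1 hm))

theorem overpartitionWeight_cons {L : ℕ} (hL : L ≠ 0) (k : ℕ) (s : Multiset ℕ) :
    overpartitionWeight L (k + 1) (L ::ₘ s) =
      overpartitionWeight L k s + 2 * ∑ i ∈ Finset.range L, overpartitionWeight i k s := by
  by_cases hk : s.card = k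
  · simp only [overpartitionWeight, Multiset.sup_cons, Multiset.card_cons, hk, and_true,
      sup_eq_left, Finset.sum_ite_eq, Finset.mem_range]
    rcases lt_trichotomy s.sup L with h | rfl | h
    · rw [if_pos h.le, if_neg h.ne, if_pos h, card_toFinset_cons_of_sup_lt h, pow_succ]
      ring
    · rw [if_pos le_rfl, if_pos rfl, if_neg (lt_irrefl _), card_toFinset_cons_sup s hL, mul_zero,
        add_zero]
    · rw [if_neg h.not_ge, if_neg h.ne', if_neg h.le.not_gt, mul_zero, add_zero]
  · simp [overpartitionWeight, hk]

/-- The number of overpartitions of `n` with largest part `L` and `k` parts. -/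
def overpartitionCount (L k n : ℕ) : ℕ := ∑ p : n.Partition, overpartitionWeight L k p.parts

theorem overpartitionCount_succ_right {L n : ℕ} (hL : 0 < L) (hn : L ≤ n) (k : ℕ) :
    overpartitionCount L (k + 1) n = overpartitionCount L k (n - L) +
      2 * ∑ i ∈ Finset.range L, overpartitionCount i k (n - L) := by
  simp only [overpartitionCount]
  rw [sum_partition_eq_sum_cons hL hn
    fun s => overpartitionWeight_eq_zero_of_notMem hL.ne' (k + 1), Finset.sum_comm,
    Finset.mul_sum, ← Finset.sum_add_distrib]
  exact Finset.sum_congr rfl fun p _ => overpartitionWeight_cons hL.ne' k p.parts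

theorem overpartitionCount_eq_zero_of_lt {L n : ℕ} (h : n < L) (k : ℕ) :
    overpartitionCount L k n = 0 :=
  Finset.sum_eq_zero fun _ _ => overpartitionWeight_eq_zero_of_notMem (Nat.ne_zero_of_lt h) k
    fun hL => h.not_ge (Nat.Partition.le_of_mem_parts hL)

theorem overpartitionCount_succ_zero (L n : ℕ) : overpartitionCount (L + 1) 0 n = 0 :=
  Finset.sum_eq_zero fun p _ => if_neg fun ⟨hsup, hcard⟩ => by
    rw [Multiset.card_eq_zero.1 hcard] at hsup
    exact L.succ_ne_zero hsup.symm

theorem sup_parts_eq_zero {n : ℕ} {p : n.Partition} : p.parts.sup = 0 ↔ n = 0 := by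
  refine ⟨fun h => ?_, by rintro rfl; simp⟩
  rw [← p.parts_sum]
  exact Multiset.sum_eq_zero fun a ha => Nat.le_zero.1 (h ▸ Multiset.le_sup ha)

theorem card_parts_eq_zero {n : ℕ} {p : n.Partition} : p.parts.card = 0 ↔ n = 0 := by
  refine ⟨fun h => ?_, by rintro rfl; simp⟩
  rw [← p.parts_sum, Multiset.card_eq_zero.1 h, Multiset.sum_zero]

theorem overpartitionCount_zero_succ (k n : ℕ) : overpartitionCount 0 (k + 1) n = 0 :=
  Finset.sum_eq_zero fun _ _ => if_neg fun ⟨hsup, hcard⟩ => k.succ_ne_zero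
    (hcard.symm.trans (card_parts_eq_zero.2 (sup_parts_eq_zero.1 hsup)))

theorem overpartitionCount_zero_zero (n : ℕ) :
    overpartitionCount 0 0 n = if n = 0 then 1 else 0 := by
  split_ifs with h
  · subst h
    simp [overpartitionCount, overpartitionWeight]
  · exact Finset.sum_eq_zero fun _ _ => if_neg fun hs => h (sup_parts_eq_zero.1 hs.1)

theorem two_mul_coeff_overpartitionSeries (k L n : ℕ) :
    2 * (overpartitionSeries k L).coeff n = overpartitionCount (L + 1) (k + 1) n := by
  have hlt {k L n : ℕ} (h : n < L + 1) :
      2 * (overpartitionSeries k L).coeff n = overpartitionCount (L + 1) (k + 1) n := by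
    rw [orderGE_overpartitionSeries k L n (by omega), overpartitionCount_eq_zero_of_lt h, mul_zero,
      Nat.cast_zero]
  induction k generalizing L n with
  | zero =>
    refine (lt_or_ge n (L + 1)).elim hlt fun h => ?_
    obtain ⟨m, rfl⟩ := Nat.exists_eq_add_of_le' h
    rw [overpartitionCount_succ_right L.succ_pos h, Finset.sum_range_succ',
      overpartitionCount_succ_zero, overpartitionCount_zero_zero, Nat.add_sub_cancel,
      Finset.sum_eq_zero fun i _ => overpartitionCount_succ_zero i _, overpartitionSeries_zero,
      q_pow, mul_one, coeff_q]
    simp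
  | succ k ih =>
    refine (lt_or_ge n (L + 1)).elim hlt fun h => ?_
    obtain ⟨m, rfl⟩ := Nat.exists_eq_add_of_le' h
    rw [overpartitionCount_succ_right L.succ_pos h, Finset.sum_range_succ',
      overpartitionCount_zero_succ, Nat.add_sub_cancel, overpartitionSeries_succ, q_pow, mul_one,
      coeff_q_mul, Nat.cast_add, add_sub_cancel_right, HahnSeries.coeff_add, coeff_ofNat_mul,
      HahnSeries.coeff_sum]
    push_cast
    simp only [← ih, ← Finset.mul_sum]
    ring

theorem two_mul_coeff_weightedTerm (χ : ℤ → ℤ) (p : ℕ × ℕ) (n : ℕ) :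
    2 * (weightedTerm χ p).coeff n =
      χ (p.1 - p.2) * overpartitionCount (p.1 + 1) (p.2 + 1) n := by
  rw [weightedTerm, coeff_intCast_mul, mul_left_comm, two_mul_coeff_overpartitionSeries]

/-- The Dyson rank of a partition: largest part minus number of parts. -/
def dysonRank {n : ℕ} (p : n.Partition) : ℤ := p.parts.sup - p.parts.card

theorem sup_parts_le {n : ℕ} (p : n.Partition) : p.parts.sup ≤ n :=
  Multiset.sup_le.2 fun _ => Nat.Partition.le_of_mem_parts

theorem card_parts_le {n : ℕ} (p : n.Partition) : p.parts.card ≤ n := by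
  simpa only [p.parts_sum, nsmul_one, Nat.cast_id] using
    Multiset.card_nsmul_le_sum (a := 1) fun _ => p.parts_pos

theorem sum_mul_overpartitionWeight {n : ℕ} (hn : n ≠ 0) (χ : ℤ → ℤ) {t : Finset (ℕ × ℕ)}
    (ht : Finset.range n ×ˢ Finset.range n ⊆ t) (p : n.Partition) :
    ∑ a ∈ t, (χ (a.1 - a.2) * overpartitionWeight (a.1 + 1) (a.2 + 1) p.parts : ℤ) =
      χ (dysonRank p) * 2 ^ p.parts.toFinset.card := by
  obtain ⟨L, hL⟩ := Nat.exists_eq_succ_of_ne_zero (sup_parts_eq_zero.not.2 hn : p.parts.sup ≠ 0)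
  obtain ⟨k, hk⟩ := Nat.exists_eq_succ_of_ne_zero (card_parts_eq_zero.not.2 hn : p.parts.card ≠ 0)
  have hLn := sup_parts_le p
  have hkn := card_parts_le p
  rw [Finset.sum_eq_single (L, k)]
  · simp [overpartitionWeight, dysonRank, hL, hk]
  · rintro ⟨i, j⟩ - hne
    rw [overpartitionWeight, if_neg, Nat.cast_zero, mul_zero]
    rintro ⟨hi, hj⟩
    exact hne (Prod.ext (by simp only; omega) (by simp only; omega))
  · exact fun h => absurd (ht (by simp; omega)) h

theorem two_mul_coeff_tsum_weightedTerm (χ : ℤ → ℤ) {n : ℕ} (hn : n ≠ 0) :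
    2 * (∑' p, weightedTerm χ p).coeff n =
      ∑ p : n.Partition, (χ (dysonRank p) * 2 ^ p.parts.toFinset.card : ℤ) := by
  obtain ⟨t, ht⟩ := exists_coeff_eq_sum_of_hasSum (summable_weightedTerm χ).hasSum n
  rw [ht _ (Finset.subset_union_left (s₂ := Finset.range n ×ˢ Finset.range n)), Finset.mul_sum,
    ← Finset.sum_congr rfl fun p _ =>
      sum_mul_overpartitionWeight hn χ (Finset.subset_union_right (s₁ := t)) p, Finset.sum_comm]
  push_cast
  refine Finset.sum_congr rfl fun a _ => ?_
  rw [two_mul_coeff_weightedTerm, overpartitionCount, ← Finset.mul_sum]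
  push_cast
  rfl

/-- Grouping the overpartitions of `n` with rank congruent to `a` modulo `c` by the underlying
partition. -/
def overpartitionEquivSigma (a : ℤ) (c n : ℕ) :
    {P : Overpartition n // P.rank ≡ a [ZMOD c]} ≃
      Σ p : {p : n.Partition // dysonRank p ≡ a [ZMOD c]}, p.1.parts.toFinset.powerset where
  toFun P := ⟨⟨P.1.1.1, P.2⟩, ⟨P.1.1.2, Finset.mem_powerset.2 P.1.2⟩⟩
  invFun x := ⟨⟨(x.1.1, x.2.1), Finset.mem_powerset.1 x.2.2⟩, x.1.2⟩
  left_inv _ := rfl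
  right_inv _ := rfl

theorem nbar_eq_sum (a : ℤ) (c n : ℕ) :
    nbar a c n = ∑ p : n.Partition,
      if dysonRank p ≡ a [ZMOD c] then 2 ^ p.parts.toFinset.card else 0 := by
  have hcard (p : {p : n.Partition // dysonRank p ≡ a [ZMOD c]}) :
      Nat.card p.1.parts.toFinset.powerset = 2 ^ p.1.parts.toFinset.card := by
    rw [Nat.card_eq_fintype_card, Fintype.card_coe, Finset.card_powerset]
  rw [nbar, Nat.card_congr (overpartitionEquivSigma a c n), Nat.card_sigma, ← Finset.sum_filter]
  simp only [hcard]
  exact (Finset.sum_subtype (p := fun p : n.Partition => dysonRank p ≡ a [ZMOD c]) _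
    Finset.mem_filter_univ fun p => 2 ^ p.parts.toFinset.card).symm

theorem sum_rankChar_dysonRank (n : ℕ) :
    ∑ p : n.Partition, rankChar (dysonRank p) * 2 ^ p.parts.toFinset.card =
      (nbar 0 5 n - nbar 1 5 n : ℤ) := by
  rw [nbar_eq_sum, nbar_eq_sum]
  push_cast
  rw [← Finset.sum_sub_distrib]
  refine Finset.sum_congr rfl fun p _ => ?_
  simp only [rankChar, sub_mul, ite_mul, one_mul, zero_mul]

theorem coeff_rankDiff {n : ℕ} (hn : n ≠ 0) :
    rankDiff.coeff n = (nbar 0 5 n - nbar 1 5 n : ℤ) := by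
  rw [rankDiff_eq, HahnSeries.coeff_add, coeff_one_of_ne_zero (Nat.cast_ne_zero.2 hn),
    coeff_ofNat_mul, zero_add, two_mul_coeff_tsum_weightedTerm _ hn, sum_rankChar_dysonRank]

end QSeries

theorem stmt2 (n : ℕ) (hn : 0 < n) (h5 : n % 5 = 2 ∨ n % 5 = 4) :
    nbar 0 5 n < nbar 1 5 n := by
  have h := QSeries.coeff_rankDiff_neg h5
  rw [QSeries.coeff_rankDiff hn.ne', Int.cast_lt_zero, sub_neg] at h
  exact_mod_cast h
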